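/- arXiv:1412.4284 — 4 statements merged into one kernel-verified Lean document; each statement's English description precedes it below -/
import Mathlib

section
/- Let G = (ℤ/2ℤ) * (ℤ/3ℤ) with a, b the canonical generators of orders 2 and 3 respectively, and let d be the word metric on G with respect to {a, b} (with inverses allowed); write B_R(e) for the ball of radius R around the identity. Let R ≥ 2 be real and let S ⊆ B_{2R}(e) be a finite set with |S| ≥ R⁶. Then the set of commutators [S,S] = {g₁g₂g₁⁻¹g₂⁻¹ : g₁, g₂ ∈ S} satisfies |[S,S]| ≥ R³. -/
/-- The free product `G = (ℤ/2ℤ) ∗ (ℤ/3ℤ)` (isomorphic to `PSL₂(ℤ)`). -/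
abbrev Gfp := Monoid.Coprod (Multiplicative (ZMod 2)) (Multiplicative (ZMod 3))

/-- The canonical generator `a` of order 2 (the image of `1 ∈ ℤ/2ℤ`). -/
def genA : Gfp := Monoid.Coprod.inl (Multiplicative.ofAdd (1 : ZMod 2))

/-- The canonical generator `b` of order 3 (the image of `1 ∈ ℤ/3ℤ`). -/
def genB : Gfp := Monoid.Coprod.inr (Multiplicative.ofAdd (1 : ZMod 3))

/-- The first free factor, the canonical embedded copy of `ℤ/2ℤ`. -/
def factorL : Subgroup Gfp :=
  (Monoid.Coprod.inl : Multiplicative (ZMod 2) →* Gfp).range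

/-- The second free factor, the canonical embedded copy of `ℤ/3ℤ`. -/
def factorR : Subgroup Gfp :=
  (Monoid.Coprod.inr : Multiplicative (ZMod 3) →* Gfp).range

/-- The symmetrized generating set `{a, a⁻¹, b, b⁻¹}` of `G = (ℤ/2ℤ) ∗ (ℤ/3ℤ)`. -/
def genSet : Set Gfp := {genA, genA⁻¹, genB, genB⁻¹}

/-- The ball `B_R(e)` of radius `R` about the identity in the word metric on `G` with
respect to `{a, b}`: elements expressible as a word of length `≤ R` in `a^{±1}, b^{±1}`. -/
def ballW (R : ℝ) : Set Gfp :=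
  {g | ∃ l : List Gfp, (l.length : ℝ) ≤ R ∧ (∀ x ∈ l, x ∈ genSet) ∧ l.prod = g}

/-- The commutator set `[S,T] = {g t g⁻¹ t⁻¹ : g ∈ S, t ∈ T}`. -/
def commSet (S T : Set Gfp) : Set Gfp :=
  {z | ∃ g ∈ S, ∃ t ∈ T, z = g * t * g⁻¹ * t⁻¹}


/-!
Fix `g ≠ 1` in `S`. Two elements `h`, `k` of `S` give the same commutator `⁅g, h⁆ = ⁅g, k⁆` exactly
when `k⁻¹ * h` centralizes `g`, so it is enough that the centralizer of `g` has only `O(R)` elements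
of length `O(R)`. After a conjugation, `g` is either a letter, whose centralizer is contained in its
factor, or cyclically reduced. In the second case an element `k` commuting with `g` does not cancel
against both `g` and `g⁻¹`; if, say, `k * g` is reduced, then the reduced words `u` of `k` and `w`
of `g` satisfy `u w = w u`, and `u` is determined by its length, being a prefix of a power of `w`.
This gives `|S| ≤ (16 R + 2) |[S, S]|`, and `16 R + 2 ≤ R ^ 3` when `5 ≤ R`. When `R < 5`, the ball
of radius `2 R` has fewer than `R ^ 6` elements.
-/

namespace FreeProduct

open scoped commutatorElement

theorem commutatorElement_eq_commutatorElement_iff {H : Type*} [Group H] {g h k : H} :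
    ⁅g, h⁆ = ⁅g, k⁆ ↔ Commute (k⁻¹ * h) g := by
  rw [← Commute.inv_right_iff, commute_iff_eq, mul_assoc, inv_mul_eq_iff_eq_mul]
  simp only [commutatorElement_def, mul_assoc, mul_right_inj]
  rw [← mul_assoc, mul_inv_eq_iff_eq_mul]
  simp only [mul_assoc]

section Lists

variable {α : Type*}

theorem eq_of_append_comm {u v w : List α} (hw : w ≠ []) (hu : u ++ w = w ++ u)
    (hv : v ++ w = w ++ v) (huv : u.length = v.length) : u = v := by
  have take_eq {t : List α} (ht : t ++ w = w ++ t) {n : ℕ} (hn : n ≤ t.length) :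
      t.take n = w.take n ++ t.take (n - w.length) := by
    rw [← List.take_append, ← ht, List.take_append_of_le_length hn]
  have key (n : ℕ) (hn : n ≤ u.length) : u.take n = v.take n := by
    induction n using Nat.strong_induction_on with
    | _ n ih =>
      rcases n.eq_zero_or_pos with rfl | hpos
      · simp
      have hlt : n - w.length < n := Nat.sub_lt hpos (List.length_pos_of_ne_nil hw)
      rw [take_eq hu hn, take_eq hv (huv ▸ hn), ih _ hlt (hlt.le.trans hn)]
  rw [← u.take_length, key _ le_rfl, huv, v.take_length]

theorem card_isChain_le {r : α → α → Prop} [DecidableRel r] {A : Finset α} {d : ℕ}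
    (hd : ∀ y ∈ A, (A.filter (r · y)).card ≤ d) {n : ℕ} {L : Finset (List α)}
    (hL : ∀ l ∈ L, l.length = n + 1 ∧ (∀ x ∈ l, x ∈ A) ∧ l.IsChain r) :
    L.card ≤ A.card * d ^ n := by
  classical
  induction n generalizing L with
  | zero =>
    have hsub : L ⊆ A.image fun x => [x] := by
      intro l hl
      obtain ⟨hlen, hmem, -⟩ := hL l hl
      obtain ⟨x, rfl⟩ := List.length_eq_one_iff.mp hlen
      simpa using hmem
    simpa using (Finset.card_le_card hsub).trans Finset.card_image_le
  | succ n ih =>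
    have fiber_le : ∀ t ∈ L.image List.tail, (L.filter fun l => l.tail = t).card ≤ d := by
      intro t ht
      obtain ⟨l, hl, rfl⟩ := Finset.mem_image.mp ht
      obtain ⟨hlen, hmem, -⟩ := hL l hl
      obtain ⟨x, y, t, rfl⟩ : ∃ x y t, l = x :: y :: t := by
        match l, hlen with
        | x :: y :: t, _ => exact ⟨x, y, t, rfl⟩
      have hsub : (L.filter fun l => l.tail = y :: t) ⊆
          (A.filter (r · y)).image fun x => x :: y :: t := by
        intro l' hl'
        obtain ⟨hl', htail⟩ := Finset.mem_filter.mp hl'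
        obtain ⟨hlen', hmem', hchain'⟩ := hL l' hl'
        obtain ⟨z, s, rfl⟩ := List.exists_cons_of_length_eq_add_one hlen'
        obtain rfl : s = y :: t := htail
        exact Finset.mem_image_of_mem _ <|
          Finset.mem_filter.mpr ⟨hmem' z (by simp), hchain'.rel⟩
      exact (Finset.card_le_card hsub).trans <| Finset.card_image_le.trans <| hd y <|
        hmem y (by simp)
    have tails_le : (L.image List.tail).card ≤ A.card * d ^ n := by
      refine ih fun t ht => ?_
      obtain ⟨l, hl, rfl⟩ := Finset.mem_image.mp ht
      obtain ⟨hlen, hmem, hchain⟩ := hL l hl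
      exact ⟨by simp [hlen], fun x hx => hmem x (List.mem_of_mem_tail hx), hchain.tail⟩
    calc L.card ≤ d * (L.image List.tail).card := Finset.card_le_mul_card_image L d fiber_le
      _ ≤ d * (A.card * d ^ n) := Nat.mul_le_mul_left d tails_le
      _ = A.card * d ^ (n + 1) := by ring

end Lists

section Words

open Monoid Monoid.CoprodI

variable {ι : Type*} {G : ι → Type*} [∀ i, Group (G i)]

/-- The element of the free product spelled by a list of letters, reduced or not. -/
def wordProd (l : List (Σ i, G i)) : CoprodI G :=
  (l.map fun x => of x.2).prod

/-- A list of letters is reduced if its letters are nontrivial and consecutive letters lie in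
different factors; these are the lists underlying `Monoid.CoprodI.Word`. -/
structure IsReduced (l : List (Σ i, G i)) : Prop where
  ne_one : ∀ x ∈ l, x.2 ≠ 1
  isChain : l.IsChain fun x y => x.1 ≠ y.1

open Classical in
/-- The list of letters of the reduced word that represents `g`. -/
noncomputable def normalForm (g : CoprodI G) : List (Σ i, G i) :=
  (Word.equiv g).toList

/-- The syllable length of `g`, which is the word length with respect to all the elements of the
factors. -/
noncomputable def syllableLength (g : CoprodI G) : ℕ :=
  (normalForm g).length

@[simp]
theorem wordProd_nil : wordProd ([] : List (Σ i, G i)) = 1 := rfl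

@[simp]
theorem wordProd_cons (x : Σ i, G i) (l : List (Σ i, G i)) :
    wordProd (x :: l) = of x.2 * wordProd l := by
  simp [wordProd]

@[simp]
theorem wordProd_append (l m : List (Σ i, G i)) :
    wordProd (l ++ m) = wordProd l * wordProd m := by
  simp [wordProd]

theorem isReduced_append {l m : List (Σ i, G i)} :
    IsReduced (l ++ m) ↔
      IsReduced l ∧ IsReduced m ∧ ∀ x ∈ l.getLast?, ∀ y ∈ m.head?, x.1 ≠ y.1 := by
  constructor
  · rintro ⟨hne, hchain⟩
    obtain ⟨hl, hm, hlm⟩ := List.isChain_append.mp hchain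
    exact ⟨⟨fun x hx => hne x (List.mem_append_left m hx), hl⟩,
      ⟨fun x hx => hne x (List.mem_append_right l hx), hm⟩, hlm⟩
  · rintro ⟨hl, hm, hlm⟩
    exact ⟨fun x hx => (List.mem_append.mp hx).elim (hl.ne_one x) (hm.ne_one x),
      List.isChain_append.mpr ⟨hl.isChain, hm.isChain, hlm⟩⟩

theorem IsReduced.append_overlap {l m n : List (Σ i, G i)} (hlm : IsReduced (l ++ m))
    (hmn : IsReduced (m ++ n)) (hm : m ≠ []) : IsReduced (l ++ m ++ n) where
  ne_one x hx := (List.mem_append.mp hx).elim (hlm.ne_one x)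
    fun hx => hmn.ne_one x (List.mem_append_right m hx)
  isChain := hlm.isChain.append_overlap hmn.isChain hm

theorem isReduced_normalForm (g : CoprodI G) : IsReduced (normalForm g) := by
  classical exact ⟨(Word.equiv g).ne_one, (Word.equiv g).chain_ne⟩

@[simp]
theorem wordProd_normalForm (g : CoprodI G) : wordProd (normalForm g) = g := by
  classical exact Word.equiv.symm_apply_apply g

theorem IsReduced.normalForm_wordProd {l : List (Σ i, G i)} (hl : IsReduced l) :
    normalForm (wordProd l) = l := by
  classical exact congrArg Word.toList (Word.equiv.apply_symm_apply ⟨l, hl.ne_one, hl.isChain⟩)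

theorem normalForm_injective : Function.Injective (normalForm : CoprodI G → _) :=
  Function.LeftInverse.injective wordProd_normalForm

@[simp]
theorem normalForm_one : normalForm (1 : CoprodI G) = [] :=
  IsReduced.normalForm_wordProd (l := []) ⟨by simp, .nil⟩

theorem normalForm_eq_nil_iff {g : CoprodI G} : normalForm g = [] ↔ g = 1 := by
  rw [← normalForm_one, normalForm_injective.eq_iff]

theorem exists_wordProd_eq_length_lt_of_not_isReduced {l : List (Σ i, G i)}
    (hl : ¬IsReduced l) : ∃ m, wordProd m = wordProd l ∧ m.length < l.length := by
  induction l with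
  | nil => exact absurd ⟨by simp, .nil⟩ hl
  | cons x l ih =>
    by_cases hred : IsReduced l
    · by_cases hx : x.2 = 1
      · exact ⟨l, by simp [hx], by simp⟩
      obtain ⟨y, hy, hxy⟩ : ∃ y ∈ l.head?, x.1 = y.1 := by
        by_contra! hhead
        exact hl ⟨List.forall_mem_cons.mpr ⟨hx, hred.ne_one⟩, hred.isChain.cons hhead⟩
      obtain ⟨l, rfl⟩ : ∃ t, l = y :: t := ⟨l.tail, List.eq_cons_of_mem_head? hy⟩
      obtain ⟨i, x⟩ := x
      obtain ⟨j, y⟩ := y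
      obtain rfl : i = j := hxy
      exact ⟨⟨i, x * y⟩ :: l, by simp [mul_assoc], by simp⟩
    · obtain ⟨m, hprod, hlen⟩ := ih hred
      exact ⟨x :: m, by simp [hprod], by simpa using hlen⟩

theorem syllableLength_wordProd_le (l : List (Σ i, G i)) :
    syllableLength (wordProd l) ≤ l.length := by
  induction hn : l.length using Nat.strong_induction_on generalizing l with
  | _ n ih =>
    by_cases hl : IsReduced l
    · rw [syllableLength, hl.normalForm_wordProd, hn]
    · obtain ⟨m, hprod, hlen⟩ := exists_wordProd_eq_length_lt_of_not_isReduced hl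
      rw [← hprod]
      exact (ih _ (hn ▸ hlen) m rfl).trans (hn ▸ hlen.le)

theorem syllableLength_wordProd_lt {l : List (Σ i, G i)} (hl : ¬IsReduced l) :
    syllableLength (wordProd l) < l.length := by
  obtain ⟨m, hprod, hlen⟩ := exists_wordProd_eq_length_lt_of_not_isReduced hl
  exact hprod ▸ (syllableLength_wordProd_le m).trans_lt hlen

theorem IsReduced.eq_of_wordProd_eq {l m : List (Σ i, G i)} (hl : IsReduced l)
    (h : wordProd l = wordProd m) (hlen : m.length ≤ l.length) : l = m := by
  have hm : IsReduced m := by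
    by_contra hm
    have := syllableLength_wordProd_lt hm
    rw [← h, syllableLength, hl.normalForm_wordProd] at this
    exact this.not_ge hlen
  rw [← hl.normalForm_wordProd, h, hm.normalForm_wordProd]

@[simp]
theorem syllableLength_one : syllableLength (1 : CoprodI G) = 0 := by
  simp [syllableLength]

theorem syllableLength_of_le {i : ι} (x : G i) : syllableLength (of x) ≤ 1 := by
  simpa using syllableLength_wordProd_le [⟨i, x⟩]

theorem syllableLength_mul_le (g h : CoprodI G) :
    syllableLength (g * h) ≤ syllableLength g + syllableLength h := by
  simpa [syllableLength] using syllableLength_wordProd_le (normalForm g ++ normalForm h)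

theorem normalForm_inv (g : CoprodI G) :
    normalForm g⁻¹ = ((normalForm g).map fun x => ⟨x.1, x.2⁻¹⟩).reverse := by
  have wordProd_inv (l : List (Σ i, G i)) :
      wordProd (l.map fun x => ⟨x.1, x.2⁻¹⟩).reverse = (wordProd l)⁻¹ := by
    induction l with
    | nil => simp
    | cons x l ih => simp [ih]
  obtain ⟨hne, hchain⟩ := isReduced_normalForm g
  have hred : IsReduced ((normalForm g).map fun x => (⟨x.1, x.2⁻¹⟩ : Σ i, G i)).reverse := by
    refine ⟨by simpa only [List.mem_reverse, List.forall_mem_map, ne_eq, inv_eq_one] using hne, ?_⟩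
    simpa only [List.isChain_reverse, List.isChain_map] using hchain.imp fun _ _ => Ne.symm
  simpa [wordProd_inv] using hred.normalForm_wordProd

@[simp]
theorem syllableLength_inv (g : CoprodI G) : syllableLength g⁻¹ = syllableLength g := by
  simp [syllableLength, normalForm_inv]

theorem exists_of_mul_eq (i : ι) (k : CoprodI G) :
    ∃ (y : G i) (k' : CoprodI G), of y * k' = k ∧ ∀ z ∈ (normalForm k').head?, i ≠ z.1 := by
  classical
  let p := Word.equivPair i (Word.equiv k)
  refine ⟨p.head, p.tail.prod, ?_, ?_⟩
  · rw [← Word.prod_rcons, ← Word.equivPair_symm, Equiv.symm_apply_apply]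
    exact Word.equiv.symm_apply_apply k
  · have hp : normalForm p.tail.prod = p.tail.toList :=
      congrArg Word.toList (Word.equiv.apply_symm_apply p.tail)
    exact hp ▸ Word.fstIdx_ne_iff.mp p.fstIdx_ne

theorem exists_conj_eq_of_or_isReduced_append_self (g : CoprodI G) :
    ∃ p : CoprodI G, syllableLength p ≤ syllableLength g ∧
      ((∃ (i : ι) (x : G i), p * g * p⁻¹ = of x) ∨
        IsReduced (normalForm (p * g * p⁻¹) ++ normalForm (p * g * p⁻¹))) := by
  induction hn : syllableLength g using Nat.strong_induction_on generalizing g with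
  | _ n ih =>
    rcases (normalForm g).eq_nil_or_concat' with hg | ⟨l, y, hg⟩
    · refine ⟨1, by simp, Or.inr ?_⟩
      simpa [hg] using isReduced_normalForm g
    have hred : IsReduced (l ++ [y]) := hg ▸ isReduced_normalForm g
    have hgl : g = wordProd l * of y.2 := by simpa [hg] using (wordProd_normalForm g).symm
    rcases eq_or_ne l [] with rfl | hl
    · exact ⟨1, by simp, Or.inl ⟨y.1, y.2, by simp [hgl]⟩⟩
    by_cases hyl : IsReduced (y :: l)
    · refine ⟨1, by simp, Or.inr ?_⟩
      have hlyl : IsReduced (l ++ [y] ++ l) := hred.append_overlap hyl (by simp)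
      simpa [hg] using hlyl.append_overlap hred hl
    · -- Rotating the last letter of `g` to the front gives a word that is not reduced, so the
      -- conjugate is shorter than `g`.
      have hrot : of y.2 * g * (of y.2)⁻¹ = wordProd (y :: l) := by simp [hgl, mul_assoc]
      have hlt : syllableLength (of y.2 * g * (of y.2)⁻¹) < n := by
        have hlen : (y :: l).length = n := by simp [← hn, syllableLength, hg]
        exact hlen ▸ hrot ▸ syllableLength_wordProd_lt hyl
      obtain ⟨p, hp, hpg⟩ := ih _ hlt _ rfl
      refine ⟨p * of y.2, ?_, by simpa [mul_assoc] using hpg⟩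
      have := syllableLength_mul_le p (of y.2)
      have := syllableLength_of_le y.2
      omega

theorem isReduced_append_or_isReduced_append_inv {g : CoprodI G}
    (hg : IsReduced (normalForm g ++ normalForm g)) (k : CoprodI G) :
    IsReduced (normalForm k ++ normalForm g) ∨ IsReduced (normalForm k ++ normalForm g⁻¹) := by
  by_cases hkg : ∀ x ∈ (normalForm k).getLast?, ∀ y ∈ (normalForm g).head?, x.1 ≠ y.1
  · exact Or.inl <| isReduced_append.mpr ⟨isReduced_normalForm k, isReduced_normalForm g, hkg⟩
  · refine Or.inr <| isReduced_append.mpr ⟨isReduced_normalForm k, isReduced_normalForm g⁻¹, ?_⟩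
    push Not at hkg
    obtain ⟨x, hx, y, hy, hxy⟩ := hkg
    intro x' hx' z' hz'
    obtain rfl : x' = x := Option.mem_unique hx' hx
    obtain ⟨z, hz, rfl⟩ : ∃ z ∈ (normalForm g).getLast?, ⟨z.1, z.2⁻¹⟩ = z' := by
      simpa [normalForm_inv] using hz'
    exact hxy ▸ ((isReduced_append.mp hg).2.2 z hz y hy).symm

theorem eq_of_commute_of_isReduced_append {g k k' : CoprodI G} (hg : g ≠ 1)
    (hk : Commute k g) (hk' : Commute k' g) (hkg : IsReduced (normalForm k ++ normalForm g))
    (hkg' : IsReduced (normalForm k' ++ normalForm g))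
    (hlen : syllableLength k = syllableLength k') : k = k' := by
  have append_comm {h : CoprodI G} (hh : Commute h g)
      (hhg : IsReduced (normalForm h ++ normalForm g)) :
      normalForm h ++ normalForm g = normalForm g ++ normalForm h :=
    hhg.eq_of_wordProd_eq (by simpa using hh.eq) (by simp [add_comm])
  exact normalForm_injective <|
    eq_of_append_comm (mt normalForm_eq_nil_iff.mp hg) (append_comm hk hkg) (append_comm hk' hkg')
      hlen

theorem eq_one_of_of_mul_eq_mul_of {i : ι} {x y : G i} {k : CoprodI G} (hy : y ≠ 1)
    (hk : ∀ z ∈ (normalForm k).head?, i ≠ z.1) (h : of y * k = k * of x) : k = 1 := by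
  have hred : IsReduced (⟨i, y⟩ :: normalForm k) :=
    ⟨List.forall_mem_cons.mpr ⟨hy, (isReduced_normalForm k).ne_one⟩,
      (isReduced_normalForm k).isChain.cons hk⟩
  have heq : ⟨i, y⟩ :: normalForm k = normalForm k ++ [⟨i, x⟩] :=
    hred.eq_of_wordProd_eq (by simpa using h) (by simp)
  cases hnf : normalForm k with
  | nil => exact normalForm_eq_nil_iff.mp hnf
  | cons z t =>
    obtain rfl : ⟨i, y⟩ = z := by simpa [hnf] using congrArg List.head? heq
    exact absurd rfl (hk ⟨i, y⟩ (by simp [hnf]))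

theorem mem_range_of_of_commute_of {i : ι} {x : G i} (hx : x ≠ 1) {k : CoprodI G}
    (hk : Commute k (of x)) : k ∈ Set.range (of : G i →* CoprodI G) := by
  obtain ⟨y, k', rfl, hk'⟩ := exists_of_mul_eq i k
  have hconj : of (y⁻¹ * x * y) * k' = k' * of x := by
    simp only [map_mul, map_inv]
    rw [mul_assoc, mul_assoc, ← hk.eq, mul_assoc, inv_mul_cancel_left]
  have : k' = 1 :=
    eq_one_of_of_mul_eq_mul_of (by simpa [mul_assoc, inv_mul_eq_one, eq_comm] using hx) hk' hconj
  exact ⟨y, by simp [this]⟩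

theorem card_le_of_commute_of_isReduced_append_self {g : CoprodI G} (hg : g ≠ 1)
    (hred : IsReduced (normalForm g ++ normalForm g)) {n : ℕ} {T : Finset (CoprodI G)}
    (hT : ∀ k ∈ T, Commute k g ∧ syllableLength k ≤ n) : T.card ≤ 2 * (n + 1) := by
  classical
  have card_le {h : CoprodI G} (hh : h ≠ 1) {U : Finset (CoprodI G)} (hUT : U ⊆ T)
      (hU : ∀ k ∈ U, Commute k h ∧ IsReduced (normalForm k ++ normalForm h)) :
      U.card ≤ n + 1 := by
    rw [← Finset.card_range (n + 1)]
    refine Finset.card_le_card_of_injOn syllableLength ?_ fun k hk k' hk' =>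
      eq_of_commute_of_isReduced_append hh (hU k hk).1 (hU k' hk').1 (hU k hk).2 (hU k' hk').2
    exact fun k hk => by simpa [Nat.lt_succ_iff] using (hT k (hUT hk)).2
  rw [two_mul, ← T.card_filter_add_card_filter_not
    fun k => IsReduced (normalForm k ++ normalForm g)]
  refine add_le_add (card_le hg (Finset.filter_subset _ _) fun k hk => ?_)
    (card_le (inv_ne_one.mpr hg) (Finset.filter_subset _ _) fun k hk => ?_)
  · obtain ⟨hk, hkg⟩ := Finset.mem_filter.mp hk
    exact ⟨(hT k hk).1, hkg⟩
  · obtain ⟨hk, hkg⟩ := Finset.mem_filter.mp hk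
    exact ⟨(hT k hk).1.inv_right,
      (isReduced_append_or_isReduced_append_inv hred k).resolve_left hkg⟩

theorem card_le_of_commute_of {i : ι} [Finite (G i)] {x : G i} (hx : x ≠ 1)
    {T : Finset (CoprodI G)} (hT : ∀ k ∈ T, Commute k (of x)) : T.card ≤ Nat.card (G i) := by
  rw [← Set.ncard_coe_finset, ← Nat.card_coe_set_eq]
  have hsub : (T : Set (CoprodI G)) ⊆ Set.range (of : G i →* CoprodI G) := fun k hk =>
    mem_range_of_of_commute_of hx (hT k hk)
  exact (Nat.card_mono (Set.finite_range _) hsub).trans (Finite.card_range_le _)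

theorem card_le_of_commute [∀ i, Finite (G i)] {c : ℕ} (hc : ∀ i, Nat.card (G i) ≤ c)
    {g : CoprodI G} (hg : g ≠ 1) {n : ℕ} {T : Finset (CoprodI G)}
    (hT : ∀ k ∈ T, Commute k g ∧ syllableLength k ≤ n) :
    T.card ≤ max c (2 * (n + 2 * syllableLength g + 1)) := by
  obtain ⟨p, hp, hpg⟩ := exists_conj_eq_of_or_isReduced_append_self g
  have hne : p * g * p⁻¹ ≠ 1 := by simpa [conj_eq_one_iff] using hg
  have hconj : ∀ k ∈ T.map (MulAut.conj p).toEquiv.toEmbedding,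
      Commute k (p * g * p⁻¹) ∧ syllableLength k ≤ n + 2 * syllableLength g := by
    simp only [Finset.forall_mem_map]
    intro k hk
    obtain ⟨hcomm, hlen⟩ := hT k hk
    refine ⟨hcomm.map (MulAut.conj p), ?_⟩
    have := syllableLength_mul_le (p * k) p⁻¹
    have := syllableLength_mul_le p k
    have := syllableLength_inv p
    change syllableLength (p * k * p⁻¹) ≤ _
    omega
  rw [← T.card_map (MulAut.conj p).toEquiv.toEmbedding]
  rcases hpg with ⟨i, x, hx⟩ | hred
  · refine le_max_of_le_left <| (card_le_of_commute_of (x := x) ?_ fun k hk => ?_).trans (hc i)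
    · rintro rfl
      exact hne (by simpa using hx)
    · exact hx ▸ (hconj k hk).1
  · exact le_max_of_le_right <| card_le_of_commute_of_isReduced_append_self hne hred hconj

theorem card_le_mul_card_image_commutatorElement [DecidableEq (CoprodI G)] [∀ i, Finite (G i)]
    {c : ℕ} (hc : ∀ i, Nat.card (G i) ≤ c) {g : CoprodI G} (hg : g ≠ 1) {n : ℕ}
    {S : Finset (CoprodI G)} (hS : ∀ h ∈ S, syllableLength h ≤ n) :
    S.card ≤ max c (2 * (2 * n + 2 * syllableLength g + 1)) * (S.image fun h => ⁅g, h⁆).card := by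
  refine Finset.card_le_mul_card_image S _ fun z hz => ?_
  obtain ⟨h₀, hh₀, rfl⟩ := Finset.mem_image.mp hz
  rw [← Finset.card_image_of_injective _ (mul_right_injective h₀⁻¹)]
  refine card_le_of_commute hc hg fun k hk => ?_
  obtain ⟨h, hh, rfl⟩ := Finset.mem_image.mp hk
  obtain ⟨hh, heq⟩ := Finset.mem_filter.mp hh
  refine ⟨commutatorElement_eq_commutatorElement_iff.mp heq, ?_⟩
  have := syllableLength_mul_le h₀⁻¹ h
  have := syllableLength_inv h₀
  have := hS h hh
  have := hS h₀ hh₀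
  omega

theorem card_le_of_syllableLength_le [DecidableEq ι] {A : Finset (Σ i, G i)}
    (hA : ∀ x : Σ i, G i, x.2 ≠ 1 → x ∈ A) {d : ℕ}
    (hd : ∀ y ∈ A, (A.filter fun x => x.1 ≠ y.1).card ≤ d) {n : ℕ} {S : Finset (CoprodI G)}
    (hS : ∀ g ∈ S, syllableLength g ≤ n) :
    S.card ≤ 1 + A.card * ∑ k ∈ Finset.range n, d ^ k := by
  classical
  have sphere_le (k : ℕ) :
      (S.filter fun g => syllableLength g = k + 1).card ≤ A.card * d ^ k := by
    rw [← Finset.card_image_of_injective _ normalForm_injective]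
    refine card_isChain_le (r := fun x y => x.1 ≠ y.1) hd fun l hl => ?_
    obtain ⟨g, hg, rfl⟩ := Finset.mem_image.mp hl
    exact ⟨(Finset.mem_filter.mp hg).2, fun x hx => hA x ((isReduced_normalForm g).ne_one x hx),
      (isReduced_normalForm g).isChain⟩
  have one_le : (S.filter fun g => syllableLength g = 0).card ≤ 1 := by
    refine Finset.card_le_one_iff_subset_singleton.mpr ⟨1, fun g hg => ?_⟩
    simpa [normalForm_eq_nil_iff] using List.length_eq_zero_iff.mp (Finset.mem_filter.mp hg).2
  have hmaps : Set.MapsTo syllableLength (S : Set (CoprodI G)) (Finset.range (n + 1)) :=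
    fun g hg => by simpa [Nat.lt_succ_iff] using hS g hg
  rw [Finset.card_eq_sum_card_fiberwise hmaps, Finset.sum_range_succ', add_comm, Finset.mul_sum]
  exact add_le_add one_le (Finset.sum_le_sum fun k _ => sphere_le k)

end Words

section ModularGroup

open Monoid Monoid.CoprodI

/-- The factors `ℤ/2ℤ` and `ℤ/3ℤ` of `Gfp`, as a family over `Bool`, so that `Gfp` is compared with
`Monoid.CoprodI Factor`, for which Mathlib has reduced words. -/
abbrev Factor (i : Bool) : Type := Multiplicative (ZMod (bif i then 3 else 2))

instance (i : Bool) : NeZero (bif i then 3 else 2) := by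
  cases i <;> exact ⟨by decide⟩

/-- The comparison of the binary and the indexed free product; it is injective, and carries the word
metric of `Gfp` to the syllable length. -/
def toCoprodI : Gfp →* CoprodI Factor :=
  Coprod.lift (of (M := Factor) (i := false)) (of (M := Factor) (i := true))

theorem toCoprodI_injective : Function.Injective toCoprodI := by
  let inverse : CoprodI Factor →* Gfp :=
    CoprodI.lift fun i => match i with
      | false => Coprod.inl
      | true => Coprod.inr
  have hcomp : inverse.comp toCoprodI = MonoidHom.id Gfp := by
    ext <;> simp [inverse, toCoprodI]
  exact Function.LeftInverse.injective (DFunLike.congr_fun hcomp)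

theorem syllableLength_toCoprodI_le {R : ℝ} {g : Gfp} (hg : g ∈ ballW R) :
    (syllableLength (toCoprodI g) : ℝ) ≤ R := by
  obtain ⟨l, hlR, hl, rfl⟩ := hg
  have letter_le : ∀ x ∈ l, syllableLength (toCoprodI x) ≤ 1 := by
    intro x hx
    have hA : syllableLength (toCoprodI genA) ≤ 1 := syllableLength_of_le _
    have hB : syllableLength (toCoprodI genB) ≤ 1 := syllableLength_of_le _
    rcases hl x hx with rfl | rfl | rfl | rfl <;> simpa
  have hlen : syllableLength (toCoprodI l.prod) ≤ l.length := calc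
    syllableLength (toCoprodI l.prod)
      ≤ (l.map fun x => syllableLength (toCoprodI x)).sum :=
        l.apply_prod_le_sum_map (fun x => syllableLength (toCoprodI x)) (by simp)
          fun x y => by simpa using syllableLength_mul_le (toCoprodI x) (toCoprodI y)
    _ ≤ l.length := by
      simpa using List.sum_le_card_nsmul
        (l.map fun x => syllableLength (toCoprodI x)) 1 (by simpa using letter_le)
  exact (Nat.cast_le.mpr hlen).trans hlR

theorem card_lt_of_syllableLength_le {n : ℕ} {S : Finset (CoprodI Factor)}
    (hS : ∀ g ∈ S, syllableLength g ≤ n) : S.card < 3 * 2 ^ n := by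
  let letters : Finset (Σ i, Factor i) := Finset.univ.filter fun x => x.2 ≠ 1
  have hletters : letters.card = 3 := by decide
  have hbranch : ∀ y ∈ letters, (letters.filter fun x => x.1 ≠ y.1).card ≤ 2 := by decide
  have hcard := card_le_of_syllableLength_le (A := letters) (by simp [letters]) hbranch hS
  rw [hletters] at hcard
  have := Nat.geomSum_lt (m := 2) (n := n) (s := Finset.range n) le_rfl (by simp)
  omega

theorem card_lt_pow_six_of_subset_ballW {R : ℝ} (hR : 2 ≤ R) (hR' : R < 5) {S : Finset Gfp}
    (hS : ↑S ⊆ ballW (2 * R)) : (S.card : ℝ) < R ^ 6 := by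
  set n := ⌊2 * R⌋₊
  have hn : (n : ℝ) ≤ 2 * R := Nat.floor_le (by linarith)
  have hn4 : 4 ≤ n := Nat.le_floor (by push_cast; linarith)
  have hn10 : n < 10 := (Nat.floor_lt (by linarith)).mpr (by push_cast; linarith)
  have hcard : S.card < 3 * 2 ^ n := by
    classical
    rw [← Finset.card_image_of_injective S toCoprodI_injective]
    exact card_lt_of_syllableLength_le <| Finset.forall_mem_image.mpr fun g hg =>
      Nat.le_floor (syllableLength_toCoprodI_le (hS hg))
  have hgrowth : 2 ^ 6 * (3 * 2 ^ n) ≤ n ^ 6 := by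
    interval_cases n <;> norm_num
  calc (S.card : ℝ) < 3 * 2 ^ n := mod_cast hcard
    _ ≤ (n / 2) ^ 6 := by
      rw [div_pow, le_div_iff₀' (by positivity)]
      exact_mod_cast hgrowth
    _ ≤ R ^ 6 := by gcongr; linarith

theorem card_le_mul_card_image_commutatorElement_of_subset_ballW [DecidableEq Gfp] {r : ℝ}
    {S : Finset Gfp} (hS : ↑S ⊆ ballW r) {g : Gfp} (hgS : g ∈ S) (hg : g ≠ 1) :
    (S.card : ℝ) ≤ (8 * r + 2) * (S.image fun h => ⁅g, h⁆).card := by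
  classical
  have hlen : ∀ h ∈ S, syllableLength (toCoprodI h) ≤ ⌊r⌋₊ := fun h hh =>
    Nat.le_floor (syllableLength_toCoprodI_le (hS hh))
  have hg' : toCoprodI g ≠ 1 := (map_ne_one_iff _ toCoprodI_injective).mpr hg
  have hg_pos : 0 < syllableLength (toCoprodI g) :=
    List.length_pos_of_ne_nil (mt normalForm_eq_nil_iff.mp hg')
  have hr : 0 ≤ r := (Nat.cast_nonneg _).trans (syllableLength_toCoprodI_le (hS hgS))
  have hfactor : ∀ i, Nat.card (Factor i) ≤ 3 := by
    intro i
    cases i <;> simp [Factor]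
  have himage : (S.image toCoprodI).image (fun h => ⁅toCoprodI g, h⁆) =
      (S.image fun h => ⁅g, h⁆).image toCoprodI := by
    simp [Finset.image_image, Function.comp_def, map_commutatorElement]
  have hcount := card_le_mul_card_image_commutatorElement hfactor hg' <|
    Finset.forall_mem_image.mpr hlen
  rw [himage, Finset.card_image_of_injective _ toCoprodI_injective,
    Finset.card_image_of_injective _ toCoprodI_injective] at hcount
  have hconst : max 3 (2 * (2 * ⌊r⌋₊ + 2 * syllableLength (toCoprodI g) + 1)) ≤ 8 * ⌊r⌋₊ + 2 := by
    have := hlen g hgS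
    omega
  calc (S.card : ℝ) ≤ (8 * ⌊r⌋₊ + 2) * (S.image fun h => ⁅g, h⁆).card :=
        mod_cast hcount.trans (Nat.mul_le_mul_right _ hconst)
    _ ≤ (8 * r + 2) * (S.image fun h => ⁅g, h⁆).card := by
      gcongr
      exact Nat.floor_le hr

theorem card_image_commutatorElement_le_card_commSet [DecidableEq Gfp] {S T : Finset Gfp} {g : Gfp}
    (hg : g ∈ S) : (T.image fun h => ⁅g, h⁆).card ≤ Nat.card (commSet S T) := by
  have hfin : (commSet S T).Finite := by
    refine ((S ×ˢ T).finite_toSet.image fun p => ⁅p.1, p.2⁆).subset ?_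
    rintro z ⟨s, hs, t, ht, rfl⟩
    exact ⟨(s, t), by simpa using ⟨hs, ht⟩, rfl⟩
  rw [Nat.card_coe_set_eq, ← Set.ncard_coe_finset]
  refine Set.ncard_le_ncard ?_ hfin
  intro z hz
  obtain ⟨h, hh, rfl⟩ := Finset.mem_image.mp hz
  exact ⟨g, hg, h, hh, rfl⟩

end ModularGroup

end FreeProduct

open FreeProduct

open scoped commutatorElement

/-- **Many commutators (free-product version of Bourgain–Gamburd's Lemma 3).**
If `R ≥ 2` and `S ⊆ B_{2R}(e)` has `|S| ≥ R⁶`, then `|[S,S]| ≥ R³`. -/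
theorem many_commutators (R : ℝ) (hR : 2 ≤ R) (S : Finset Gfp)
    (hS : ↑S ⊆ ballW (2 * R)) (hcard : R ^ 6 ≤ (S.card : ℝ)) :
    R ^ 3 ≤ (Nat.card ↥(commSet ↑S ↑S) : ℝ) := by
  classical
  rcases lt_or_ge R 5 with hR5 | hR5
  · exact absurd hcard (card_lt_pow_six_of_subset_ballW hR hR5 hS).not_ge
  have hS_one : 1 < S.card := by
    have : (1 : ℝ) < R ^ 6 := one_lt_pow₀ (by linarith) (by norm_num)
    exact_mod_cast this.trans_le hcard
  obtain ⟨g, hgS, hg⟩ := Finset.exists_mem_ne hS_one 1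
  have hcount := card_le_mul_card_image_commutatorElement_of_subset_ballW hS hgS hg
  have hconst : 8 * (2 * R) + 2 ≤ R ^ 3 := by nlinarith [sq_nonneg (R - 5)]
  have himage : R ^ 3 ≤ (S.image fun h => ⁅g, h⁆).card := by
    refine le_of_mul_le_mul_left ?_ (show 0 < R ^ 3 by positivity)
    calc R ^ 3 * R ^ 3 = R ^ 6 := by ring
      _ ≤ (8 * (2 * R) + 2) * (S.image fun h => ⁅g, h⁆).card := hcard.trans hcount
      _ ≤ R ^ 3 * (S.image fun h => ⁅g, h⁆).card := by gcongr
  exact himage.trans (mod_cast card_image_commutatorElement_le_card_commSet hgS)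
end

section
/- Let G = (ℤ/2ℤ) * (ℤ/3ℤ) with a, b the canonical generators of orders 2 and 3, and let B_R(e) denote the ball of radius R around the identity in the word metric with respect to {a, b}. Let R > 2 be real and let S ⊆ B_{2R}(e) be a finite set such that [[S,S],[S,S]] = {e}, i.e., every two elements of the commutator set [S,S] commute. Then |S| < R⁶. -/
/-!
Work with normal forms in a free product. If `u` commutes with an element `W` whose normal form is
long compared with that of `u`, then left multiplication by `u` only alters the beginning of `W` and
right multiplication only its end, so `u` moves a short initial segment of `W` to another initial
segment and is determined by the length of the latter. Every nontrivial `w` is either conjugate into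
a factor, and then its centralizer is too because factors are malnormal, or has powers with
arbitrarily long normal forms. If the factors have at most `2 * M + 1` elements, then in either case
its centralizer meets the ball of radius `M` in at most `2 * M + 1` elements.

Now let `s`, `t` be two elements of `S` that do not commute. The fibres of `h ↦ ⁅s, h⁆` on `S` are
translates of parts of the centralizer of `s`, and its image lies in the centralizer of `⁅s, t⁆`, so
`S` has at most quadratically many elements. When `R` is too small for this to be below `R ^ 6`, the
whole ball has fewer than `2 ^ 6` elements.
-/

section ReducedWords

open Monoid CoprodI

variable {ι : Type*} {G : ι → Type*} [∀ i, Group (G i)]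

/-- A word in the nontrivial elements of the factors in which neighbouring syllables come from
different factors: the property of the lists underlying `Monoid.CoprodI.Word`. -/
def IsReducedWord (l : List (Σ i, G i)) : Prop :=
  (∀ s ∈ l, s.2 ≠ 1) ∧ l.IsChain fun s t => s.1 ≠ t.1

/-- The element of the free product that a (not necessarily reduced) word spells. -/
def wordProd (l : List (Σ i, G i)) : CoprodI G :=
  (l.map fun s => of s.2).prod

/-- The formal inverse of a word. -/
def invWord (l : List (Σ i, G i)) : List (Σ i, G i) :=
  (l.map fun s => ⟨s.1, s.2⁻¹⟩).reverse

open scoped Classical in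
/-- The normal form of an element of the free product: the unique reduced word that spells it. -/
noncomputable def syllables (g : CoprodI G) : List (Σ i, G i) :=
  (Word.equiv g).toList

/-- The number of syllables of the normal form. For factors of order at most `3` this is the
word length with respect to generators of the factors. -/
noncomputable def syllableLength (g : CoprodI G) : ℕ :=
  (syllables g).length

theorem wordProd_nil : wordProd ([] : List (Σ i, G i)) = 1 := rfl

theorem wordProd_cons (s : Σ i, G i) (l : List (Σ i, G i)) :
    wordProd (s :: l) = of s.2 * wordProd l := by
  simp only [wordProd, List.map_cons, List.prod_cons]

theorem wordProd_append (l l' : List (Σ i, G i)) :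
    wordProd (l ++ l') = wordProd l * wordProd l' := by
  simp only [wordProd, List.map_append, List.prod_append]

theorem wordProd_singleton (s : Σ i, G i) : wordProd [s] = of s.2 := by
  rw [wordProd_cons, wordProd_nil, mul_one]

theorem wordProd_invWord (l : List (Σ i, G i)) : wordProd (invWord l) = (wordProd l)⁻¹ := by
  simp only [wordProd, invWord, List.prod_inv_reverse, List.map_reverse, List.map_map,
    Function.comp_def, map_inv]

theorem length_invWord (l : List (Σ i, G i)) : (invWord l).length = l.length := by
  simp only [invWord, List.length_reverse, List.length_map]

theorem invWord_append (l l' : List (Σ i, G i)) :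
    invWord (l ++ l') = invWord l' ++ invWord l := by
  simp only [invWord, List.map_append, List.reverse_append]

theorem invWord_invWord (l : List (Σ i, G i)) : invWord (invWord l) = l := by
  simp [invWord, Function.comp_def]

theorem isReducedWord_nil : IsReducedWord ([] : List (Σ i, G i)) := by
  simp [IsReducedWord]

theorem isReducedWord_cons {s : Σ i, G i} {l : List (Σ i, G i)} :
    IsReducedWord (s :: l) ↔ s.2 ≠ 1 ∧ (∀ t ∈ l.head?, s.1 ≠ t.1) ∧ IsReducedWord l := by
  simp only [IsReducedWord, List.forall_mem_cons, List.isChain_cons]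
  tauto

theorem isReducedWord_singleton {s : Σ i, G i} : IsReducedWord [s] ↔ s.2 ≠ 1 := by
  simp [IsReducedWord]

theorem isReducedWord_append {l l' : List (Σ i, G i)} :
    IsReducedWord (l ++ l') ↔ IsReducedWord l ∧ IsReducedWord l' ∧
      ∀ s ∈ l.getLast?, ∀ t ∈ l'.head?, s.1 ≠ t.1 := by
  simp only [IsReducedWord, List.forall_mem_append, List.isChain_append]
  tauto

theorem IsReducedWord.invWord {l : List (Σ i, G i)} (h : IsReducedWord l) :
    IsReducedWord (invWord l) := by
  refine ⟨?_, ?_⟩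
  · intro s hs
    obtain ⟨t, ht, rfl⟩ := List.mem_map.1 (List.mem_reverse.1 hs)
    exact inv_ne_one.2 (h.1 t ht)
  · rw [_root_.invWord, List.isChain_reverse, List.isChain_map]
    exact h.2.imp fun _ _ => Ne.symm

theorem isReducedWord_syllables (g : CoprodI G) : IsReducedWord (syllables g) :=
  ⟨Word.ne_one _, Word.chain_ne _⟩

theorem wordProd_syllables (g : CoprodI G) : wordProd (syllables g) = g := by
  classical exact Word.equiv.symm_apply_apply g

theorem IsReducedWord.syllables_wordProd {l : List (Σ i, G i)} (h : IsReducedWord l) :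
    syllables (wordProd l) = l := by
  classical exact congrArg Word.toList (Word.equiv.apply_symm_apply (⟨l, h.1, h.2⟩ : Word G))

theorem syllables_injective : Function.Injective (syllables : CoprodI G → List (Σ i, G i)) :=
  Function.LeftInverse.injective wordProd_syllables

theorem exists_isReducedWord_of_mul {i : ι} (m : G i) {P r : List (Σ i, G i)}
    (hP : P = [] → r = []) (h : IsReducedWord (P ++ r)) :
    ∃ P', IsReducedWord (P' ++ r) ∧ wordProd P' = of m * wordProd P ∧
      P.length ≤ P'.length + 1 ∧ P'.length ≤ P.length + 1 := by
  rcases eq_or_ne m 1 with rfl | hm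
  · exact ⟨P, h, by rw [map_one, one_mul], by omega, by omega⟩
  rcases P with _ | ⟨⟨j, n⟩, P⟩
  · obtain rfl := hP rfl
    exact ⟨[⟨i, m⟩], isReducedWord_singleton.2 hm, rfl, by simp, by simp⟩
  rcases eq_or_ne i j with rfl | hij
  · obtain ⟨-, hhead, htail⟩ := isReducedWord_cons.1 h
    have hprod : of m * wordProd (⟨i, n⟩ :: P) = of (m * n) * wordProd P := by
      rw [wordProd_cons, map_mul, mul_assoc]
    by_cases hmn : m * n = 1
    · exact ⟨P, htail, by rw [hprod, hmn, map_one, one_mul], by simp, by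
        simp only [List.length_cons]; omega⟩
    · exact ⟨⟨i, m * n⟩ :: P, isReducedWord_cons.2 ⟨hmn, hhead, htail⟩,
        by rw [hprod, wordProd_cons], by simp, by simp⟩
  · exact ⟨⟨i, m⟩ :: ⟨j, n⟩ :: P, isReducedWord_cons.2 ⟨hm, by simpa using hij, h⟩,
      wordProd_cons _ _, by simp only [List.length_cons]; omega, by simp⟩

theorem syllableLength_wordProd_le (l : List (Σ i, G i)) :
    syllableLength (wordProd l) ≤ l.length := by
  induction l with
  | nil => rw [syllableLength, isReducedWord_nil.syllables_wordProd]
  | cons s l ih =>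
    obtain ⟨l', hred, hprod, -, hlen⟩ := exists_isReducedWord_of_mul s.2 (fun _ => rfl)
      ((List.append_nil (syllables (wordProd l))).symm ▸ isReducedWord_syllables _)
    rw [List.append_nil] at hred
    rw [wordProd_syllables] at hprod
    rw [wordProd_cons, ← hprod, syllableLength, hred.syllables_wordProd]
    exact hlen.trans (Nat.succ_le_succ ih)

theorem syllableLength_mul_le (g h : CoprodI G) :
    syllableLength (g * h) ≤ syllableLength g + syllableLength h := by
  have := syllableLength_wordProd_le (syllables g ++ syllables h)
  rwa [wordProd_append, wordProd_syllables, wordProd_syllables, List.length_append] at this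

theorem syllableLength_inv (g : CoprodI G) : syllableLength g⁻¹ = syllableLength g := by
  have hle (g : CoprodI G) : syllableLength g⁻¹ ≤ syllableLength g := by
    have := syllableLength_wordProd_le (invWord (syllables g))
    rwa [wordProd_invWord, wordProd_syllables, length_invWord] at this
  exact (hle g).antisymm (by simpa only [inv_inv] using hle g⁻¹)

theorem exists_isReducedWord_mul_left (u : CoprodI G) {P r : List (Σ i, G i)}
    (h : IsReducedWord (P ++ r)) (hu : syllableLength u ≤ P.length) :
    ∃ P', IsReducedWord (P' ++ r) ∧ wordProd P' = u * wordProd P := by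
  suffices ∀ l : List (Σ i, G i), l.length ≤ P.length →
      ∃ P', IsReducedWord (P' ++ r) ∧ wordProd P' = wordProd l * wordProd P ∧
        P.length ≤ P'.length + l.length by
    obtain ⟨P', hred, hprod, -⟩ := this (syllables u) hu
    exact ⟨P', hred, by rw [hprod, wordProd_syllables]⟩
  intro l
  induction l with
  | nil => exact fun _ => ⟨P, h, by rw [wordProd_nil, one_mul], le_rfl⟩
  | cons s l ih =>
    intro hl
    rw [List.length_cons] at hl
    obtain ⟨Q, hQ, hQprod, hQlen⟩ := ih (by omega)
    have hQne : Q ≠ [] := List.ne_nil_of_length_pos (by omega)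
    obtain ⟨P', hred, hprod, hlen, -⟩ := exists_isReducedWord_of_mul s.2 (absurd · hQne) hQ
    refine ⟨P', hred, ?_, ?_⟩
    · rw [hprod, hQprod, wordProd_cons, mul_assoc]
    · rw [List.length_cons]
      omega

theorem exists_isReducedWord_mul_right (u : CoprodI G) {Q r : List (Σ i, G i)}
    (h : IsReducedWord (Q ++ r)) (hu : syllableLength u ≤ r.length) :
    ∃ r', IsReducedWord (Q ++ r') ∧ wordProd r' = wordProd r * u := by
  have hinv : IsReducedWord (invWord r ++ invWord Q) := invWord_append Q r ▸ h.invWord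
  obtain ⟨P', hred, hprod⟩ := exists_isReducedWord_mul_left u⁻¹ hinv
    (by rwa [syllableLength_inv, length_invWord])
  refine ⟨invWord P', ?_, ?_⟩
  · have := hred.invWord
    rwa [invWord_append, invWord_invWord] at this
  · rw [wordProd_invWord, hprod, wordProd_invWord, mul_inv_rev, inv_inv, inv_inv]

end ReducedWords

section Centralizers

open Monoid CoprodI

variable {ι : Type*} {G : ι → Type*} [∀ i, Group (G i)]

/-- Multiplying on the left by `u` leaves all but the first `M` syllables of `W` in place, and
multiplying on the right by `u` leaves all but the last `M` in place; compare `u * W = W * u`. -/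
theorem syllables_mul_take_prefix_of_commute {u W : CoprodI G} {M : ℕ}
    (hu : syllableLength u ≤ M) (hW : 3 * M ≤ syllableLength W) (hcomm : Commute u W) :
    syllables (u * wordProd ((syllables W).take M)) <+: syllables W := by
  rw [syllableLength] at hW
  set P := (syllables W).take M
  set Q := (syllables W).take ((syllables W).length - M)
  have hPr : P ++ (syllables W).drop M = syllables W := List.take_append_drop _ _
  have hQr : Q ++ (syllables W).drop ((syllables W).length - M) = syllables W :=
    List.take_append_drop _ _
  have hPlen : P.length = M := by simp only [P, List.length_take]; omega
  have hQlen : 2 * M ≤ Q.length := by simp only [Q, List.length_take]; omega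
  obtain ⟨P', hP', hP'prod⟩ := exists_isReducedWord_mul_left u
    (hPr.symm ▸ isReducedWord_syllables W) (hu.trans hPlen.ge)
  obtain ⟨r', hr', hr'prod⟩ := exists_isReducedWord_mul_right u
    (hQr.symm ▸ isReducedWord_syllables W) (by simp only [List.length_drop]; omega)
  have hsyll : syllables (u * wordProd P) = P' := by
    rw [← hP'prod, (isReducedWord_append.1 hP').1.syllables_wordProd]
  have hlen : P'.length ≤ Q.length := by
    have := syllableLength_mul_le u (wordProd P)
    have := syllableLength_wordProd_le P
    rw [← hsyll, ← syllableLength]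
    omega
  have heq : P' ++ (syllables W).drop M = Q ++ r' := by
    rw [← hP'.syllables_wordProd, ← hr'.syllables_wordProd, wordProd_append, hP'prod, mul_assoc,
      ← wordProd_append, hPr, wordProd_append Q, hr'prod, ← mul_assoc, ← wordProd_append, hQr,
      wordProd_syllables, hcomm.eq]
  rw [hsyll]
  exact (List.prefix_of_prefix_length_le ⟨_, heq⟩ (List.prefix_append Q r') hlen).trans
    (List.take_prefix _ _)

theorem card_le_of_commute_of_long {W : CoprodI G} {M : ℕ} (hW : 3 * M ≤ syllableLength W)
    {T : Finset (CoprodI G)} (hT : ∀ u ∈ T, syllableLength u ≤ M)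
    (hcomm : ∀ u ∈ T, Commute u W) : T.card ≤ 2 * M + 1 := by
  set p := wordProd ((syllables W).take M)
  have hp : syllableLength p ≤ M :=
    (syllableLength_wordProd_le _).trans (List.length_take_le _ _)
  have hprefix : ∀ u ∈ T, syllables (u * p) <+: syllables W := fun u hu =>
    syllables_mul_take_prefix_of_commute (hT u hu) hW (hcomm u hu)
  rw [← Finset.card_range (2 * M + 1)]
  refine Finset.card_le_card_of_injOn (fun u => syllableLength (u * p)) (fun u hu => ?_)
    fun u hu v hv (huv : syllableLength (u * p) = syllableLength (v * p)) => ?_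
  · have := syllableLength_mul_le u p
    have := hT u hu
    simp only [Finset.coe_range, Set.mem_Iio]
    omega
  · have hpre := List.prefix_of_prefix_length_le (hprefix u hu) (hprefix v hv) huv.le
    exact mul_right_cancel (syllables_injective (hpre.eq_of_length huv))

theorem exists_eq_of_mul_wordProd_isReducedWord (i : ι) (u : CoprodI G) :
    ∃ (g : G i) (v : List (Σ i, G i)), IsReducedWord v ∧ (∀ s ∈ v.head?, i ≠ s.1) ∧
      u = of g * wordProd v := by
  have hred := isReducedWord_syllables u
  have hprod := (wordProd_syllables u).symm
  rcases hu : syllables u with _ | ⟨⟨j, g⟩, v⟩ <;> rw [hu] at hred hprod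
  · exact ⟨1, [], hred, by simp, by rw [map_one, one_mul, hprod]⟩
  rcases eq_or_ne i j with rfl | hij
  · obtain ⟨-, hhead, htail⟩ := isReducedWord_cons.1 hred
    exact ⟨g, v, htail, hhead, by rw [hprod, wordProd_cons]⟩
  · exact ⟨1, _, hred, by simpa using hij, by rw [map_one, one_mul, hprod]⟩

/-- Factors of a free product are malnormal. -/
theorem mem_range_of_of_mul_eq_mul_of {i : ι} {m m' : G i} (hm : m ≠ 1) {u : CoprodI G}
    (h : of m * u = u * of m') : u ∈ (of : G i →* CoprodI G).range := by
  obtain ⟨g, v, hv, hhead, rfl⟩ := exists_eq_of_mul_wordProd_isReducedWord i u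
  have hm' : m' ≠ 1 := by
    rintro rfl
    rw [map_one, mul_one, mul_eq_right, ← map_one (of : G i →* CoprodI G)] at h
    exact hm (of_injective i h)
  have hn : g⁻¹ * m * g ≠ 1 := by simpa using (conj_eq_one_iff (a := g⁻¹)).not.2 hm
  have hleft : IsReducedWord (⟨i, g⁻¹ * m * g⟩ :: v) := isReducedWord_cons.2 ⟨hn, hhead, hv⟩
  have hvcomm : of (g⁻¹ * m * g) * wordProd v = wordProd v * of m' := by
    rw [map_mul, map_mul, map_inv, mul_assoc, mul_assoc, inv_mul_eq_iff_eq_mul, h, mul_assoc]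
  rcases List.eq_nil_or_concat v with rfl | ⟨q, ⟨j, n⟩, rfl⟩
  · exact ⟨g, by rw [wordProd_nil, mul_one]⟩
  rw [List.concat_eq_append] at *
  exfalso
  rcases eq_or_ne j i with rfl | hji
  · -- The last syllable absorbs `m'`, so the right-hand side has fewer syllables than the left.
    have hshort : wordProd (q ++ [⟨j, n⟩]) * of m' = wordProd (q ++ [⟨j, n * m'⟩]) := by
      rw [wordProd_append, wordProd_append, wordProd_singleton, wordProd_singleton, map_mul,
        mul_assoc]
    have hlen := syllableLength_wordProd_le (q ++ [⟨j, n * m'⟩])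
    rw [← hshort, ← hvcomm, ← wordProd_cons ⟨j, _⟩, syllableLength, hleft.syllables_wordProd]
      at hlen
    simp at hlen
  · have hright : IsReducedWord ((q ++ [⟨j, n⟩]) ++ [⟨i, m'⟩]) :=
      isReducedWord_append.2 ⟨hv, isReducedWord_singleton.2 hm', by simpa using hji⟩
    have heq := hleft.syllables_wordProd
    rw [wordProd_cons, hvcomm, ← wordProd_singleton ⟨i, m'⟩, ← wordProd_append,
      hright.syllables_wordProd] at heq
    exact hhead ⟨i, g⁻¹ * m * g⟩ (by
      cases q <;> simp_all) rfl

theorem card_le_of_commute_conj_of [∀ i, Finite (G i)] {i : ι} {m : G i} (hm : m ≠ 1)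
    {h : CoprodI G} {T : Finset (CoprodI G)} (hcomm : ∀ u ∈ T, Commute u (h * of m * h⁻¹)) :
    T.card ≤ Nat.card (G i) := by
  classical
  have := Fintype.ofFinite (G i)
  have hsub : T ⊆ Finset.univ.image fun g : G i => h * of g * h⁻¹ := fun u hu => by
    have hu' : Commute (h⁻¹ * u * h) (of m) := by
      rw [← Commute.conj_iff h]
      simpa [mul_assoc] using hcomm u hu
    obtain ⟨g, hg⟩ := mem_range_of_of_mul_eq_mul_of hm hu'.symm
    exact Finset.mem_image.2 ⟨g, Finset.mem_univ g, by rw [hg]; group⟩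
  calc T.card ≤ (Finset.univ.image fun g : G i => h * of g * h⁻¹).card := Finset.card_le_card hsub
    _ ≤ Fintype.card (G i) := Finset.card_image_le
    _ = Nat.card (G i) := (Nat.card_eq_fintype_card).symm

/-- A word whose powers are reduced. This holds as soon as its square is reduced; it includes the
empty word but excludes words of one syllable. -/
def IsCyclicallyReducedWord (l : List (Σ i, G i)) : Prop :=
  IsReducedWord (l ++ l)

theorem IsCyclicallyReducedWord.syllableLength_wordProd_pow {l : List (Σ i, G i)}
    (h : IsCyclicallyReducedWord l) (k : ℕ) :
    syllableLength (wordProd l ^ k) = k * l.length := by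
  obtain ⟨hl, -, hjoin⟩ := isReducedWord_append.1 h
  obtain ⟨l', hred, -, hprod, hlen⟩ : ∃ l', IsReducedWord l' ∧
      (∀ t ∈ l'.head?, t ∈ l.head?) ∧ wordProd l' = wordProd l ^ k ∧ l'.length = k * l.length := by
    induction k with
    | zero => exact ⟨[], isReducedWord_nil, by simp, by rw [wordProd_nil, pow_zero], by simp⟩
    | succ k ih =>
      obtain ⟨l', hred, hhead, hprod, hlen⟩ := ih
      refine ⟨l ++ l', isReducedWord_append.2
        ⟨hl, hred, fun s hs t ht => hjoin s hs t (hhead t ht)⟩, fun t ht => ?_,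
        by rw [wordProd_append, hprod, pow_succ'], ?_⟩
      · rw [List.head?_append, Option.mem_def, Option.or_eq_some_iff] at ht
        exact ht.elim id fun ht => hhead t ht.2
      · rw [List.length_append, hlen, Nat.succ_mul, add_comm]
  rw [← hprod, syllableLength, hred.syllables_wordProd, hlen]

/-- Take a conjugate of minimal syllable length. -/
theorem exists_conj_of_or_conj_cyclicallyReduced {w : CoprodI G} (hw : w ≠ 1) :
    (∃ h i, ∃ m : G i, w = h * of m * h⁻¹) ∨
      ∃ h l, l ≠ [] ∧ IsCyclicallyReducedWord l ∧ w = h * wordProd l * h⁻¹ := by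
  set f : CoprodI G → ℕ := fun h => syllableLength (h⁻¹ * w * h)
  set h := Function.argmin f
  have hmin (g : CoprodI G) : f h ≤ f g := Function.argmin_le f g
  obtain ⟨l, hred, hprod, hlen⟩ : ∃ l, IsReducedWord l ∧ wordProd l = h⁻¹ * w * h ∧
      l.length = f h :=
    ⟨_, isReducedWord_syllables _, wordProd_syllables _, rfl⟩
  have hconj : w = h * wordProd l * h⁻¹ := by rw [hprod]; group
  rcases l with _ | ⟨s, l⟩
  · exact absurd (by rw [hconj, wordProd_nil, mul_one, mul_inv_cancel]) hw
  rcases List.eq_nil_or_concat l with rfl | ⟨q, t, rfl⟩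
  · exact .inl ⟨h, s.1, s.2, by rw [hconj, wordProd_singleton]⟩
  rw [List.concat_eq_append] at *
  refine .inr ⟨h, s :: (q ++ [t]), List.cons_ne_nil _ _, ?_, hconj⟩
  refine isReducedWord_append.2 ⟨hred, hred, ?_⟩
  obtain ⟨i, m⟩ := s
  obtain ⟨j, n⟩ := t
  suffices j ≠ i by
    rw [← List.cons_append, List.getLast?_concat]
    simpa only [List.cons_append, List.head?_cons, Option.mem_def, Option.some.injEq,
      forall_eq'] using this
  rintro rfl
  have hshort : (h * of m)⁻¹ * w * (h * of m) = wordProd (q ++ [⟨j, n * m⟩]) := by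
    rw [hconj, wordProd_cons, wordProd_append, wordProd_append, wordProd_singleton,
      wordProd_singleton, map_mul]
    group
  have hlt : f (h * of m) < f h := by
    have hle := syllableLength_wordProd_le (q ++ [⟨j, n * m⟩])
    rw [← hshort, List.length_append, List.length_singleton] at hle
    rw [← hlen, List.length_cons, List.length_append, List.length_singleton]
    exact Nat.lt_succ_of_le hle
  exact (hmin _).not_gt hlt

theorem card_le_of_commute_ne_one [∀ i, Finite (G i)] {M : ℕ} (hG : ∀ i, Nat.card (G i) ≤ 2 * M + 1)
    {w : CoprodI G} (hw : w ≠ 1) {T : Finset (CoprodI G)} (hT : ∀ u ∈ T, syllableLength u ≤ M)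
    (hcomm : ∀ u ∈ T, Commute u w) : T.card ≤ 2 * M + 1 := by
  rcases exists_conj_of_or_conj_cyclicallyReduced hw with ⟨h, i, m, rfl⟩ | ⟨h, l, hl, hcyc, rfl⟩
  · have hm : m ≠ 1 := by
      rintro rfl
      simp at hw
    exact (card_le_of_commute_conj_of hm hcomm).trans (hG i)
  · set k := 3 * M + 2 * syllableLength h
    have hlong : 3 * M ≤ syllableLength ((h * wordProd l * h⁻¹) ^ k) := by
      have hpow : h⁻¹ * (h * wordProd l * h⁻¹) ^ k * h = wordProd l ^ k := by
        rw [conj_pow]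
        group
      have hlen := hcyc.syllableLength_wordProd_pow k
      have hk : k ≤ k * l.length := Nat.le_mul_of_pos_right k (List.length_pos_iff.2 hl)
      have h₁ := syllableLength_mul_le (h⁻¹ * (h * wordProd l * h⁻¹) ^ k) h
      have h₂ := syllableLength_mul_le h⁻¹ ((h * wordProd l * h⁻¹) ^ k)
      rw [hpow] at h₁
      rw [syllableLength_inv] at h₂
      omega
    exact card_le_of_commute_of_long hlong hT fun u hu => (hcomm u hu).pow_right k

end Centralizers

section Commutators

open scoped Pointwise commutatorElement

variable {Γ : Type*} [Group Γ]

theorem commutatorElement_eq_commutatorElement_iff {s g h : Γ} :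
    ⁅s, g⁆ = ⁅s, h⁆ ↔ Commute s (g⁻¹ * h) := by
  have hcomm (t : Γ) : ⁅s, t⁆ = s * (t * s⁻¹ * t⁻¹) := by
    rw [commutatorElement_def, mul_assoc s, mul_assoc s]
  rw [hcomm, hcomm, mul_right_inj, eq_mul_inv_iff_mul_eq, mul_assoc, mul_assoc,
    ← eq_inv_mul_iff_mul_eq, ← mul_assoc g⁻¹, ← commute_iff_eq, Commute.inv_left_iff]

theorem card_le_card_commute_mul_card_image_commutator [DecidableEq Γ] (s : Γ)
    [DecidablePred (Commute s)] (S : Finset Γ) :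
    S.card ≤ ((S⁻¹ * S).filter (Commute s)).card * (S.image fun t => ⁅s, t⁆).card := by
  refine Finset.card_le_mul_card_image S _ fun z hz => ?_
  obtain ⟨t₀, ht₀, rfl⟩ := Finset.mem_image.1 hz
  refine Finset.card_le_card_of_injOn (t₀⁻¹ * ·) (fun t ht => ?_) (mul_right_injective _).injOn
  obtain ⟨ht, heq⟩ := Finset.mem_filter.1 ht
  exact Finset.mem_filter.2 ⟨Finset.mul_mem_mul (Finset.inv_mem_inv ht₀) ht,
    commutatorElement_eq_commutatorElement_iff.1 heq.symm⟩

end Commutators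

section CommutingCommutators

open Monoid CoprodI
open scoped Pointwise commutatorElement

variable {ι : Type*} {G : ι → Type*} [∀ i, Group (G i)]

theorem syllableLength_commutatorElement_le (g h : CoprodI G) :
    syllableLength ⁅g, h⁆ ≤ 2 * syllableLength g + 2 * syllableLength h := by
  have h₁ := syllableLength_mul_le (g * h * g⁻¹) h⁻¹
  have h₂ := syllableLength_mul_le (g * h) g⁻¹
  have h₃ := syllableLength_mul_le g h
  rw [syllableLength_inv] at h₁ h₂
  rw [commutatorElement_def]
  omega

theorem card_le_of_pairwise_commute [∀ i, Finite (G i)] {M : ℕ}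
    (hG : ∀ i, Nat.card (G i) ≤ 2 * M + 1) {S : Finset (CoprodI G)}
    (hS : ∀ u ∈ S, syllableLength u ≤ M) (hcomm : ∀ s ∈ S, ∀ t ∈ S, Commute s t) :
    S.card ≤ 2 * M + 1 := by
  by_cases hne : ∃ w ∈ S, w ≠ 1
  · obtain ⟨w, hw, hw1⟩ := hne
    exact card_le_of_commute_ne_one hG hw1 hS fun u hu => hcomm u hu w hw
  · push Not at hne
    have := Finset.card_le_one.2 fun s hs t ht => (hne s hs).trans (hne t ht).symm
    omega

theorem card_le_of_commute_commutators [∀ i, Finite (G i)] {N : ℕ}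
    (hG : ∀ i, Nat.card (G i) ≤ 2 * N + 1) {S : Finset (CoprodI G)}
    (hS : ∀ u ∈ S, syllableLength u ≤ N)
    (hcomm : ∀ g₁ ∈ S, ∀ h₁ ∈ S, ∀ g₂ ∈ S, ∀ h₂ ∈ S, Commute ⁅g₁, h₁⁆ ⁅g₂, h₂⁆) :
    S.card ≤ (4 * N + 1) * (8 * N + 1) := by
  classical
  have hG' (i : ι) {M : ℕ} (hNM : N ≤ M) : Nat.card (G i) ≤ 2 * M + 1 := (hG i).trans (by omega)
  by_cases hab : ∀ s ∈ S, ∀ t ∈ S, Commute s t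
  · have hcard := card_le_of_pairwise_commute hG hS hab
    nlinarith
  · push Not at hab
    obtain ⟨s, hs, t, ht, hst⟩ := hab
    have hs1 : s ≠ 1 := by
      rintro rfl
      exact hst (Commute.one_left t)
    have hst1 : ⁅s, t⁆ ≠ 1 := fun h => hst (commutatorElement_eq_one_iff_commute.1 h)
    have hfiber : ((S⁻¹ * S).filter (Commute s)).card ≤ 2 * (2 * N) + 1 := by
      refine card_le_of_commute_ne_one (hG' · (by omega)) hs1 (fun u hu => ?_) fun u hu =>
        (Finset.mem_filter.1 hu).2.symm
      obtain ⟨g, hg, h, hh, rfl⟩ := Finset.mem_mul.1 (Finset.mem_filter.1 hu).1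
      have hlen := syllableLength_mul_le g h
      rw [← syllableLength_inv g] at hlen
      have := hS _ (Finset.mem_inv'.1 hg)
      have := hS h hh
      omega
    have himage : (S.image fun u => ⁅s, u⁆).card ≤ 2 * (4 * N) + 1 := by
      refine card_le_of_commute_ne_one (hG' · (by omega)) hst1
        (Finset.forall_mem_image.2 fun u hu => ?_)
        (Finset.forall_mem_image.2 fun u hu => hcomm s hs u hu s hs t ht)
      have := syllableLength_commutatorElement_le s u
      have := hS s hs
      have := hS u hu
      omega
    calc S.card ≤ _ := card_le_card_commute_mul_card_image_commutator s S
      _ ≤ (2 * (2 * N) + 1) * (2 * (4 * N) + 1) := Nat.mul_le_mul hfiber himage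
      _ = (4 * N + 1) * (8 * N + 1) := by ring

end CommutingCommutators

section Balls

open Monoid CoprodI

variable {ι : Type*} [Fintype ι] [DecidableEq ι] {G : ι → Type*} [∀ i, Group (G i)]
  [∀ i, Fintype (G i)] [∀ i, DecidableEq (G i)]

/-- The reduced words with at most `n` syllables whose first syllable, if any, does not come from
the factor `i`. -/
def reducedWordsAvoiding : ℕ → ι → Finset (List (Σ i, G i))
  | 0, _ => {[]}
  | n + 1, i => insert [] <| (Finset.univ.erase i).biUnion fun j =>
      (Finset.univ.erase (1 : G j)).biUnion fun m =>
        (reducedWordsAvoiding n j).image (⟨j, m⟩ :: ·)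

theorem IsReducedWord.mem_reducedWordsAvoiding {l : List (Σ i, G i)} (hl : IsReducedWord l)
    {n : ℕ} (hn : l.length ≤ n) {i : ι} (hi : ∀ s ∈ l.head?, i ≠ s.1) :
    l ∈ reducedWordsAvoiding n i := by
  induction n generalizing l i with
  | zero =>
    rw [List.length_eq_zero_iff.1 (Nat.le_zero.1 hn), reducedWordsAvoiding]
    exact Finset.mem_singleton_self _
  | succ n ih =>
    rcases l with _ | ⟨⟨j, m⟩, l⟩
    · exact Finset.mem_insert_self _ _
    obtain ⟨hm, hhead, htail⟩ := isReducedWord_cons.1 hl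
    have hj : j ≠ i := (hi ⟨j, m⟩ rfl).symm
    simp only [reducedWordsAvoiding, Finset.mem_insert, Finset.mem_biUnion, Finset.mem_image]
    exact .inr ⟨j, Finset.mem_erase.2 ⟨hj, Finset.mem_univ j⟩, m,
      Finset.mem_erase.2 ⟨hm, Finset.mem_univ m⟩, l, ih htail (Nat.le_of_succ_le_succ hn) hhead,
      rfl⟩

theorem card_reducedWordsAvoiding_succ_le (n : ℕ) (i : ι) :
    (reducedWordsAvoiding (G := G) (n + 1) i).card ≤
      ∑ j ∈ Finset.univ.erase i,
        (Fintype.card (G j) - 1) * (reducedWordsAvoiding (G := G) n j).card + 1 := by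
  rw [reducedWordsAvoiding]
  refine (Finset.card_insert_le _ _).trans (Nat.succ_le_succ ?_)
  refine Finset.card_biUnion_le.trans (Finset.sum_le_sum fun j _ => ?_)
  rw [← Finset.card_univ, ← Finset.card_erase_of_mem (Finset.mem_univ (1 : G j))]
  exact Finset.card_biUnion_le_card_mul _ _ _ fun m _ => Finset.card_image_le

theorem card_le_sum_card_reducedWordsAvoiding [Nontrivial ι] {n : ℕ} {T : Finset (CoprodI G)}
    (hT : ∀ u ∈ T, syllableLength u ≤ n) :
    T.card ≤ ∑ i, (reducedWordsAvoiding (G := G) n i).card := by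
  rw [← Finset.card_image_of_injective T syllables_injective]
  refine (Finset.card_le_card fun l hl => ?_).trans Finset.card_biUnion_le
  obtain ⟨u, hu, rfl⟩ := Finset.mem_image.1 hl
  obtain ⟨i, hi⟩ : ∃ i, ∀ s ∈ (syllables u).head?, i ≠ s.1 := by
    rcases (syllables u).head? with _ | s
    · exact ⟨Classical.arbitrary ι, by simp⟩
    · obtain ⟨i, hi⟩ := exists_ne s.1
      exact ⟨i, by simpa using hi⟩
  exact Finset.mem_biUnion.2
    ⟨i, Finset.mem_univ i, (isReducedWord_syllables u).mem_reducedWordsAvoiding (hT u hu) hi⟩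

theorem card_le_of_syllableLength_le_six {G : Bool → Type*} [∀ i, Group (G i)]
    (hfalse : Nat.card (G false) = 2) (htrue : Nat.card (G true) = 3)
    {T : Finset (CoprodI G)} (hT : ∀ u ∈ T, syllableLength u ≤ 6) : T.card ≤ 51 := by
  classical
  have hfin : ∀ i, Finite (G i)
    | false => Nat.finite_of_card_ne_zero (by omega)
    | true => Nat.finite_of_card_ne_zero (by omega)
  have (i : Bool) := Fintype.ofFinite (G i)
  rw [Nat.card_eq_fintype_card] at hfalse htrue
  let c (n : ℕ) (i : Bool) : ℕ := (reducedWordsAvoiding (G := G) n i).card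
  have hstep {n x y : ℕ} (h : c n false ≤ x ∧ c n true ≤ y) :
      c (n + 1) false ≤ 2 * y + 1 ∧ c (n + 1) true ≤ x + 1 := by
    have hf := card_reducedWordsAvoiding_succ_le (G := G) n false
    have ht := card_reducedWordsAvoiding_succ_le (G := G) n true
    rw [show Finset.univ.erase false = {true} from rfl, Finset.sum_singleton, htrue] at hf
    rw [show Finset.univ.erase true = {false} from rfl, Finset.sum_singleton, hfalse] at ht
    exact ⟨by linarith, by linarith⟩
  have hzero : c 0 false ≤ 1 ∧ c 0 true ≤ 1 := ⟨le_rfl, le_rfl⟩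
  have hsix : c 6 false ≤ 29 ∧ c 6 true ≤ 22 :=
    hstep <| hstep <| hstep <| hstep <| hstep <| hstep hzero
  calc T.card ≤ ∑ i, c 6 i := card_le_sum_card_reducedWordsAvoiding hT
    _ = c 6 true + c 6 false := Fintype.sum_bool _
    _ ≤ 51 := by omega

end Balls

section Transfer

open Monoid

/-- A binary free product as the free product of a family indexed by `Bool`. -/
def coprodEquivCoprodI (M : Bool → Type*) [∀ i, Monoid (M i)] :
    Coprod (M false) (M true) ≃* CoprodI M :=
  MonoidHom.toMulEquiv (Coprod.lift CoprodI.of CoprodI.of)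
    (CoprodI.lift fun
      | false => Coprod.inl
      | true => Coprod.inr)
    (Coprod.hom_ext (by ext; simp) (by ext; simp))
    (CoprodI.ext_hom _ _ fun
      | false => by ext; simp
      | true => by ext; simp)

theorem syllableLength_prod_le {ι : Type*} {G : ι → Type*} [∀ i, Group (G i)]
    {l : List (CoprodI G)} (hl : ∀ x ∈ l, ∃ i, ∃ m : G i, CoprodI.of m = x) :
    syllableLength l.prod ≤ l.length := by
  induction l with
  | nil => exact syllableLength_wordProd_le []
  | cons x l ih =>
    obtain ⟨⟨i, m, rfl⟩, htail⟩ := List.forall_mem_cons.1 hl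
    have hone : syllableLength (CoprodI.of m) ≤ 1 := by
      simpa only [wordProd_singleton, List.length_singleton] using
        syllableLength_wordProd_le [(⟨i, m⟩ : Σ i, G i)]
    calc syllableLength (CoprodI.of m :: l).prod
        ≤ syllableLength (CoprodI.of m) + syllableLength l.prod := by
          simpa only [List.prod_cons] using syllableLength_mul_le (CoprodI.of m) l.prod
      _ ≤ 1 + l.length := Nat.add_le_add hone (ih htail)
      _ = (CoprodI.of m :: l).length := by rw [List.length_cons, add_comm]

/-- The orders of the factors of `ℤ/2ℤ ∗ ℤ/3ℤ`. -/
abbrev factorOrder : Bool → ℕ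
  | false => 2
  | true => 3

/-- The factors of `ℤ/2ℤ ∗ ℤ/3ℤ` as a family, so that the group structure is found uniformly in
the index. -/
abbrev Factor (i : Bool) : Type := Multiplicative (ZMod (factorOrder i))

/-- `Gfp` as the free product of the family of its factors. -/
def gfpEquiv : Gfp ≃* CoprodI Factor :=
  coprodEquivCoprodI Factor

instance (i : Bool) : Finite (Factor i) :=
  match i with
  | false => inferInstanceAs (Finite (ZMod 2))
  | true => inferInstanceAs (Finite (ZMod 3))

theorem card_factor (i : Bool) : Nat.card (Factor i) = factorOrder i :=
  Nat.card_zmod _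

theorem exists_of_eq_gfpEquiv {x : Gfp} (hx : x ∈ genSet) :
    ∃ i, ∃ m : Factor i, CoprodI.of m = gfpEquiv x := by
  rcases hx with rfl | rfl | rfl | rfl
  · exact ⟨false, Multiplicative.ofAdd (1 : ZMod 2), rfl⟩
  · exact ⟨false, (Multiplicative.ofAdd (1 : ZMod 2))⁻¹, rfl⟩
  · exact ⟨true, Multiplicative.ofAdd (1 : ZMod 3), rfl⟩
  · exact ⟨true, (Multiplicative.ofAdd (1 : ZMod 3))⁻¹, rfl⟩

theorem syllableLength_gfpEquiv_le {r : ℝ} {g : Gfp} (hg : g ∈ ballW r) :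
    syllableLength (gfpEquiv g) ≤ ⌊r⌋₊ := by
  obtain ⟨l, hlen, hgen, rfl⟩ := hg
  have hle := syllableLength_prod_le (l := l.map gfpEquiv)
    (List.forall_mem_map.2 fun x hx => exists_of_eq_gfpEquiv (hgen x hx))
  rw [← map_list_prod, List.length_map] at hle
  exact Nat.le_floor ((Nat.cast_le.2 hle).trans hlen)

theorem card_le_of_subset_ballW_of_lt_seven {r : ℝ} (hr : r < 7) {S : Finset Gfp}
    (hS : ↑S ⊆ ballW r) : S.card ≤ 51 := by
  rw [← Finset.card_map gfpEquiv.toEquiv.toEmbedding]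
  refine card_le_of_syllableLength_le_six (card_factor false) (card_factor true)
    (Finset.forall_mem_map.2 fun g hg => (syllableLength_gfpEquiv_le (hS hg)).trans ?_)
  exact Nat.le_of_lt_succ ((Nat.floor_lt' (by norm_num)).2 (mod_cast hr))

open scoped commutatorElement in
theorem card_le_of_subset_ballW_of_commute_commSet {r : ℝ} (hr : 1 ≤ r) {S : Finset Gfp}
    (hS : ↑S ⊆ ballW r)
    (hcomm : ∀ z₁ ∈ commSet ↑S ↑S, ∀ z₂ ∈ commSet ↑S ↑S, z₁ * z₂ = z₂ * z₁) :
    S.card ≤ (4 * ⌊r⌋₊ + 1) * (8 * ⌊r⌋₊ + 1) := by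
  rw [← Finset.card_map gfpEquiv.toEquiv.toEmbedding]
  refine card_le_of_commute_commutators (fun i => ?_)
    (Finset.forall_mem_map.2 fun g hg => syllableLength_gfpEquiv_le (hS hg)) ?_
  · have hfactor : factorOrder i ≤ 3 := by cases i <;> decide
    have hfloor : 1 ≤ ⌊r⌋₊ := Nat.le_floor (mod_cast hr)
    rw [card_factor]
    omega
  · simp only [Finset.forall_mem_map]
    intro g₁ hg₁ h₁ hh₁ g₂ hg₂ h₂ hh₂
    have hcommute : Commute ⁅g₁, h₁⁆ ⁅g₂, h₂⁆ :=
      hcomm _ ⟨g₁, hg₁, h₁, hh₁, rfl⟩ _ ⟨g₂, hg₂, h₂, hh₂, rfl⟩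
    simpa only [map_commutatorElement, MulEquiv.toEquiv_eq_coe, Equiv.coe_toEmbedding,
      MulEquiv.coe_toEquiv] using hcommute.map gfpEquiv

end Transfer

theorem four_mul_add_one_mul_eight_mul_add_one_lt {R N : ℝ} (hN : 0 ≤ N) (hNR : N ≤ 2 * R)
    (hR : 7 / 2 ≤ R) : (4 * N + 1) * (8 * N + 1) < R ^ 6 := by
  have hpow : (7 / 2 : ℝ) ^ 4 ≤ R ^ 4 := by gcongr
  calc (4 * N + 1) * (8 * N + 1) ≤ (4 * (2 * R) + 1) * (8 * (2 * R) + 1) := by gcongr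
    _ < (7 / 2) ^ 4 * R ^ 2 := by nlinarith
    _ ≤ R ^ 4 * R ^ 2 := by gcongr
    _ = R ^ 6 := by ring

/-- **Sets with commuting commutators are small.** If `R > 2` and `S ⊆ B_{2R}(e)` is such
that `[[S,S],[S,S]] = {e}`, i.e. every two elements of the commutator set `[S,S]` commute,
then `|S| < R⁶`. -/
theorem vanishing_second_commutator (R : ℝ) (hR : 2 < R) (S : Finset Gfp)
    (hS : ↑S ⊆ ballW (2 * R))
    (hcomm : ∀ z₁ ∈ commSet ↑S ↑S, ∀ z₂ ∈ commSet ↑S ↑S, z₁ * z₂ = z₂ * z₁) :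
    (S.card : ℝ) < R ^ 6 := by
  rcases lt_or_ge R (7 / 2) with hsmall | hlarge
  · have hcard : S.card ≤ 51 := card_le_of_subset_ballW_of_lt_seven (by linarith) hS
    calc (S.card : ℝ) ≤ 51 := mod_cast hcard
      _ < 2 ^ 6 := by norm_num
      _ < R ^ 6 := by gcongr
  · have hcard : S.card ≤ (4 * ⌊2 * R⌋₊ + 1) * (8 * ⌊2 * R⌋₊ + 1) :=
      card_le_of_subset_ballW_of_commute_commSet (by linarith) hS hcomm
    calc (S.card : ℝ) ≤ (4 * ⌊2 * R⌋₊ + 1) * (8 * ⌊2 * R⌋₊ + 1) := mod_cast hcard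
      _ < R ^ 6 := four_mul_add_one_mul_eight_mul_add_one_lt (Nat.cast_nonneg _)
        (Nat.floor_le (by linarith)) hlarge
end

section
/- Let κ ≥ 1 and D > 1, and let S ⊂ SL₂(ℤ) be a finite set whose images in PSL₂(ℤ) freely generate a free semigroup. Then there exists c = c(κ, D, S) > 0 such that for every ε > 0 there is C(ε) > 0 with the following property: for every integer q ≥ 2 in whose prime factorization no prime occurs with exponent > κ, every divisor q' of q with q' ≥ q^{1/D}, every subgroup H ≤ SL₂(ℤ/q'ℤ) whose projection to SL₂(ℤ/pℤ) is a proper subgroup for each prime p | q', and every coset aH in SL₂(ℤ/q'ℤ), one has ν_{q'}^{(⌈c log q⌉)}(aH) ≤ C(ε) q^ε. -/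
/-- `SL₂(ℤ)`. -/
abbrev SL2Z := Matrix.SpecialLinearGroup (Fin 2) ℤ

/-- The element `g_a g_{a'} = [[0,1],[1,a]]·[[0,1],[1,a']] = [[1,a'],[a,aa'+1]]` of `SL₂(ℤ)`. -/
def gPair (a a' : ℕ) : SL2Z :=
  ⟨!![1, (a' : ℤ); (a : ℤ), (a : ℤ) * (a' : ℤ) + 1], by
    simp [Matrix.det_fin_two_of]; ring⟩

/-- The generating set `S_A = {g_a g_{a'} : a, a' ∈ A}` of the semigroup `Γ_A`. -/
def gensSet (A : Finset ℕ) : Set SL2Z := {g | ∃ a ∈ A, ∃ a' ∈ A, g = gPair a a'}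

/-- The semigroup `Γ_A ⊂ SL₂(ℤ)`: all nonempty products of the generators `g_a g_{a'}`. -/
def GammaA (A : Finset ℕ) : Set SL2Z :=
  {g | ∃ l : List SL2Z, l ≠ [] ∧ (∀ x ∈ l, x ∈ gensSet A) ∧ l.prod = g}

/-- Reduction modulo `q`, `SL₂(ℤ) →* SL₂(ℤ/qℤ)`. -/
def modq (q : ℕ) : SL2Z →* Matrix.SpecialLinearGroup (Fin 2) (ZMod q) :=
  Matrix.SpecialLinearGroup.map (Int.castRingHom (ZMod q))

/-- Projection `SL₂(ℤ) → PSL₂(ℤ)` (quotient by the center). -/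
def PSLproj : SL2Z →* SL2Z ⧸ Subgroup.center SL2Z :=
  QuotientGroup.mk' (Subgroup.center SL2Z)

/-- The images of `S` in `PSL₂(ℤ)` freely generate a free semigroup: the evaluation map
from nonempty words over `S` to `PSL₂(ℤ)` is injective. -/
def FreelyGeneratesPSL (S : Set SL2Z) : Prop :=
  ∀ l₁ l₂ : List SL2Z, l₁ ≠ [] → l₂ ≠ [] → (∀ x ∈ l₁, x ∈ S) → (∀ x ∈ l₂, x ∈ S) →
    PSLproj l₁.prod = PSLproj l₂.prod → l₁ = l₂

/-
If `G` is a proper subgroup of `SL₂(𝔽_p)`, then all commutators `⁅a ^ 60, b ^ 60⁆` with `a, b ∈ G`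
commute with each other, because they fix a common nonzero vector: when `p ∣ |G|`, all of `G`
preserves the line fixed by an element of order `p`; otherwise every noncentral element of `G` has
exactly two fixed points on the projective line over the algebraic closure, and counting orbits with
Burnside's lemma leaves a line preserved by all sixtieth powers. This law has bounded length, and
the entries of a word of length `c log q` are smaller than a small power of `q'`, so if it holds
modulo every `p ∣ q'` for words that reduce into `H`, then it holds over `ℤ`. In `Γ(3)`, where
commuting with a given nontrivial element is a transitive relation, it forces the words to commute.

After a translation, words that reduce into `aH` and agree modulo `3` form a set of commuting
elements of `Γ(3)`. Such a set has only linearly many elements in a ball of the word metric: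
logarithms of eigenvalues separate hyperbolic elements, and the number of steps of the subtractive
Euclidean algorithm separates parabolic ones. Freeness turns this count of matrices into a count of
words, which is therefore `O(log q)`.
-/

open Matrix hiding transvection mul_inv_rev
open Matrix.SpecialLinearGroup (transvection transvection_add coeMonoidHom coeMonoidHom_injective)
open scoped LinearAlgebra.Projectivization MatrixGroups commutatorElement CongruenceSubgroup
open scoped Pointwise

section TwoFixedPoints

open MulAction

lemma orbit_size_le_two {ι : Type*} [Fintype ι] {o r : ι → ℕ} {n : ℕ}
    (hor : ∀ i, o i * r i = n) (hr : ∀ i, 2 ≤ r i)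
    (hsum : Fintype.card ι * n + 2 = ∑ i, o i + 2 * n) {i : ι} (hi : 6 ≤ r i) : o i ≤ 2 := by
  classical
  have two_mul_le : ∀ j, o j * 2 ≤ n := fun j ↦ hor j ▸ Nat.mul_le_mul_left _ (hr j)
  have sum_le : (∑ j, o j) * 2 ≤ Fintype.card ι * n := by
    rw [Finset.sum_mul, ← smul_eq_mul]
    exact Finset.sum_le_card_nsmul _ _ _ fun j _ ↦ two_mul_le j
  have six_mul_le : o i * 6 ≤ n := hor i ▸ Nat.mul_le_mul_left _ hi
  have le_sum : o i ≤ ∑ j, o j := Finset.single_le_sum (fun _ _ ↦ Nat.zero_le _) (Finset.mem_univ i)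
  have card_pos : 0 < Fintype.card ι := Fintype.card_pos_iff.2 ⟨i⟩
  have card_lt : Fintype.card ι < 4 := by
    by_contra! hcard
    have := Nat.mul_le_mul_right n hcard
    omega
  interval_cases hcard : Fintype.card ι
  · omega
  · omega
  · have card_others : (Finset.univ.erase i).card = 2 := by
      rw [Finset.card_erase_of_mem (Finset.mem_univ i), Finset.card_univ, hcard]
    obtain ⟨a, b, hab, hothers⟩ := Finset.card_eq_two.1 card_others
    rw [← Finset.add_sum_erase _ _ (Finset.mem_univ i), hothers, Finset.sum_pair hab] at hsum
    have two_or_three : ∀ j, o j * 2 = n ∨ o j * 3 ≤ n := fun j ↦ by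
      rcases (hr j).eq_or_lt with h | h
      · exact .inl (h ▸ hor j)
      · exact .inr (hor j ▸ Nat.mul_le_mul_left _ h)
    have := two_mul_le a
    have := two_mul_le b
    rcases two_or_three a with ha | ha <;> rcases two_or_three b with hb | hb <;> omega

variable {G X : Type*} [Group G] [Finite G] [MulAction G X]

lemma card_orbits_mul_card_group [Finite X] (h : ∀ g : G, g ≠ 1 → (fixedBy X g).ncard = 2) :
    Nat.card (orbitRel.Quotient G X) * Nat.card G + 2 = Nat.card X + 2 * Nat.card G := by
  classical
  have := Fintype.ofFinite G
  have := Fintype.ofFinite X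
  have burnside := sum_card_fixedBy_eq_card_orbits_mul_card_group G X
  simp only [← Nat.card_eq_fintype_card, Nat.card_coe_set_eq] at burnside
  rw [← Finset.add_sum_erase _ _ (Finset.mem_univ (1 : G)),
    Finset.sum_congr rfl fun g hg ↦ h g (Finset.ne_of_mem_erase hg), Finset.sum_const,
    Finset.card_erase_of_mem (Finset.mem_univ _), Finset.card_univ, fixedBy_one_eq_univ,
    Set.ncard_univ, smul_eq_mul, ← Nat.card_eq_fintype_card] at burnside
  have : 0 < Nat.card G := Nat.card_pos
  rw [← burnside]
  omega

lemma index_stabilizer_le_two_of_finite [Finite X]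
    (h : ∀ g : G, g ≠ 1 → (fixedBy X g).ncard = 2) (hX : ∀ x : X, stabilizer G x ≠ ⊥)
    {x : X} (hx : 6 ≤ Nat.card (stabilizer G x)) : (stabilizer G x).index ≤ 2 := by
  have := Fintype.ofFinite (orbitRel.Quotient G X)
  let orbitCard (ω : orbitRel.Quotient G X) : ℕ := Nat.card ω.orbit
  have orbitCard_mk (y : X) : orbitCard ⟦y⟧ = (stabilizer G y).index := by
    rw [index_stabilizer, ← Nat.card_coe_set_eq]
    exact congrArg (fun s : Set X ↦ Nat.card s) (orbitRel.Quotient.orbit_mk y)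
  have card_div (y : X) : Nat.card G / orbitCard ⟦y⟧ = Nat.card (stabilizer G y) := by
    rw [orbitCard_mk, ← Subgroup.card_mul_index (stabilizer G y),
      Nat.mul_div_cancel _ (Nat.pos_of_ne_zero Subgroup.index_ne_zero_of_finite)]
  have card_X : Nat.card X = ∑ ω, orbitCard ω := by
    rw [Nat.card_congr (selfEquivSigmaOrbits' G X), Nat.card_sigma]
  have burnside := card_orbits_mul_card_group h
  rw [card_X, Nat.card_eq_fintype_card (α := orbitRel.Quotient G X)] at burnside
  rw [← orbitCard_mk]
  refine orbit_size_le_two (r := fun ω ↦ Nat.card G / orbitCard ω) (Quotient.ind fun y ↦ ?_)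
    (Quotient.ind fun y ↦ ?_) burnside ?_
  · rw [card_div, orbitCard_mk, Subgroup.index_mul_card]
  · rw [card_div]
    exact (stabilizer G y).one_lt_card_iff_ne_bot.2 (hX y)
  · rwa [card_div]

end TwoFixedPoints

section FixedByPowers

open MulAction

variable {G X : Type*} [Group G] [MulAction G X]

variable (G X) in
/-- The invariant set of points with nontrivial stabilizer; it carries all fixed points of the
nontrivial elements of `G`. -/
def nontrivialStabilizers : SubMulAction G X where
  carrier := {x | stabilizer G x ≠ ⊥}
  smul_mem' g x hx := by
    rw [Set.mem_ofPred_eq, stabilizer_smul_eq_stabilizer_map_conj, Ne,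
      Subgroup.map_eq_bot_iff_of_injective _ (MulAut.conj g).injective]
    exact hx

lemma mem_nontrivialStabilizers {g : G} (hg : g ≠ 1) {x : X} (hx : g • x = x) :
    x ∈ nontrivialStabilizers G X := fun h ↦
  hg (Subgroup.mem_bot.1 (h ▸ mem_stabilizer_iff.2 hx))

lemma finite_nontrivialStabilizers [Finite G]
    (h : ∀ g : G, g ≠ 1 → (fixedBy X g).ncard = 2) : Finite (nontrivialStabilizers G X) := by
  refine Set.Finite.subset (s := ⋃ g ∈ ({1}ᶜ : Set G), fixedBy X g)
    ((Set.toFinite _).biUnion fun g hg ↦ Set.finite_of_ncard_pos (by simp [h g hg])) fun x hx ↦ ?_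
  obtain ⟨⟨g, hgx⟩, hg⟩ := Subgroup.ne_bot_iff_exists_ne_one.1 hx
  exact Set.mem_biUnion (fun hg1 ↦ hg (Subtype.ext hg1)) hgx

lemma ncard_fixedBy_nontrivialStabilizers {g : G} (hg : g ≠ 1) :
    (fixedBy (nontrivialStabilizers G X) g).ncard = (fixedBy X g).ncard := by
  rw [← Set.ncard_image_of_injective _ Subtype.val_injective]
  congr 1
  ext x
  constructor
  · rintro ⟨y, hy, rfl⟩
    exact congrArg Subtype.val hy
  · exact fun hx ↦ ⟨⟨x, mem_nontrivialStabilizers hg hx⟩, Subtype.ext hx, rfl⟩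

lemma index_stabilizer_le_two [Finite G] (h : ∀ g : G, g ≠ 1 → (fixedBy X g).ncard = 2) {x : X}
    (hx : 6 ≤ Nat.card (stabilizer G x)) : (stabilizer G x).index ≤ 2 := by
  have := finite_nontrivialStabilizers h
  have hxX : stabilizer G x ≠ ⊥ := fun hbot ↦ by simp [hbot] at hx
  let x' : nontrivialStabilizers G X := ⟨x, hxX⟩
  rw [← SubMulAction.stabilizer_of_subMul x'] at hx ⊢
  refine index_stabilizer_le_two_of_finite
    (fun g hg ↦ (ncard_fixedBy_nontrivialStabilizers hg).trans (h g hg)) (fun y ↦ ?_) hx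
  rw [SubMulAction.stabilizer_of_subMul y]
  exact y.2

-- `60` is a common multiple of the possible orders `1, …, 5` of small stabilizers and of `2`.
lemma exists_pow_sixty_smul_eq [Finite G] [Nonempty X]
    (h : ∀ g : G, g ≠ 1 → (fixedBy X g).ncard = 2) : ∃ x : X, ∀ g : G, g ^ 60 • x = x := by
  by_cases hx : ∃ x : X, 6 ≤ Nat.card (stabilizer G x)
  · obtain ⟨x, hx⟩ := hx
    have index_le := index_stabilizer_le_two h hx
    refine ⟨x, fun g ↦ mem_stabilizer_iff.1 (Subgroup.pow_mem_of_index_ne_zero_of_dvd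
      Subgroup.index_ne_zero_of_finite g fun m hm hmle ↦ ?_)⟩
    have : m ≤ 2 := hmle.trans index_le
    interval_cases m <;> norm_num
  · push Not at hx
    refine ⟨Classical.arbitrary X, fun g ↦ ?_⟩
    suffices g ^ 60 = 1 by rw [this, one_smul]
    by_cases hg : g = 1
    · rw [hg, one_pow]
    · obtain ⟨x, hgx⟩ := Set.nonempty_of_ncard_ne_zero (h g hg ▸ two_ne_zero)
      have order_le : orderOf g ≤ 5 := Nat.lt_succ_iff.1 <|
        (Nat.le_of_dvd Nat.card_pos (Subgroup.orderOf_dvd_natCard _ hgx)).trans_lt (hx x)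
      refine orderOf_dvd_iff_pow_eq_one.1 ?_
      have := orderOf_pos g
      interval_cases orderOf g <;> norm_num

end FixedByPowers

section Eigenvectors

variable {F : Type*} [Field F] {g : SL(2, F)}

lemma det_fin_two_eq_one {R : Type*} [CommRing R] (g : SL(2, R)) :
    g 0 0 * g 1 1 - g 0 1 * g 1 0 = 1 := by
  rw [← det_fin_two, g.det_coe]

lemma exists_eigenvector {l : F} (hl : l ^ 2 - g.1.trace * l + 1 = 0) :
    ∃ v : Fin 2 → F, v ≠ 0 ∧ g • v = l • v := by
  have det_eq_zero : (g.1 - l • (1 : Matrix (Fin 2) (Fin 2) F)).det = 0 := by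
    rw [trace_fin_two] at hl
    simp only [det_fin_two, Matrix.sub_apply, Matrix.smul_apply, Matrix.one_fin_two, of_apply,
      cons_val, smul_eq_mul]
    linear_combination hl + det_fin_two_eq_one g
  obtain ⟨v, hv, h⟩ := exists_mulVec_eq_zero_iff.2 det_eq_zero
  rw [sub_mulVec, smul_mulVec, one_mulVec, sub_eq_zero] at h
  exact ⟨v, hv, h⟩

lemma exists_eigenvectors [IsAlgClosed F] (hg : g.1.trace ^ 2 ≠ 4) :
    ∃ (l m : F) (v w : Fin 2 → F),
      l ≠ m ∧ v ≠ 0 ∧ w ≠ 0 ∧ g • v = l • v ∧ g • w = m • w := by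
  obtain ⟨l, hl⟩ : ∃ l : F, l ^ 2 - g.1.trace * l + 1 = 0 := by
    simpa [charpoly_fin_two] using
      IsAlgClosed.exists_root g.1.charpoly (by simp [charpoly_degree_eq_dim])
  set m := g.1.trace - l with hm
  have hlm : l ≠ m := fun h ↦ hg (by linear_combination -(g.1.trace - 2 * l) * (h + hm) - 4 * hl)
  obtain ⟨v, hv, hgv⟩ := exists_eigenvector (g := g) (l := l) (by linear_combination hl)
  obtain ⟨w, hw, hgw⟩ := exists_eigenvector (g := g) (l := m) (by linear_combination hl)
  exact ⟨l, m, v, w, hlm, hv, hw, hgv, hgw⟩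

lemma smul_mk_eq_mk_iff (g : SL(2, F)) {v : Fin 2 → F} (hv : v ≠ 0) :
    g • Projectivization.mk F v hv = Projectivization.mk F v hv ↔ ∃ l : F, g • v = l • v := by
  rw [Projectivization.smul_mk, Projectivization.mk_eq_mk_iff']
  simp only [eq_comm]

lemma ncard_fixedBy_eq_two [IsAlgClosed F] (hg : g.1.trace ^ 2 ≠ 4) :
    (MulAction.fixedBy (ℙ F (Fin 2 → F)) g).ncard = 2 := by
  obtain ⟨l, m, v, w, hlm, hv, hw, hgv, hgw⟩ := exists_eigenvectors hg
  have hvw : LinearIndependent F ![v, w] := by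
    rw [LinearIndependent.pair_iff' hv]
    rintro a rfl
    rw [smul_comm g a v, hgv, smul_comm a l v] at hgw
    exact hlm (smul_left_injective F hw hgw)
  have span_eq_top : Submodule.span F {w, v} = ⊤ := by
    simpa using hvw.span_eq_top_of_card_eq_finrank' (by simp)
  refine Set.ncard_eq_two.2 ⟨.mk F v hv, .mk F w hw, ?_, Set.Subset.antisymm ?_ ?_⟩
  · rw [Ne, eq_comm, Projectivization.mk_eq_mk_iff']
    exact not_exists.2 ((LinearIndependent.pair_iff' hv).1 hvw)
  · intro x hx
    induction x using Projectivization.ind with | h x hx0 =>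
    obtain ⟨r, hr⟩ := (smul_mk_eq_mk_iff g hx0).1 hx
    obtain ⟨b, a, rfl⟩ := Submodule.mem_span_pair.1 (span_eq_top ▸ Submodule.mem_top (x := x))
    have combination_eq_zero : (a * (l - r)) • v + (b * (m - r)) • w = 0 := by
      rw [smul_add, smul_comm g, smul_comm g, hgv, hgw] at hr
      rw [← sub_eq_zero] at hr
      rw [← hr]
      module
    obtain ⟨ha, hb⟩ := LinearIndependent.pair_iff.1 hvw _ _ combination_eq_zero
    rcases mul_eq_zero.1 ha with rfl | hlr
    · exact .inr ((Projectivization.mk_eq_mk_iff' ..).2 ⟨b, by simp⟩)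
    · have hmr : m - r ≠ 0 := sub_eq_zero.1 hlr ▸ sub_ne_zero.2 hlm.symm
      obtain rfl := (mul_eq_zero.1 hb).resolve_right hmr
      exact .inl ((Projectivization.mk_eq_mk_iff' ..).2 ⟨a, by simp⟩)
  · rintro x (rfl | rfl)
    exacts [(smul_mk_eq_mk_iff g hv).2 ⟨l, hgv⟩, (smul_mk_eq_mk_iff g hw).2 ⟨m, hgw⟩]

open MulAction in
lemma ncard_fixedBy_toPermHom_range {G : Subgroup SL(2, F)} [IsAlgClosed F]
    (hG : ∀ g ∈ G, g.1.trace ^ 2 = 4 → g ∈ Subgroup.center SL(2, F))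
    {σ : (toPermHom G (ℙ F (Fin 2 → F))).range} (hσ : σ ≠ 1) :
    (fixedBy (ℙ F (Fin 2 → F)) σ).ncard = 2 := by
  obtain ⟨_, g, rfl⟩ := σ
  refine ncard_fixedBy_eq_two (g := g.1) fun htr ↦ hσ (Subtype.ext ?_)
  have := hG g g.2 htr
  rw [← Projectivization.SL_mulAction_ker] at this
  exact this

lemma exists_forall_pow_sixty_smul_eq {G : Subgroup SL(2, F)} [IsAlgClosed F] [Finite G]
    (hG : ∀ g ∈ G, g.1.trace ^ 2 = 4 → g ∈ Subgroup.center SL(2, F)) :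
    ∃ v : Fin 2 → F, v ≠ 0 ∧ ∀ g ∈ G, ∃ l : F, g ^ 60 • v = l • v := by
  have : Finite (MulAction.toPermHom G (ℙ F (Fin 2 → F))).range :=
    Finite.of_surjective _ (MonoidHom.rangeRestrict_surjective _)
  obtain ⟨x, hx⟩ := exists_pow_sixty_smul_eq fun _ ↦ ncard_fixedBy_toPermHom_range hG
  induction x using Projectivization.ind with | h v hv =>
  refine ⟨v, hv, fun g hg ↦ (smul_mk_eq_mk_iff _ hv).1 ?_⟩
  have hgx := hx (MonoidHom.rangeRestrict _ ⟨g, hg⟩)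
  rw [← map_pow] at hgx
  exact hgx

end Eigenvectors

section CoprimeOrder

lemma coe_sq_eq_trace_smul_sub_one {R : Type*} [CommRing R] [Nontrivial R] (g : SL(2, R)) :
    g.1 ^ 2 = g.1.trace • g.1 - 1 := by
  have := aeval_self_charpoly g.1
  simp only [charpoly_fin_two, g.det_coe, map_one, map_add, map_sub, map_pow, map_mul,
    Polynomial.aeval_X, Polynomial.aeval_C, ← Algebra.smul_def] at this
  rw [← sub_eq_zero, ← this]
  module

variable {F : Type*} [Field F] {p : ℕ} [Fact p.Prime] [CharP F p]

lemma mem_center_of_coe_eq_smul_one {n R : Type*} [DecidableEq n] [Fintype n] [CommRing R]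
    {g : SpecialLinearGroup n R} {r : R} (hg : g.1 = r • 1) :
    g ∈ Subgroup.center (SpecialLinearGroup n R) :=
  Subgroup.mem_center_iff.2 fun h ↦ Subtype.ext <| by simp [hg]

lemma mem_center_of_trace_sq_eq_four {g : SL(2, F)} (hg : p.Coprime (orderOf g))
    (htr : g.1.trace ^ 2 = 4) : g ∈ Subgroup.center SL(2, F) := by
  have hp : p.Prime := Fact.out
  obtain ⟨l, hl, hl2⟩ : ∃ l : F, g.1.trace = 2 * l ∧ l ^ 2 = 1 := by
    rcases sq_eq_sq_iff_eq_or_eq_neg.1 (htr.trans (by norm_num : (4 : F) = 2 ^ 2)) with h | h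
    exacts [⟨1, by simp [h]⟩, ⟨-1, by simp [h]⟩]
  have hcomm : Commute g.1 (l • (1 : Matrix (Fin 2) (Fin 2) F)) :=
    (Commute.one_right _).smul_right _
  have sub_sq : (g.1 - l • 1) ^ 2 = 0 := by
    rw [hcomm.sub_sq, coe_sq_eq_trace_smul_sub_one, hl, smul_pow, hl2, mul_smul_comm, mul_one,
      one_pow, two_mul g.1]
    module
  have pow_eq : g.1 ^ p = l ^ p • 1 := by
    have := pow_eq_zero_of_le hp.two_le sub_sq
    rwa [sub_pow_char_of_commute _ hcomm, smul_pow, one_pow, sub_eq_zero] at this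
  obtain ⟨m, hm⟩ := exists_pow_eq_self_of_coprime hg
  rw [← hm]
  exact pow_mem (mem_center_of_coe_eq_smul_one pow_eq) m

end CoprimeOrder

section FixedVectors

lemma smul_fin_two {R : Type*} [CommRing R] (g : SL(2, R)) (v : Fin 2 → R) :
    g • v = ![g 0 0 * v 0 + g 0 1 * v 1, g 1 0 * v 0 + g 1 1 * v 1] := by
  ext i
  fin_cases i <;> simp [Matrix.SpecialLinearGroup.smul_def, smul_eq_mulVec]

lemma smul_single_apply {R : Type*} [CommRing R] (g : SL(2, R)) (i k : Fin 2) :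
    (g • (Pi.single i 1 : Fin 2 → R)) k = g k i := by
  simp [Matrix.SpecialLinearGroup.smul_def, smul_eq_mulVec]

lemma exists_eq_transvection {R : Type*} [CommRing R] {g : SL(2, R)} {i j : Fin 2} (hij : i ≠ j)
    (hg : g • (Pi.single i 1 : Fin 2 → R) = Pi.single i 1) : ∃ c, g = transvection hij c := by
  have hdet := det_fin_two_eq_one g
  have hcol (k : Fin 2) : g k i = (Pi.single i 1 : Fin 2 → R) k := by
    rw [← smul_single_apply, hg]
  have h0 := hcol 0
  have h1 := hcol 1
  refine ⟨g i j, Subtype.ext ?_⟩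
  rw [SpecialLinearGroup.transvection_coe]
  ext k l
  fin_cases i <;> fin_cases j <;> fin_cases k <;> fin_cases l <;> simp_all

lemma transvection_pow {n R : Type*} [DecidableEq n] [Fintype n] [CommRing R] {i j : n}
    (hij : i ≠ j) (b : R) (k : ℕ) : transvection hij b ^ k = transvection hij (k * b) := by
  induction k with
  | zero => simp
  | succ k ih => rw [pow_succ, ih, Nat.cast_succ, add_mul, one_mul, transvection_add]

lemma exists_smul_single_eq_of_isCoprime {R : Type*} [CommRing R] {v : Fin 2 → R}
    (hv : IsCoprime (v 0) (v 1)) (i : Fin 2) : ∃ g : SL(2, R), g • Pi.single i 1 = v := by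
  obtain ⟨g, h0, h1⟩ := hv.exists_SL2_col i
  refine ⟨g, funext fun k ↦ ?_⟩
  rw [smul_single_apply]
  fin_cases k <;> assumption

variable {F : Type*} [Field F]

lemma exists_smul_single_eq {v : Fin 2 → F} (hv : v ≠ 0) (i : Fin 2) :
    ∃ g : SL(2, F), g • Pi.single i 1 = v := by
  refine exists_smul_single_eq_of_isCoprime ?_ i
  by_cases h0 : v 0 = 0
  · have h1 : v 1 ≠ 0 := fun h1 ↦ hv (by ext k; fin_cases k <;> assumption)
    exact ⟨0, (v 1)⁻¹, by simp [h1]⟩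
  · exact ⟨(v 0)⁻¹, 0, by simp [h0]⟩

lemma commute_of_smul_eq {a b : SL(2, F)} {v : Fin 2 → F} (hv : v ≠ 0) (ha : a • v = v)
    (hb : b • v = v) : Commute a b := by
  obtain ⟨h, rfl⟩ := exists_smul_single_eq hv 0
  rw [← inv_smul_eq_iff, ← mul_smul, ← mul_smul] at ha hb
  obtain ⟨s, hs⟩ := exists_eq_transvection zero_ne_one ha
  obtain ⟨t, ht⟩ := exists_eq_transvection zero_ne_one hb
  rw [← Commute.conj_iff h⁻¹, inv_inv, hs, ht, commute_iff_eq, ← transvection_add,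
    ← transvection_add, add_comm]

lemma exists_eq_smul_of_det_eq_zero {v w : Fin 2 → F} (hv : v ≠ 0) (h : v 0 * w 1 = v 1 * w 0) :
    ∃ l : F, w = l • v := by
  obtain ⟨i, hi⟩ := Function.ne_iff.1 hv
  have hdet : ∀ k, w k * v i = w i * v k := by
    rw [Fin.forall_fin_two]
    fin_cases i <;> constructor <;> grind
  refine ⟨w i / v i, funext fun k ↦ ?_⟩
  rw [Pi.smul_apply, smul_eq_mul, div_mul_eq_mul_div, eq_div_iff hi, hdet]

end FixedVectors

section OrderDivisible

variable {p : ℕ} [Fact p.Prime] {G : Subgroup SL(2, ZMod p)}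

lemma transvection_mem_of_ne_zero {i j : Fin 2} (hij : i ≠ j) {b : ZMod p} (hb : b ≠ 0)
    (h : transvection hij b ∈ G) (c : ZMod p) : transvection hij c ∈ G := by
  have hpow := pow_mem h (c / b).val
  rwa [transvection_pow, ZMod.natCast_zmod_val, div_mul_cancel₀ _ hb] at hpow

lemma eq_top_of_transvection_mem {b c : ZMod p} (hb : b ≠ 0) (hc : c ≠ 0)
    (hupper : transvection zero_ne_one b ∈ G) (hlower : transvection one_ne_zero c ∈ G) :
    G = ⊤ := by
  refine eq_top_iff.2 fun g _ ↦ ?_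
  induction g using SL2.transvection_induction with
  | htransvec i j hij d =>
    fin_cases i <;> fin_cases j
    · exact absurd rfl hij
    · exact transvection_mem_of_ne_zero _ hb hupper d
    · exact transvection_mem_of_ne_zero _ hc hlower d
    · exact absurd rfl hij
  | hmul _ _ hA hB => exact mul_mem (hA trivial) (hB trivial)

lemma eq_top_of_smul_single_eq {a b : SL(2, ZMod p)} (ha : a ∈ G) (hb : b ∈ G) (ha1 : a ≠ 1)
    (hb1 : b ≠ 1) (ha0 : a • (Pi.single 0 1 : Fin 2 → ZMod p) = Pi.single 0 1)
    (hb0 : b • (Pi.single 1 1 : Fin 2 → ZMod p) = Pi.single 1 1) : G = ⊤ := by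
  obtain ⟨s, rfl⟩ := exists_eq_transvection zero_ne_one ha0
  obtain ⟨t, rfl⟩ := exists_eq_transvection one_ne_zero hb0
  refine eq_top_of_transvection_mem ?_ ?_ ha hb
  · rintro rfl
    exact ha1 (by simp)
  · rintro rfl
    exact hb1 (by simp)

lemma eq_top_of_smul_eq {a b : SL(2, ZMod p)} (ha : a ∈ G) (hb : b ∈ G) (ha1 : a ≠ 1)
    (hb1 : b ≠ 1) {v w : Fin 2 → ZMod p} (hvw : v 0 * w 1 ≠ v 1 * w 0) (hav : a • v = v)
    (hbw : b • w = w) : G = ⊤ := by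
  have hδ : v 0 * w 1 - v 1 * w 0 ≠ 0 := sub_ne_zero.2 hvw
  set δ := v 0 * w 1 - v 1 * w 0 with δ_def
  let h : SL(2, ZMod p) := ⟨!![v 0, δ⁻¹ * w 0; v 1, δ⁻¹ * w 1], by
    rw [det_fin_two_of]; field_simp; rw [δ_def]; ring⟩
  have hv : h • (Pi.single 0 1 : Fin 2 → ZMod p) = v := by
    ext k; rw [smul_single_apply]; fin_cases k <;> rfl
  have hw : h • (Pi.single 1 1 : Fin 2 → ZMod p) = δ⁻¹ • w := by
    ext k; rw [smul_single_apply]; fin_cases k <;> rfl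
  refine Subgroup.comap_injective (f := (MulAut.conj h).toMonoidHom) (MulAut.conj h).surjective
    ((eq_top_of_smul_single_eq (a := h⁻¹ * a * h) (b := h⁻¹ * b * h) ?_ ?_ ?_ ?_ ?_ ?_).trans
      (Subgroup.comap_top _).symm)
  · simpa [mul_assoc] using ha
  · simpa [mul_assoc] using hb
  · rwa [Ne, mul_eq_one_iff_eq_inv, inv_mul_eq_iff_eq_mul, mul_inv_cancel]
  · rwa [Ne, mul_eq_one_iff_eq_inv, inv_mul_eq_iff_eq_mul, mul_inv_cancel]
  · rw [mul_smul, mul_smul, hv, hav, inv_smul_eq_iff, hv]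
  · rw [mul_smul, mul_smul, hw, smul_comm b, hbw, inv_smul_eq_iff, hw]

lemma exists_smul_eq_self_of_pow_eq_one {u : SL(2, ZMod p)} (hu : u ^ p = 1) :
    ∃ v : Fin 2 → ZMod p, v ≠ 0 ∧ u • v = v := by
  have sub_one_pow : (u.1 - 1) ^ p = 0 := by
    rw [sub_pow_char_of_commute _ (Commute.one_right _), one_pow, sub_eq_zero]
    exact congrArg Subtype.val hu
  have det_eq_zero : (u.1 - 1).det = 0 := by
    refine eq_zero_of_pow_eq_zero (n := p) ?_
    rw [← det_pow, sub_one_pow, det_zero]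
  obtain ⟨v, hv, huv⟩ := exists_mulVec_eq_zero_iff.2 det_eq_zero
  rw [sub_mulVec, one_mulVec, sub_eq_zero] at huv
  exact ⟨v, hv, huv⟩

lemma exists_forall_smul_eq_of_dvd_card (hG : G ≠ ⊤) (hp : p ∣ Nat.card G) :
    ∃ v : Fin 2 → ZMod p, v ≠ 0 ∧ ∀ g ∈ G, ∃ l : ZMod p, g • v = l • v := by
  obtain ⟨⟨u, huG⟩, hu⟩ := exists_prime_orderOf_dvd_card' p hp
  rw [Subgroup.orderOf_mk] at hu
  have hu1 : u ≠ 1 := by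
    rintro rfl
    exact (Fact.out : p.Prime).one_lt.ne (by rw [← hu, orderOf_one])
  obtain ⟨v, hv, huv⟩ := exists_smul_eq_self_of_pow_eq_one (hu ▸ pow_orderOf_eq_one u)
  refine ⟨v, hv, fun g hg ↦ exists_eq_smul_of_det_eq_zero hv (by_contra fun hdet ↦ hG ?_)⟩
  refine eq_top_of_smul_eq huG (mul_mem (mul_mem hg huG) (inv_mem hg)) hu1 ?_ hdet huv ?_
  · rwa [Ne, conj_eq_one_iff]
  · rw [mul_smul, mul_smul, inv_smul_smul, huv]

end OrderDivisible

section CommutatorLaw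

lemma commutatorElement_smul_eq {F : Type*} [Field F] {g h : SL(2, F)} {v : Fin 2 → F}
    (hg : ∃ l : F, g • v = l • v) (hh : ∃ m : F, h • v = m • v) : ⁅g, h⁆ • v = v := by
  obtain ⟨l, hl⟩ := hg
  obtain ⟨m, hm⟩ := hh
  rcases eq_or_ne v 0 with rfl | hv
  · exact smul_zero _
  have hgh : (g * h) • v = (m * l) • v := by rw [mul_smul, hm, smul_comm g m v, hl, mul_smul]
  have hhg : (h * g) • v = (m * l) • v := by
    rw [mul_smul, hl, smul_comm h l v, hm, mul_comm, mul_smul]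
  have hml : m * l ≠ 0 := fun h0 ↦ hv (by rwa [h0, zero_smul, smul_eq_zero_iff_eq] at hgh)
  refine smul_right_injective _ hml ?_
  dsimp only
  rw [← smul_comm, ← hhg, ← mul_smul, hhg, ← hgh, commutatorElement_def]
  congr 1
  group

lemma commute_commutatorElement_of_eigenvector {F : Type*} [Field F] {G : Subgroup SL(2, F)}
    {n : ℕ} {v : Fin 2 → F} (hv : v ≠ 0) (hG : ∀ g ∈ G, ∃ l : F, g ^ n • v = l • v)
    {a b c d : SL(2, F)} (ha : a ∈ G) (hb : b ∈ G) (hc : c ∈ G) (hd : d ∈ G) :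
    Commute ⁅a ^ n, b ^ n⁆ ⁅c ^ n, d ^ n⁆ :=
  commute_of_smul_eq hv (commutatorElement_smul_eq (hG a ha) (hG b hb))
    (commutatorElement_smul_eq (hG c hc) (hG d hd))

lemma injective_map_algebraMap {n F K : Type*} [DecidableEq n] [Fintype n] [Field F] [Field K]
    [Algebra F K] :
    Function.Injective (SpecialLinearGroup.map (n := n) (algebraMap F K)) := fun _ _ h ↦
  Subtype.ext (Matrix.map_injective (algebraMap F K).injective (congrArg Subtype.val h))

lemma commute_commutatorElement_pow_sixty {p : ℕ} [Fact p.Prime] {G : Subgroup SL(2, ZMod p)}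
    (hG : G ≠ ⊤) {a b c d : SL(2, ZMod p)} (ha : a ∈ G) (hb : b ∈ G) (hc : c ∈ G) (hd : d ∈ G) :
    Commute ⁅a ^ 60, b ^ 60⁆ ⁅c ^ 60, d ^ 60⁆ := by
  by_cases hp : p ∣ Nat.card G
  · obtain ⟨v, hv, hGv⟩ := exists_forall_smul_eq_of_dvd_card hG hp
    exact commute_commutatorElement_of_eigenvector hv (fun g hg ↦ hGv _ (pow_mem hg 60)) ha hb hc hd
  · have hcop : p.Coprime (Nat.card G) := ((Fact.out : p.Prime).coprime_iff_not_dvd).2 hp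
    let f := SpecialLinearGroup.map (n := Fin 2) (algebraMap (ZMod p) (AlgebraicClosure (ZMod p)))
    have : Finite (G.map f) := (Set.toFinite (G : Set SL(2, ZMod p))).image f
    obtain ⟨v, hv, hGv⟩ := exists_forall_pow_sixty_smul_eq (G := G.map f) (by
      rintro _ ⟨g, hg, rfl⟩
      refine mem_center_of_trace_sq_eq_four (p := p) (hcop.coprime_dvd_right ?_)
      exact (orderOf_map_dvd _ _).trans (Subgroup.orderOf_dvd_natCard G hg))
    refine Commute.of_map (f := f) injective_map_algebraMap ?_
    simp only [map_commutatorElement, map_pow]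
    exact commute_commutatorElement_of_eigenvector hv hGv (Subgroup.mem_map_of_mem f ha)
      (Subgroup.mem_map_of_mem f hb) (Subgroup.mem_map_of_mem f hc) (Subgroup.mem_map_of_mem f hd)

lemma commute_commutatorElement_conj {p : ℕ} [Fact p.Prime] {G : Subgroup SL(2, ZMod p)}
    (hG : G ≠ ⊤) {a b c : SL(2, ZMod p)} (ha : a ∈ G) (hb : b ∈ G) (hc : c ∈ G) :
    Commute ⁅a ^ 60, b ^ 60⁆ (c * ⁅a ^ 60, b ^ 60⁆ * c⁻¹) := by
  rw [conjugate_commutatorElement, ← conj_pow, ← conj_pow]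
  exact commute_commutatorElement_pow_sixty hG ha hb (mul_mem (mul_mem hc ha) (inv_mem hc))
    (mul_mem (mul_mem hc hb) (inv_mem hc))

end CommutatorLaw

section GammaThree

variable {g z w : SL(2, ℤ)}

lemma nine_dvd_trace_sub_two (hg : g ∈ Γ(3)) : 9 ∣ g.1.trace - 2 := by
  have hdet := det_fin_two_eq_one g
  obtain ⟨h00, h01, h10, h11⟩ := CongruenceSubgroup.Gamma_mem.1 hg
  obtain ⟨a, ha⟩ := (ZMod.intCast_eq_intCast_iff_dvd_sub (g 0 0) 1 3).1 (by simpa using h00)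
  obtain ⟨b, hb⟩ := (ZMod.intCast_zmod_eq_zero_iff_dvd (g 0 1) 3).1 h01
  obtain ⟨c, hc⟩ := (ZMod.intCast_zmod_eq_zero_iff_dvd (g 1 0) 3).1 h10
  obtain ⟨d, hd⟩ := (ZMod.intCast_eq_intCast_iff_dvd_sub (g 1 1) 1 3).1 (by simpa using h11)
  push_cast at ha hb hc hd
  rw [hb, hc] at hdet
  rw [trace_fin_two]
  exact ⟨b * c - a * d, by linear_combination hdet - (1 - g 1 1) * ha - 3 * a * hd⟩

lemma eq_two_or_seven_le_abs_trace (hg : g ∈ Γ(3)) : g.1.trace = 2 ∨ 7 ≤ |g.1.trace| := by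
  have := nine_dvd_trace_sub_two hg
  rw [le_abs]
  omega

lemma exists_isCoprime_smul_eq_self (hg : g.1.trace = 2) :
    ∃ v : Fin 2 → ℤ, IsCoprime (v 0) (v 1) ∧ g • v = v := by
  have det_eq_zero : (g.1 - 1).det = 0 := by
    rw [trace_fin_two] at hg
    simp only [det_fin_two, Matrix.sub_apply, Matrix.one_fin_two, of_apply, cons_val]
    linear_combination det_fin_two_eq_one g - hg
  obtain ⟨u, hu, hgu⟩ := exists_mulVec_eq_zero_iff.2 det_eq_zero
  have gcd_ne_zero : Int.gcd (u 0) (u 1) ≠ 0 := fun h ↦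
    hu (funext (Fin.forall_fin_two.2 (Int.gcd_eq_zero_iff.1 h)))
  obtain ⟨a, b, hab, ha, hb⟩ := Int.exists_gcd_one (Nat.pos_of_ne_zero gcd_ne_zero)
  refine ⟨![a, b], Int.isCoprime_iff_gcd_eq_one.2 hab,
    smul_right_injective _ (Int.natCast_ne_zero.2 gcd_ne_zero) ?_⟩
  have hu_eq : (Int.gcd (u 0) (u 1) : ℤ) • ![a, b] = u := by
    rw [funext_iff, Fin.forall_fin_two]
    exact ⟨by simpa [mul_comm] using ha.symm, by simpa [mul_comm] using hb.symm⟩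
  rw [sub_mulVec, one_mulVec, sub_eq_zero] at hgu
  dsimp only
  rw [← smul_comm, hu_eq]
  exact hgu

lemma exists_eq_conj_transvection (hg : g.1.trace = 2) :
    ∃ (h : SL(2, ℤ)) (c : ℤ), g = h * transvection zero_ne_one c * h⁻¹ := by
  obtain ⟨v, hv, hgv⟩ := exists_isCoprime_smul_eq_self hg
  obtain ⟨h, rfl⟩ := exists_smul_single_eq_of_isCoprime hv 0
  rw [← inv_smul_eq_iff, ← mul_smul, ← mul_smul] at hgv
  obtain ⟨c, hc⟩ := exists_eq_transvection zero_ne_one hgv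
  exact ⟨h, c, by rw [← hc]; group⟩

lemma exists_eq_transvection_of_mem_gamma (hz : z ∈ Γ(3)) (h10 : z 1 0 = 0) :
    ∃ n, z = transvection zero_ne_one n := by
  have h00 : z 0 0 = 1 := by
    have hdet := det_fin_two_eq_one z
    rw [h10, mul_zero, sub_zero] at hdet
    rcases Int.eq_one_or_neg_one_of_mul_eq_one hdet with h | h
    · exact h
    · have := (CongruenceSubgroup.Gamma_mem.1 hz).1
      rw [h] at this
      exact absurd this (by decide)
  refine exists_eq_transvection zero_ne_one ?_
  rw [funext_iff, Fin.forall_fin_two, smul_single_apply, smul_single_apply, h00, h10]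
  exact ⟨rfl, rfl⟩

lemma exists_eq_transvection_of_commute {c : ℤ} (hc : c ≠ 0) (hz : z ∈ Γ(3))
    (h : Commute z (transvection zero_ne_one c)) : ∃ n, z = transvection zero_ne_one n := by
  refine exists_eq_transvection_of_mem_gamma hz ?_
  have := congrArg (fun g : SL(2, ℤ) ↦ g 0 0) h
  simpa [SpecialLinearGroup.transvection_coe, Matrix.mul_apply, hc] using this

lemma exists_eq_conj_transvection_of_commute {h : SL(2, ℤ)} {c : ℤ} (hc : c ≠ 0) (hz : z ∈ Γ(3))
    (hcomm : Commute z (h * transvection zero_ne_one c * h⁻¹)) :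
    ∃ n, z = h * transvection zero_ne_one n * h⁻¹ := by
  have hz' := (CongruenceSubgroup.Gamma_normal 3).conj_mem z hz h⁻¹
  rw [← Commute.conj_iff h⁻¹] at hcomm
  obtain ⟨n, hn⟩ := exists_eq_transvection_of_commute (z := h⁻¹ * z * h⁻¹⁻¹) hc hz' (by
    simpa [mul_assoc] using hcomm)
  exact ⟨n, by rw [← hn]; group⟩

end GammaThree

section Commute

variable {R : Type*} [CommRing R]

lemma commute_fin_two_iff {A B : Matrix (Fin 2) (Fin 2) R} :
    Commute A B ↔ A 0 1 * B 1 0 = A 1 0 * B 0 1 ∧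
      A 0 1 * (B 0 0 - B 1 1) = (A 0 0 - A 1 1) * B 0 1 ∧
      A 1 0 * (B 0 0 - B 1 1) = (A 0 0 - A 1 1) * B 1 0 := by
  simp only [commute_iff_eq, ← Matrix.ext_iff, Fin.forall_fin_two, Matrix.mul_apply,
    Fin.sum_univ_two]
  grind

lemma commute_trans_of_ne_smul_one [IsDomain R] {A X Y : Matrix (Fin 2) (Fin 2) R}
    (hA : A ≠ A 0 0 • 1) (hX : Commute X A) (hY : Commute A Y) : Commute X Y := by
  obtain ⟨hX1, hX2, hX3⟩ := commute_fin_two_iff.1 hX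
  obtain ⟨hY1, hY2, hY3⟩ := commute_fin_two_iff.1 hY
  rw [commute_fin_two_iff]
  have hA' : A 0 1 ≠ 0 ∨ A 1 0 ≠ 0 ∨ A 0 0 - A 1 1 ≠ 0 := by
    contrapose! hA
    ext i j
    fin_cases i <;> fin_cases j <;> simp [hA, sub_eq_zero.1 hA.2.2]
  rcases hA' with h | h | h
  all_goals
    refine ⟨mul_left_cancel₀ h ?_, mul_left_cancel₀ h ?_, mul_left_cancel₀ h ?_⟩ <;> grind

lemma coe_inv_eq_trace_smul_one_sub (g : SL(2, R)) : g⁻¹.1 = g.1.trace • 1 - g.1 := by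
  rw [Matrix.SpecialLinearGroup.coe_inv, adjugate_fin_two, trace_fin_two]
  ext i j
  fin_cases i <;> fin_cases j <;> simp

-- Cayley–Hamilton for `z`, `wz` and `zw`: the hypothesis reads `tr(z)(wz - zw)w = (wz)² - (zw)²`.
lemma sub_mul_smul_sub_eq_zero [Nontrivial R] {z w : SL(2, R)}
    (h : Commute w (z * w * z⁻¹)) :
    (w.1 * z.1 - z.1 * w.1) * (z.1.trace • w.1 - (z.1 * w.1).trace • 1) = 0 := by
  have hwz := coe_sq_eq_trace_smul_sub_one (w * z)
  have hzw := coe_sq_eq_trace_smul_sub_one (z * w)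
  have hcomm := congrArg Subtype.val h.eq
  simp only [Matrix.SpecialLinearGroup.coe_mul, sq, coe_inv_eq_trace_smul_one_sub,
    trace_mul_comm w.1 z.1] at hwz hzw hcomm
  have expand : z.1.trace • ((w.1 * z.1 - z.1 * w.1) * w.1) =
      w.1 * z.1 * (w.1 * z.1) - z.1 * w.1 * (z.1 * w.1) := by
    simp only [mul_sub, sub_mul, mul_smul_comm, smul_mul_assoc, mul_one, mul_assoc,
      smul_sub] at hcomm ⊢
    rw [sub_eq_sub_iff_add_eq_add] at hcomm ⊢
    rw [hcomm]
    abel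
  rw [mul_sub, mul_smul_comm, expand, hwz, hzw, mul_smul_comm, mul_one, smul_sub]
  abel

lemma det_smul_sub_smul_one (w : SL(2, R)) (s r : R) :
    (s • w.1 - r • 1).det = s ^ 2 - s * r * w.1.trace + r ^ 2 := by
  simp only [det_fin_two, trace_fin_two, Matrix.sub_apply, Matrix.smul_apply, Matrix.one_fin_two,
    of_apply, cons_val, smul_eq_mul]
  linear_combination s ^ 2 * det_fin_two_eq_one w

lemma sq_sub_add_sq_eq_zero_of_commute_conj [IsDomain R] {z w : SL(2, R)}
    (h : Commute w (z * w * z⁻¹)) (hzw : ¬ Commute z w) :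
    z.1.trace ^ 2 - z.1.trace * (z.1 * w.1).trace * w.1.trace + (z.1 * w.1).trace ^ 2 = 0 := by
  rw [← det_smul_sub_smul_one]
  by_contra hdet
  have hC := congrArg (· * (z.1.trace • w.1 - (z.1 * w.1).trace • 1).adjugate)
    (sub_mul_smul_sub_eq_zero h)
  simp only [mul_assoc, mul_adjugate, zero_mul, mul_smul_comm, mul_one, smul_eq_zero, hdet,
    false_or, sub_eq_zero] at hC
  exact hzw (Subtype.ext hC.symm)

lemma trace_mul_transvection (g : SL(2, R)) (c : R) :
    (g * transvection zero_ne_one c).1.trace = g.1.trace + c * g 1 0 := by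
  simp only [Matrix.SpecialLinearGroup.coe_mul, SpecialLinearGroup.transvection_coe,
    Matrix.mul_add, Matrix.mul_one, trace_add, trace_mul_single]
  simp only [MulOpposite.smul_eq_mul_unop, MulOpposite.unop_op, mul_comm]

lemma trace_conj_eq (k g : SL(2, R)) : (k * g * k⁻¹).1.trace = g.1.trace := by
  rw [Matrix.SpecialLinearGroup.coe_mul, trace_mul_comm, ← Matrix.SpecialLinearGroup.coe_mul]
  group

lemma commute_transvection {ι : Type*} [Fintype ι] [DecidableEq ι] {i j : ι} (hij : i ≠ j)
    (b c : R) : Commute (transvection hij b) (transvection hij c) := by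
  rw [commute_iff_eq, ← transvection_add, ← transvection_add, add_comm]

end Commute

section CommuteGammaThree

variable {z w : SL(2, ℤ)}

lemma ne_smul_one_of_mem_gamma (hz : z ∈ Γ(3)) (hz1 : z ≠ 1) : z.1 ≠ z.1 0 0 • 1 := by
  contrapose! hz1
  have h01 : z 0 1 = 0 := by rw [hz1]; simp
  have h10 : z 1 0 = 0 := by rw [hz1]; simp
  obtain ⟨n, rfl⟩ := exists_eq_transvection_of_mem_gamma hz h10
  obtain rfl : n = 0 := by simpa [SpecialLinearGroup.transvection_coe] using h01
  simp

lemma commute_trans_of_mem_gamma {a x y : SL(2, ℤ)} (ha : a ∈ Γ(3)) (ha1 : a ≠ 1)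
    (hx : Commute x a) (hy : Commute a y) : Commute x y :=
  (commute_trans_of_ne_smul_one (ne_smul_one_of_mem_gamma ha ha1) (hx.map coeMonoidHom)
    (hy.map coeMonoidHom)).of_map coeMonoidHom_injective

lemma eq_or_eq_neg_of_sq_sub_mul_add_sq {a b t : ℤ} (h : a ^ 2 - a * b * t + b ^ 2 = 0)
    (hb : b ≠ 0) : a = b ∧ t = 2 ∨ a = -b ∧ t = -2 := by
  obtain ⟨n, hn⟩ : b ∣ 2 * a - b * t := by
    rw [← Int.pow_dvd_pow_iff two_ne_zero]
    exact ⟨t ^ 2 - 4, by linear_combination 4 * h⟩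
  have hn2 : n ^ 2 = t ^ 2 - 4 :=
    mul_left_cancel₀ (pow_ne_zero 2 hb) (by linear_combination 4 * h - (2 * a - b * t + b * n) * hn)
  have hfactor : (t - n) * (t + n) = 4 := by linear_combination -hn2
  have hle : t - n ≤ 4 := Int.le_of_dvd four_pos ⟨_, hfactor.symm⟩
  have hge : -(t - n) ≤ 4 :=
    Int.le_of_dvd four_pos ⟨-(t + n), by rw [neg_mul_neg, hfactor]⟩
  have ht : t = 2 ∨ t = -2 := by
    obtain ⟨d, rfl⟩ : ∃ d, t = n + d := ⟨t - n, by ring⟩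
    rw [add_sub_cancel_left] at hfactor hle hge
    rw [neg_le] at hge
    interval_cases d <;> omega
  rcases ht with rfl | rfl
  · obtain rfl : n = 0 := by simpa using hn2
    exact .inl ⟨by linarith, rfl⟩
  · obtain rfl : n = 0 := by simpa using hn2
    exact .inr ⟨by linarith, rfl⟩

lemma commute_of_commute_conj (hz : z ∈ Γ(3)) (hw : w ∈ Γ(3)) (h : Commute w (z * w * z⁻¹)) :
    Commute z w := by
  by_contra hzw
  have htz := nine_dvd_trace_sub_two hz
  have htw := nine_dvd_trace_sub_two hw
  have htzw : (z.1 * w.1).trace ≠ 0 := fun h0 ↦ by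
    have := nine_dvd_trace_sub_two (mul_mem hz hw)
    rw [Matrix.SpecialLinearGroup.coe_mul, h0] at this
    omega
  rcases eq_or_eq_neg_of_sq_sub_mul_add_sq (sq_sub_add_sq_eq_zero_of_commute_conj h hzw) htzw with
    ⟨htr, hw2⟩ | ⟨-, hw2⟩
  · obtain ⟨k, c, rfl⟩ := exists_eq_conj_transvection hw2
    obtain ⟨y, rfl⟩ : ∃ y, z = k * y * k⁻¹ := ⟨k⁻¹ * z * k, by group⟩
    have hconj : k * y * k⁻¹ * (k * transvection zero_ne_one c * k⁻¹) =
        k * (y * transvection zero_ne_one c) * k⁻¹ := by group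
    rw [← Matrix.SpecialLinearGroup.coe_mul, hconj, trace_conj_eq, trace_conj_eq,
      trace_mul_transvection, left_eq_add, mul_eq_zero] at htr
    rcases htr with rfl | h10
    · simp at hzw
    have hy : y ∈ Γ(3) := by
      have := (CongruenceSubgroup.Gamma_normal 3).conj_mem _ hz k⁻¹
      rwa [show k⁻¹ * (k * y * k⁻¹) * k⁻¹⁻¹ = y by group] at this
    obtain ⟨n, rfl⟩ := exists_eq_transvection_of_mem_gamma hy h10
    exact hzw ((commute_transvection zero_ne_one n c).conj k)
  · omega

end CommuteGammaThree

section Eigenvalue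

variable {F : Type*} [Field F] {g h : SL(2, F)} {v : Fin 2 → F} {l m : F}

lemma ne_zero_of_smul_eq_smul (hv : v ≠ 0) (hg : g • v = l • v) : l ≠ 0 := by
  rintro rfl
  rw [zero_smul, smul_eq_zero_iff_eq] at hg
  exact hv hg

lemma trace_eq_add_inv_of_smul_eq_smul (hv : v ≠ 0) (hg : g • v = l • v) :
    g.1.trace = l + l⁻¹ := by
  have hl := ne_zero_of_smul_eq_smul hv hg
  have hsq := congrArg (· *ᵥ v) (coe_sq_eq_trace_smul_sub_one g)
  have hgv : g.1 *ᵥ v = l • v := hg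
  simp only [sq, ← mulVec_mulVec, sub_mulVec, smul_mulVec, one_mulVec, hgv, mulVec_smul] at hsq
  have hl2 : l * l = g.1.trace * l - 1 := by
    refine smul_left_injective F hv ?_
    dsimp only
    rw [mul_smul, hsq, sub_smul, mul_smul, one_smul]
  field_simp
  linear_combination -hl2

lemma inv_smul_eq_inv_smul (hv : v ≠ 0) (hg : g • v = l • v) : g⁻¹ • v = l⁻¹ • v := by
  rw [inv_smul_eq_iff, smul_comm, hg, inv_smul_smul₀ (ne_zero_of_smul_eq_smul hv hg)]

lemma mul_smul_eq_mul_smul (hg : g • v = l • v) (hh : h • v = m • v) :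
    (g * h) • v = (l * m) • v := by
  rw [mul_smul, hh, smul_comm, hg, smul_smul, mul_comm]

lemma pow_smul_eq_pow_smul (hg : g • v = l • v) (n : ℕ) : g ^ n • v = l ^ n • v := by
  induction n with
  | zero => simp
  | succ n ih => rw [pow_succ, pow_succ, mul_smul_eq_mul_smul ih hg]

lemma exists_smul_eq_smul_of_commute (hg : g.1.trace ^ 2 ≠ 4) (hv : v ≠ 0) (hgv : g • v = l • v)
    (hgh : Commute g h) : ∃ m : F, h • v = m • v := by
  refine exists_eq_smul_of_det_eq_zero hv ?_
  by_contra hvh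
  have hghv : g • h • v = l • h • v := by
    rw [← mul_smul, hgh.eq, mul_smul, hgv, smul_comm]
  generalize h • v = w at hvh hghv
  have hdet := det_fin_two_eq_one g
  have hgv' := hgv
  rw [smul_fin_two, funext_iff, Fin.forall_fin_two] at hgv hghv
  simp only [cons_val, Pi.smul_apply, smul_eq_mul] at hgv hghv
  have hl : l ^ 2 = 1 := by
    refine mul_right_cancel₀ (sub_ne_zero.2 hvh) ?_
    grind
  rw [trace_eq_add_inv_of_smul_eq_smul hv hgv',
    inv_eq_of_mul_eq_one_left ((sq l).symm.trans hl)] at hg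
  exact hg (by linear_combination 4 * hl)

end Eigenvalue

section Hyperbolic

variable {x y u z w : SL(2, ℤ)}

lemma trace_coe_map {R S : Type*} [CommRing R] [CommRing S] (f : R →+* S) (g : SL(2, R)) :
    (Matrix.SpecialLinearGroup.map f g).1.trace = f g.1.trace := by
  simp [trace_fin_two]

lemma exists_complex_eigenvector (hu : 7 ≤ |u.1.trace|) :
    ∃ v : Fin 2 → ℂ, v ≠ 0 ∧ ∀ z, Commute u z →
      ∃ l : ℂ, Matrix.SpecialLinearGroup.map (Int.castRingHom ℂ) z • v = l • v := by
  have htr : (Matrix.SpecialLinearGroup.map (Int.castRingHom ℂ) u).1.trace ^ 2 ≠ 4 := by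
    rw [trace_coe_map, eq_intCast]
    have : u.1.trace ^ 2 ≠ 4 := by nlinarith [sq_abs u.1.trace]
    exact_mod_cast this
  obtain ⟨l, -, v, -, -, hv, -, huv, -⟩ := exists_eigenvectors htr
  exact ⟨v, hv, fun z hz ↦ exists_smul_eq_smul_of_commute htr hv huv (hz.map _)⟩

lemma abs_trace_le_norm_add_norm_inv {v : Fin 2 → ℂ} {l : ℂ} (hv : v ≠ 0)
    (hz : Matrix.SpecialLinearGroup.map (Int.castRingHom ℂ) z • v = l • v) :
    |(z.1.trace : ℝ)| ≤ ‖l‖ + ‖l‖⁻¹ := by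
  have := trace_eq_add_inv_of_smul_eq_smul hv hz
  rw [trace_coe_map, eq_intCast] at this
  rw [← norm_inv, ← Complex.norm_intCast, this]
  exact norm_add_le _ _

lemma trace_eq_two_of_commute (hu : u ∈ Γ(3)) (hz1 : z ≠ 1) (hz : z.1.trace = 2)
    (h : Commute u z) : u.1.trace = 2 := by
  obtain ⟨k, c, rfl⟩ := exists_eq_conj_transvection hz
  have hc : c ≠ 0 := by
    rintro rfl
    simp at hz1
  obtain ⟨n, rfl⟩ := exists_eq_conj_transvection_of_commute hc hu h
  rw [trace_conj_eq]
  simp [SpecialLinearGroup.transvection_coe]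

lemma pow_ne_one_of_mem_gamma (hx : x ∈ Γ(3)) (hx1 : x ≠ 1) {n : ℕ} (hn : n ≠ 0) :
    x ^ n ≠ 1 := by
  intro hxn
  rcases eq_two_or_seven_le_abs_trace hx with htr | htr
  · obtain ⟨k, c, rfl⟩ := exists_eq_conj_transvection htr
    rw [conj_pow, conj_eq_one_iff, transvection_pow] at hxn
    have hc : c = 0 := by
      simpa [SpecialLinearGroup.transvection_coe, hn] using congrArg (fun g : SL(2, ℤ) ↦ g 0 1) hxn
    exact hx1 (by simp [hc])
  · obtain ⟨v, hv, heig⟩ := exists_complex_eigenvector htr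
    obtain ⟨l, hl⟩ := heig x (Commute.refl x)
    have hln : l ^ n = 1 := by
      have := pow_smul_eq_pow_smul hl n
      rw [← map_pow, hxn, map_one, one_smul] at this
      refine smul_left_injective ℂ hv ?_
      dsimp only
      rw [← this, one_smul]
    have hle := abs_trace_le_norm_add_norm_inv hv hl
    rw [Complex.norm_eq_one_of_pow_eq_one hln hn] at hle
    have : (7 : ℝ) ≤ |(x.1.trace : ℝ)| := by exact_mod_cast htr
    linarith

lemma commute_of_commute_pow (hx : x ∈ Γ(3)) (hy : y ∈ Γ(3)) {n : ℕ} (hn : n ≠ 0)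
    (h : Commute (x ^ n) (y ^ n)) : Commute x y := by
  rcases eq_or_ne x 1 with rfl | hx1
  · exact Commute.one_left y
  rcases eq_or_ne y 1 with rfl | hy1
  · exact Commute.one_right x
  have hxy : Commute x (y ^ n) := commute_trans_of_mem_gamma (pow_mem hx n)
    (pow_ne_one_of_mem_gamma hx hx1 hn) (Commute.self_pow x n) h
  exact commute_trans_of_mem_gamma (pow_mem hy n) (pow_ne_one_of_mem_gamma hy hy1 hn) hxy
    (Commute.pow_self y n)

lemma commute_of_commute_conj_commutatorElement (hx : x ∈ Γ(3)) (hy : y ∈ Γ(3)) {n : ℕ}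
    (hn : n ≠ 0) (hxw : Commute ⁅x ^ n, y ^ n⁆ (x * ⁅x ^ n, y ^ n⁆ * x⁻¹))
    (hyw : Commute ⁅x ^ n, y ^ n⁆ (y * ⁅x ^ n, y ^ n⁆ * y⁻¹)) : Commute x y := by
  have hw : ⁅x ^ n, y ^ n⁆ ∈ Γ(3) :=
    mul_mem (mul_mem (mul_mem (pow_mem hx n) (pow_mem hy n)) (inv_mem (pow_mem hx n)))
      (inv_mem (pow_mem hy n))
  rcases eq_or_ne ⁅x ^ n, y ^ n⁆ 1 with hw1 | hw1
  · exact commute_of_commute_pow hx hy hn (commutatorElement_eq_one_iff_commute.1 hw1)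
  · exact commute_trans_of_mem_gamma hw hw1 (commute_of_commute_conj hx hw hxw)
      (commute_of_commute_conj hy hw hyw).symm

end Hyperbolic

section BoundedDisplacement

variable {G X : Type*} [Group G] [MulAction G X]

/-- The subgroup of those elements of `G` that change the values of `h : X → ℝ` by a bounded
amount. -/
def boundedDisplacement (h : X → ℝ) : Subgroup G where
  carrier := {g | ∃ C, ∀ x, |h (g • x) - h x| ≤ C}
  one_mem' := ⟨0, fun x ↦ by simp⟩
  mul_mem' := fun {a b} ⟨C, hC⟩ ⟨C', hC'⟩ ↦ ⟨C + C', fun x ↦ by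
    rw [mul_smul]
    exact (abs_sub_le _ (h (b • x)) _).trans (add_le_add (hC _) (hC' x))⟩
  inv_mem' := fun {a} ⟨C, hC⟩ ↦ ⟨C, fun x ↦ by
    simpa [abs_sub_comm] using hC (a⁻¹ • x)⟩

lemma abs_sub_le_of_mem_pow {U : Set G} {h : X → ℝ} {C : ℝ}
    (hU : ∀ g ∈ U, ∀ x, |h (g • x) - h x| ≤ C) {n : ℕ} {g : G} (hg : g ∈ U ^ n) (x : X) :
    |h (g • x) - h x| ≤ n * C := by
  induction n generalizing g x with
  | zero => simp_all
  | succ n ih =>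
    obtain ⟨a, ha, b, hb, rfl⟩ := Set.mem_mul.1 (pow_succ U n ▸ hg)
    rw [mul_smul]
    refine (abs_sub_le _ (h (b • x)) _).trans ?_
    push_cast
    linarith [ih ha (x := b • x), hU b hb x]

lemma exists_forall_mem_pow_abs_sub_le {U : Set G} (hU : U.Finite) {h : X → ℝ}
    (hh : boundedDisplacement (G := G) h = ⊤) :
    ∃ C : ℝ, 0 ≤ C ∧ ∀ n : ℕ, ∀ g ∈ U ^ n, ∀ x, |h (g • x) - h x| ≤ n * C := by
  choose C hC using fun g ↦ (hh ▸ Subgroup.mem_top g : g ∈ boundedDisplacement h)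
  obtain ⟨B, hB⟩ := (hU.image C).bddAbove
  exact ⟨max B 0, le_max_right _ _, fun n g hg ↦ abs_sub_le_of_mem_pow (fun g hg x ↦
    (hC g x).trans ((hB (Set.mem_image_of_mem C hg)).trans (le_max_left _ _))) hg⟩

end BoundedDisplacement

section EuclidHeight

/-- The number of steps the subtractive Euclidean algorithm takes on the pair `(a, b)`. -/
def euclidSteps (a b : ℕ) : ℕ :=
  if _ : a = 0 ∨ b = 0 then 0
  else if a ≤ b then 1 + euclidSteps a (b - a) else 1 + euclidSteps (a - b) b
termination_by a + b

@[simp] lemma euclidSteps_zero_left (b : ℕ) : euclidSteps 0 b = 0 := by simp [euclidSteps]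

@[simp] lemma euclidSteps_zero_right (a : ℕ) : euclidSteps a 0 = 0 := by simp [euclidSteps]

lemma euclidSteps_self_add {a : ℕ} (ha : a ≠ 0) (b : ℕ) :
    euclidSteps a (a + b) = 1 + euclidSteps a b := by
  rw [euclidSteps]
  simp [ha]

lemma euclidSteps_add_self (a : ℕ) {b : ℕ} (hb : b ≠ 0) :
    euclidSteps (a + b) b = 1 + euclidSteps a b := by
  rw [euclidSteps]
  rcases eq_or_ne a 0 with rfl | ha
  · simp [hb]
  · simp [ha, hb]

lemma euclidSteps_comm (a b : ℕ) : euclidSteps a b = euclidSteps b a := by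
  fun_induction euclidSteps a b with
  | case1 a b h => rcases h with rfl | rfl <;> simp
  | case2 a b h hab ih =>
    obtain ⟨d, rfl⟩ := Nat.exists_eq_add_of_le' hab
    rw [euclidSteps_add_self d (not_or.1 h).1, ih, Nat.add_sub_cancel]
  | case3 a b h hab ih =>
    obtain ⟨d, rfl⟩ := Nat.exists_eq_add_of_le (not_le.1 hab).le
    rw [euclidSteps_self_add (not_or.1 h).2, ih, Nat.add_sub_cancel_left]

lemma abs_euclidSteps_add_sub_le (a b : ℕ) :
    |(euclidSteps (a + b) b : ℝ) - euclidSteps a b| ≤ 1 := by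
  rcases eq_or_ne b 0 with rfl | hb
  · simp
  · simp [euclidSteps_add_self a hb]

lemma abs_euclidSteps_sub_le {a b c : ℕ} (h : c = a + b ∨ a = c + b ∨ b = a + c) :
    |(euclidSteps c b : ℝ) - euclidSteps a b| ≤ 1 := by
  rcases h with rfl | rfl | rfl
  · exact abs_euclidSteps_add_sub_le a b
  · rw [abs_sub_comm]
    exact abs_euclidSteps_add_sub_le c b
  · rcases eq_or_ne a 0 with rfl | ha
    · simpa using abs_euclidSteps_add_sub_le 0 c
    rcases eq_or_ne c 0 with rfl | hc
    · simpa [abs_sub_comm] using abs_euclidSteps_add_sub_le 0 a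
    rw [euclidSteps_self_add ha, add_comm a c, euclidSteps_self_add hc, euclidSteps_comm c a]
    simp

lemma euclidSteps_one_right (n : ℕ) : euclidSteps n 1 = n := by
  induction n with
  | zero => simp
  | succ n ih => rw [euclidSteps_comm, add_comm, euclidSteps_self_add one_ne_zero,
    euclidSteps_comm, ih]

/-- The height of an integer vector: the number of steps of the subtractive Euclidean algorithm
on the absolute values of its coordinates. -/
def euclidHeight (v : Fin 2 → ℤ) : ℝ := euclidSteps (v 0).natAbs (v 1).natAbs

lemma boundedDisplacement_euclidHeight :
    boundedDisplacement (G := SL(2, ℤ)) euclidHeight = ⊤ := by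
  rw [← top_le_iff, ← SpecialLinearGroup.SL2Z_generators, Subgroup.closure_le,
    Set.pair_subset_iff]
  constructor
  · refine ⟨0, fun v ↦ ?_⟩
    simp [euclidHeight, smul_fin_two, ModularGroup.coe_S, euclidSteps_comm]
  · refine ⟨1, fun v ↦ ?_⟩
    simp only [euclidHeight, smul_fin_two, ModularGroup.coe_T, of_apply, cons_val, one_mul,
      zero_mul, zero_add]
    exact abs_euclidSteps_sub_le (by omega)

lemma euclidHeight_transvection_smul (m : ℤ) :
    euclidHeight (transvection (zero_ne_one' (Fin 2)) m • (Pi.single 1 1 : Fin 2 → ℤ)) =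
      |(m : ℝ)| := by
  rw [Matrix.SpecialLinearGroup.transvection_smul_single_snd]
  simp [euclidHeight, euclidSteps_one_right]

-- The powers of `k τ k⁻¹` move `k • e₁` linearly far, so the bounded contribution of `k` is lost.
lemma abs_le_of_forall_abs_euclidHeight_sub_le {k : SL(2, ℤ)} {m : ℤ} {L : ℝ}
    (h : ∀ v, |euclidHeight ((k * transvection zero_ne_one m * k⁻¹) • v) - euclidHeight v| ≤ L) :
    |(m : ℝ)| ≤ L := by
  obtain ⟨C, hC⟩ : k ∈ boundedDisplacement euclidHeight :=
    boundedDisplacement_euclidHeight ▸ Subgroup.mem_top k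
  set e : Fin 2 → ℤ := Pi.single 1 1
  have he : euclidHeight e = 0 := by simp [euclidHeight, e]
  have linear_bound (j : ℕ) : j * |(m : ℝ)| ≤ j * L + 2 * C := by
    have hpow := abs_sub_le_of_mem_pow (U := {k * transvection zero_ne_one m * k⁻¹})
      (by simpa using h) (Set.pow_mem_pow (Set.mem_singleton _) (n := j)) (k • e)
    rw [conj_pow, mul_smul, inv_smul_smul, mul_smul, transvection_pow] at hpow
    have htrans := hC (transvection (zero_ne_one' (Fin 2)) (j * m) • e)
    rw [euclidHeight_transvection_smul] at htrans
    have hstart := hC e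
    push_cast [abs_mul] at htrans
    rw [Nat.abs_cast] at htrans
    rw [abs_le] at hpow hstart htrans
    linarith
  by_contra! hlt
  obtain ⟨j, hj⟩ := exists_nat_gt (2 * C / (|(m : ℝ)| - L))
  rw [div_lt_iff₀ (sub_pos.2 hlt)] at hj
  linarith [linear_bound j]

end EuclidHeight

section EntryGrowth

variable {U : Set SL(2, ℤ)}

lemma abs_apply_le_of_mem_pow {K : ℤ} (hU : ∀ g ∈ U, ∀ i j, |g i j| ≤ K) {n : ℕ}
    {g : SL(2, ℤ)} (hg : g ∈ U ^ n) (i j : Fin 2) : |g i j| ≤ (2 * K) ^ n := by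
  induction n generalizing g j with
  | zero =>
    obtain rfl : g = 1 := by simpa using hg
    fin_cases i <;> fin_cases j <;> simp
  | succ n ih =>
    obtain ⟨a, ha, b, hb, rfl⟩ := Set.mem_mul.1 (pow_succ U n ▸ hg)
    have term_le (k : Fin 2) : |a i k * b k j| ≤ (2 * K) ^ n * K := by
      rw [abs_mul]
      exact mul_le_mul (ih ha k) (hU b hb k j) (abs_nonneg _) ((abs_nonneg _).trans (ih ha k))
    rw [Matrix.SpecialLinearGroup.coe_mul, Matrix.mul_apply, Fin.sum_univ_two]
    linarith [abs_add_le (a i 0 * b 0 j) (a i 1 * b 1 j), term_le 0, term_le 1,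
      pow_succ (2 * K) n]

lemma exists_forall_mem_pow_abs_apply_le (hU : U.Finite) :
    ∃ M : ℕ, 2 ≤ M ∧ ∀ n : ℕ, ∀ g ∈ U ^ n, ∀ i j, |g i j| ≤ (M : ℤ) ^ n := by
  obtain ⟨K, hK⟩ := (hU.image fun g ↦ ∑ i, ∑ j, (g i j).natAbs).bddAbove
  refine ⟨2 * (K + 1), by omega, fun n g hg i j ↦ ?_⟩
  push_cast
  refine abs_apply_le_of_mem_pow (fun g hg i j ↦ ?_) hg i j
  have hsum : ∑ i, ∑ j, (g i j).natAbs ≤ K := hK (Set.mem_image_of_mem _ hg)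
  have hij : (g i j).natAbs ≤ ∑ i, ∑ j, (g i j).natAbs :=
    (Finset.single_le_sum (f := fun j ↦ (g i j).natAbs) (fun _ _ ↦ zero_le)
      (Finset.mem_univ j)).trans (Finset.single_le_sum (f := fun i ↦ ∑ j, (g i j).natAbs)
      (fun _ _ ↦ zero_le) (Finset.mem_univ i))
  rw [← Int.natCast_natAbs]
  omega

lemma norm_le_of_smul_eq_smul {z : SL(2, ℤ)} {B : ℝ} (hz : ∀ i j, |(z i j : ℝ)| ≤ B)
    {v : Fin 2 → ℂ} {l : ℂ} (hv : v ≠ 0)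
    (h : Matrix.SpecialLinearGroup.map (Int.castRingHom ℂ) z • v = l • v) : ‖l‖ ≤ 2 * B := by
  refine le_of_mul_le_mul_right ?_ (norm_pos_iff.2 hv)
  have hB : 0 ≤ B := (abs_nonneg _).trans (hz 0 0)
  rw [← norm_smul, ← h, smul_fin_two, pi_norm_le_iff_of_nonneg (by positivity)]
  have term_le (i j : Fin 2) : ‖(z i j : ℂ) * v j‖ ≤ B * ‖v‖ := by
    rw [norm_mul, Complex.norm_intCast]
    exact mul_le_mul (hz i j) (norm_le_pi_norm v j) (norm_nonneg _) ((abs_nonneg _).trans (hz i j))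
  rw [Fin.forall_fin_two]
  constructor
  · simp only [Matrix.SpecialLinearGroup.map_apply_coe, RingHom.mapMatrix_apply, map_apply,
      eq_intCast, cons_val]
    linarith [norm_add_le ((z 0 0 : ℂ) * v 0) ((z 0 1 : ℂ) * v 1), term_le 0 0, term_le 0 1]
  · simp only [Matrix.SpecialLinearGroup.map_apply_coe, RingHom.mapMatrix_apply, map_apply,
      eq_intCast, cons_val]
    linarith [norm_add_le ((z 1 0 : ℂ) * v 0) ((z 1 1 : ℂ) * v 1), term_le 1 0, term_le 1 1]

lemma abs_log_norm_le_of_smul_eq_smul {z : SL(2, ℤ)} {B : ℝ} (hz : ∀ i j, |(z i j : ℝ)| ≤ B)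
    {v : Fin 2 → ℂ} {l : ℂ} (hv : v ≠ 0)
    (h : Matrix.SpecialLinearGroup.map (Int.castRingHom ℂ) z • v = l • v) :
    |Real.log ‖l‖| ≤ Real.log (2 * B) := by
  have hinv : ∀ i j, |(z⁻¹ i j : ℝ)| ≤ B := by
    rw [Matrix.SpecialLinearGroup.SL2_inv_expl]
    simpa [Fin.forall_fin_two, and_comm, and_assoc, and_left_comm] using hz
  have hl : 0 < ‖l‖ := norm_pos_iff.2 (ne_zero_of_smul_eq_smul hv h)
  have hle := norm_le_of_smul_eq_smul hz hv h
  have hle_inv := norm_le_of_smul_eq_smul hinv hv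
    (by rw [map_inv]; exact inv_smul_eq_inv_smul hv h)
  rw [norm_inv] at hle_inv
  refine abs_le'.2 ⟨Real.log_le_log hl hle, ?_⟩
  rw [← Real.log_inv]
  exact Real.log_le_log (inv_pos.2 hl) hle_inv

lemma one_le_abs_log_of_seven_le {r : ℝ} (hr : 0 < r) (h : 7 ≤ r + r⁻¹) : 1 ≤ |Real.log r| := by
  by_contra! hlt
  obtain ⟨hneg, hpos⟩ := abs_lt.1 hlt
  have hr_lt := (Real.log_lt_iff_lt_exp hr).1 hpos
  have hr_inv_lt : r⁻¹ < Real.exp 1 :=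
    (Real.log_lt_iff_lt_exp (inv_pos.2 hr)).1 (by rw [Real.log_inv]; linarith)
  linarith [Real.exp_one_lt_d9]

end EntryGrowth

section AbelianGrowth

lemma ncard_le_of_one_le_abs_sub {α : Type*} {A : Set α} {f : α → ℝ} {B : ℝ} (hB : 0 ≤ B)
    (hf : ∀ a ∈ A, |f a| ≤ B) (hsep : A.Pairwise fun a b ↦ 1 ≤ |f a - f b|) :
    (A.ncard : ℝ) ≤ 2 * B + 2 := by
  have hinj : Set.InjOn (fun a ↦ ⌊f a⌋) A := by
    intro a ha b hb hab
    by_contra hne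
    exact (hsep ha hb hne).not_gt (Int.abs_sub_lt_one_of_floor_eq_floor hab)
  have hmaps : Set.MapsTo (fun a ↦ ⌊f a⌋) A (Finset.Icc ⌊-B⌋ ⌊B⌋ : Finset ℤ) := fun a ha ↦ by
    have := abs_le.1 (hf a ha)
    rw [Finset.mem_coe, Finset.mem_Icc]
    exact ⟨Int.floor_mono this.1, Int.floor_mono this.2⟩
  have hcard := Set.ncard_le_ncard_of_injOn _ hmaps hinj (Finset.finite_toSet _)
  rw [Set.ncard_coe_finset, Int.card_Icc] at hcard
  have hfloor : ⌊-B⌋ ≤ ⌊B⌋ := Int.floor_mono (by linarith)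
  have hcast : (A.ncard : ℤ) ≤ ⌊B⌋ + 1 - ⌊-B⌋ := by omega
  have hcastR : (A.ncard : ℝ) ≤ ⌊B⌋ + 1 - ⌊-B⌋ := by exact_mod_cast hcast
  linarith [Int.floor_le B, Int.lt_floor_add_one (-B)]

variable {A U : Set SL(2, ℤ)}

lemma ncard_le_of_trace_eq_two (hA : A ⊆ Γ(3)) (hcomm : A.Pairwise Commute)
    {u : SL(2, ℤ)} (hu : u ∈ A) (hu1 : u ≠ 1) (htr : u.1.trace = 2) {L : ℝ}
    (hL : ∀ z ∈ A, ∀ v : Fin 2 → ℤ, |euclidHeight (z • v) - euclidHeight v| ≤ L) :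
    (A.ncard : ℝ) ≤ 2 * L + 2 := by
  obtain ⟨k, c, rfl⟩ := exists_eq_conj_transvection htr
  have hc : c ≠ 0 := by
    rintro rfl
    simp at hu1
  have hpar : ∀ z ∈ A, ∃ m, z = k * transvection zero_ne_one m * k⁻¹ := fun z hz ↦
    exists_eq_conj_transvection_of_commute hc (hA hz) (hcomm.of_refl hz hu)
  choose! m hm using hpar
  refine ncard_le_of_one_le_abs_sub (f := fun z ↦ (m z : ℝ)) ((abs_nonneg _).trans (hL _ hu 0))
    (fun z hz ↦ abs_le_of_forall_abs_euclidHeight_sub_le (hm z hz ▸ hL z hz)) ?_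
  intro z hz w hw hzw
  have : m z ≠ m w := fun h ↦ hzw (by rw [hm z hz, hm w hw, h])
  exact_mod_cast Int.one_le_abs (sub_ne_zero.2 this)

lemma ncard_le_of_seven_le_abs_trace (hA : A ⊆ Γ(3)) (hcomm : A.Pairwise Commute)
    {u : SL(2, ℤ)} (hu : u ∈ A) (htr : 7 ≤ |u.1.trace|) {B : ℝ}
    (hB : ∀ z ∈ A, ∀ i j, |(z i j : ℝ)| ≤ B) :
    (A.ncard : ℝ) ≤ 2 * Real.log (2 * B) + 2 := by
  obtain ⟨v, hv, heig⟩ := exists_complex_eigenvector htr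
  choose! l hl using fun z hz ↦ heig z (hcomm.of_refl hu hz)
  have hlog := fun z hz ↦ abs_log_norm_le_of_smul_eq_smul (hB z hz) hv (hl z hz)
  refine ncard_le_of_one_le_abs_sub (f := fun z ↦ Real.log ‖l z‖)
    ((abs_nonneg _).trans (hlog u hu)) hlog fun z hz w hw hzw ↦ ?_
  have hcomm' : Commute u (z * w⁻¹) :=
    (hcomm.of_refl hu hz).mul_right (hcomm.of_refl hu hw).inv_right
  have htr' : 7 ≤ |(z * w⁻¹).1.trace| := by
    refine (eq_two_or_seven_le_abs_trace (mul_mem (hA hz) (inv_mem (hA hw)))).resolve_left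
      fun h2 ↦ ?_
    rw [trace_eq_two_of_commute (hA hu) (mul_inv_eq_one.not.2 hzw) h2 hcomm'] at htr
    norm_num at htr
  have hle := abs_trace_le_norm_add_norm_inv (z := z * w⁻¹) hv (by
    rw [map_mul, map_inv]
    exact mul_smul_eq_mul_smul (hl z hz) (inv_smul_eq_inv_smul hv (hl w hw)))
  have hz0 := norm_ne_zero_iff.2 (ne_zero_of_smul_eq_smul hv (hl z hz))
  have hw0 := norm_ne_zero_iff.2 (ne_zero_of_smul_eq_smul hv (hl w hw))
  dsimp only
  rw [← Real.log_div hz0 hw0, ← norm_div, div_eq_mul_inv]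
  refine one_le_abs_log_of_seven_le (by rw [norm_mul, norm_inv]; positivity)
    (le_trans ?_ hle)
  exact_mod_cast htr'

lemma exists_forall_ncard_le_of_commute (hU : U.Finite) :
    ∃ K : ℝ, 0 < K ∧ ∀ n : ℕ, ∀ A ⊆ ↑Γ(3) ∩ U ^ n, A.Pairwise Commute →
      (A.ncard : ℝ) ≤ K * (n + 1) := by
  obtain ⟨M, hM, hentry⟩ := exists_forall_mem_pow_abs_apply_le hU
  obtain ⟨C, hC, hheight⟩ := exists_forall_mem_pow_abs_sub_le hU boundedDisplacement_euclidHeight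
  have hlogM : 0 ≤ Real.log M := Real.log_natCast_nonneg M
  have hlog2 : 0 ≤ Real.log 2 := Real.log_nonneg one_le_two
  refine ⟨2 * C + 2 * Real.log M + 2 * Real.log 2 + 2, by positivity, fun n A hA hcomm ↦ ?_⟩
  by_cases htriv : A ⊆ {1}
  · have hcard : (A.ncard : ℝ) ≤ 1 := by
      exact_mod_cast (Set.ncard_le_ncard htriv).trans_eq (Set.ncard_singleton _)
    have : 0 ≤ (2 * C + 2 * Real.log M + 2 * Real.log 2) * (n + 1) := by positivity
    linarith [n.cast_nonneg (α := ℝ)]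
  obtain ⟨u, hu, hu1⟩ := Set.not_subset.1 htriv
  have hAΓ : A ⊆ Γ(3) := fun z hz ↦ (hA hz).1
  rcases eq_two_or_seven_le_abs_trace (hAΓ hu) with htr | htr
  · have := ncard_le_of_trace_eq_two hAΓ hcomm hu hu1 htr fun z hz ↦ hheight n z (hA hz).2
    nlinarith
  · have := ncard_le_of_seven_le_abs_trace (B := M ^ n) hAΓ hcomm hu htr
      fun z hz i j ↦ by exact_mod_cast hentry n z (hA hz).2 i j
    rw [Real.log_mul two_ne_zero (by positivity), Real.log_pow] at this
    nlinarith

end AbelianGrowth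

section Congruence

/-- No prime occurs in the factorization of `m` with exponent larger than `k`. -/
def PrimeExponentsLE (m k : ℕ) : Prop := ∀ p : ℕ, p.Prime → ¬ p ^ (k + 1) ∣ m

/-- The smallness condition on a subgroup of `SL₂(ℤ/mℤ)`: its projection to `SL₂(ℤ/pℤ)` is a
proper subgroup for every prime `p ∣ m`. -/
def ProperModPrimes {m : ℕ} (H : Subgroup SL(2, ZMod m)) : Prop :=
  ∀ p : ℕ, p.Prime → ∀ hp : p ∣ m,
    H.map (Matrix.SpecialLinearGroup.map (ZMod.castHom hp (ZMod p))) ≠ ⊤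

lemma dvd_pow_of_forall_prime_dvd {m d k : ℕ} (hm : PrimeExponentsLE m k)
    (hd : d ≠ 0) (hdvd : ∀ p : ℕ, p.Prime → p ∣ m → p ∣ d) : m ∣ d ^ k := by
  have hm0 : m ≠ 0 := by
    rintro rfl
    exact hm 2 Nat.prime_two (dvd_zero _)
  rw [← Nat.factorization_le_iff_dvd hm0 (pow_ne_zero k hd), Nat.factorization_pow]
  intro p
  by_cases hp : p.Prime ∧ p ∣ m
  · have hle : m.factorization p ≤ k := by
      by_contra! hlt
      exact hm p hp.1 ((hp.1.pow_dvd_iff_le_factorization hm0).2 hlt)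
    have hpos : 1 ≤ d.factorization p := hp.1.factorization_pos_of_dvd hd (hdvd p hp.1 hp.2)
    exact hle.trans (Nat.le_mul_of_pos_right k hpos)
  · rw [Nat.factorization_eq_zero_iff .. |>.2 (by tauto)]
    exact Nat.zero_le _

lemma eq_of_forall_modq_eq {m k B : ℕ} (hm : PrimeExponentsLE m k)
    {g h : SL(2, ℤ)} (hg : ∀ i j, |g i j| ≤ B) (hh : ∀ i j, |h i j| ≤ B) (hlt : (2 * B) ^ k < m)
    (hgh : ∀ p : ℕ, p.Prime → p ∣ m → modq p g = modq p h) : g = h := by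
  ext i j
  by_contra hne
  have hdvd : m ∣ (g i j - h i j).natAbs ^ k := by
    refine dvd_pow_of_forall_prime_dvd hm (by omega) fun p hp hpm ↦ ?_
    have hcast : (g i j : ZMod p) = h i j :=
      congrArg (fun x : SL(2, ZMod p) ↦ x i j) (hgh p hp hpm)
    rwa [← Int.natCast_dvd, ← ZMod.intCast_zmod_eq_zero_iff_dvd, Int.cast_sub, sub_eq_zero]
  have hle : (g i j - h i j).natAbs ≤ 2 * B := by
    have := hg i j
    have := hh i j
    rw [abs_le] at *
    omega
  exact hlt.not_ge
    ((Nat.le_of_dvd (pow_pos (by omega) k) hdvd).trans (Nat.pow_le_pow_left hle k))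

lemma map_castHom_modq {m p : ℕ} (hp : p ∣ m) (g : SL(2, ℤ)) :
    Matrix.SpecialLinearGroup.map (ZMod.castHom hp (ZMod p)) (modq m g) = modq p g := by
  ext i j
  exact map_intCast (ZMod.castHom hp (ZMod p)) (g i j)

variable {U : Set SL(2, ℤ)} {M m k n : ℕ}

lemma commute_of_forall_commute_modq (hM : 2 ≤ M)
    (hU : ∀ n : ℕ, ∀ g ∈ U ^ n, ∀ i j, |g i j| ≤ (M : ℤ) ^ n)
    (hm : PrimeExponentsLE m k) {n' : ℕ} (hlt : (M ^ (n + n' + 1)) ^ k < m)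
    {g h : SL(2, ℤ)} (hg : g ∈ U ^ n) (hh : h ∈ U ^ n')
    (hcomm : ∀ p : ℕ, p.Prime → p ∣ m → Commute (modq p g) (modq p h)) : Commute g h := by
  refine eq_of_forall_modq_eq hm (B := M ^ (n + n')) ?_ ?_ (hlt.trans_le' ?_) fun p hp hpm ↦ ?_
  · push_cast
    exact hU _ _ (pow_add U n n' ▸ Set.mul_mem_mul hg hh)
  · push_cast
    exact hU _ _ (add_comm n' n ▸ pow_add U n' n ▸ Set.mul_mem_mul hh hg)
  · exact Nat.pow_le_pow_left (by rw [pow_succ']; gcongr) k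
  · rw [map_mul, map_mul, hcomm p hp hpm]

lemma inv_mem_pow {G : Type*} [Group G] {U : Set G} (hU : U⁻¹ = U) {n : ℕ} {x : G}
    (hx : x ∈ U ^ n) : x⁻¹ ∈ U ^ n := by
  rwa [← hU, inv_pow, Set.inv_mem_inv]

lemma commutatorElement_pow_mem_pow {G : Type*} [Group G] {U : Set G} (hU : U⁻¹ = U) {n : ℕ}
    {x y : G} (hx : x ∈ U ^ n) (hy : y ∈ U ^ n) (j : ℕ) : ⁅x ^ j, y ^ j⁆ ∈ U ^ (n * j * 4) := by
  have hxj : x ^ j ∈ U ^ (n * j) := pow_mul U n j ▸ Set.pow_mem_pow hx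
  have hyj : y ^ j ∈ U ^ (n * j) := pow_mul U n j ▸ Set.pow_mem_pow hy
  rw [pow_mul, pow_succ, pow_succ, pow_succ, pow_one]
  exact Set.mul_mem_mul (Set.mul_mem_mul (Set.mul_mem_mul hxj hyj) (inv_mem_pow hU hxj))
    (inv_mem_pow hU hyj)

variable {H : Subgroup SL(2, ZMod m)}

lemma commute_of_mem_gamma_of_modq_mem (hU : U⁻¹ = U) (hM : 2 ≤ M)
    (hUM : ∀ n : ℕ, ∀ g ∈ U ^ n, ∀ i j, |g i j| ≤ (M : ℤ) ^ n)
    (hm : PrimeExponentsLE m k)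
    (hH : ProperModPrimes H)
    (hlt : (M ^ (482 * n + 1)) ^ k < m) {x y : SL(2, ℤ)} (hx : x ∈ Γ(3)) (hy : y ∈ Γ(3))
    (hxU : x ∈ U ^ n) (hyU : y ∈ U ^ n) (hxH : modq m x ∈ H) (hyH : modq m y ∈ H) :
    Commute x y := by
  have commute_conj {c : SL(2, ℤ)} (hcU : c ∈ U ^ n) (hcH : modq m c ∈ H) :
      Commute ⁅x ^ 60, y ^ 60⁆ (c * ⁅x ^ 60, y ^ 60⁆ * c⁻¹) := by
    have hw : ⁅x ^ 60, y ^ 60⁆ ∈ U ^ (n * 60 * 4) := commutatorElement_pow_mem_pow hU hxU hyU 60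
    have hcw : c * ⁅x ^ 60, y ^ 60⁆ * c⁻¹ ∈ U ^ (n + n * 60 * 4 + n) := by
      rw [pow_add, pow_add]
      exact Set.mul_mem_mul (Set.mul_mem_mul hcU hw) (inv_mem_pow hU hcU)
    refine commute_of_forall_commute_modq hM hUM hm ?_ hw hcw fun p hp hpm ↦ ?_
    · convert hlt using 3
      ring
    · have := Fact.mk hp
      have modq_mem {g : SL(2, ℤ)} (hg : modq m g ∈ H) :
          modq p g ∈ H.map (Matrix.SpecialLinearGroup.map (ZMod.castHom hpm (ZMod p))) :=
        map_castHom_modq hpm g ▸ Subgroup.mem_map_of_mem _ hg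
      simp only [map_mul, map_inv, map_commutatorElement, map_pow]
      exact commute_commutatorElement_conj (hH p hp hpm) (modq_mem hxH) (modq_mem hyH)
        (modq_mem hcH)
  exact commute_of_commute_conj_commutatorElement hx hy (by norm_num) (commute_conj hxU hxH)
    (commute_conj hyU hyH)

end Congruence

section Counting

lemma finite_set_pow {G : Type*} [Monoid G] {U : Set G} (hU : U.Finite) (n : ℕ) :
    (U ^ n).Finite := by
  classical
  lift U to Finset G using hU
  exact Finset.coe_pow U n ▸ Finset.finite_toSet _

variable {U : Set SL(2, ℤ)}

lemma exists_forall_ncard_gamma_modq_mem_le (hfin : U.Finite) (hU : U⁻¹ = U) :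
    ∃ M : ℕ, 2 ≤ M ∧ ∃ K : ℝ, 0 < K ∧ ∀ k m n : ℕ, PrimeExponentsLE m k →
      (M ^ (482 * n + 1)) ^ k < m → ∀ H : Subgroup SL(2, ZMod m),
      ProperModPrimes H →
      ({x ∈ ↑Γ(3) ∩ U ^ n | modq m x ∈ H}.ncard : ℝ) ≤ K * (n + 1) := by
  obtain ⟨M, hM, hUM⟩ := exists_forall_mem_pow_abs_apply_le hfin
  obtain ⟨K, hK, hcard⟩ := exists_forall_ncard_le_of_commute hfin
  refine ⟨M, hM, K, hK, fun k m n hm hlt H hH ↦ hcard n _ (Set.sep_subset _ _) ?_⟩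
  rintro x ⟨⟨hx, hxU⟩, hxH⟩ y ⟨⟨hy, hyU⟩, hyH⟩ -
  exact commute_of_mem_gamma_of_modq_mem hU hM hUM hm hH hlt hx hy hxU hyU hxH hyH

lemma ncard_le_card_mul_of_forall_ncard_fiber_le {α β : Type*} [Finite β] {s : Set α}
    (hs : s.Finite) (f : α → β) {C : ℝ} (hC : 0 ≤ C)
    (h : ∀ x ∈ s, ({y ∈ s | f y = f x}.ncard : ℝ) ≤ C) : (s.ncard : ℝ) ≤ Nat.card β * C := by
  classical
  have := Fintype.ofFinite β
  lift s to Finset α using hs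
  rw [Set.ncard_coe_finset, Nat.card_eq_fintype_card, ← Finset.card_univ, ← nsmul_eq_mul,
    Finset.card_eq_sum_card_fiberwise (f := f) (t := Finset.univ) (by simp), Nat.cast_sum]
  refine Finset.sum_le_card_nsmul _ _ _ fun b _ ↦ ?_
  rcases Finset.eq_empty_or_nonempty {y ∈ s | f y = b} with hempty | ⟨x, hx⟩
  · rwa [hempty, Finset.card_empty, Nat.cast_zero]
  · obtain ⟨hxs, rfl⟩ := Finset.mem_filter.1 hx
    rw [← Set.ncard_coe_finset, Finset.coe_filter]
    exact h x hxs

lemma inv_mul_mem_gamma {x y : SL(2, ℤ)} (h : modq 3 y = modq 3 x) : x⁻¹ * y ∈ Γ(3) := by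
  rw [CongruenceSubgroup.Gamma, MonoidHom.mem_ker]
  change modq 3 (x⁻¹ * y) = 1
  rw [map_mul, map_inv, h, inv_mul_cancel]

lemma exists_forall_ncard_modq_mem_coset_le (hfin : U.Finite) (hU : U⁻¹ = U) :
    ∃ M : ℕ, 2 ≤ M ∧ ∃ K : ℝ, 0 < K ∧ ∀ k m n : ℕ, PrimeExponentsLE m k →
      (M ^ (964 * n + 1)) ^ k < m → ∀ H : Subgroup SL(2, ZMod m),
      ProperModPrimes H →
      ∀ a : SL(2, ZMod m),
      ({x ∈ U ^ n | ∃ h ∈ H, modq m x = a * h}.ncard : ℝ) ≤ K * (n + 1) := by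
  obtain ⟨M, hM, K, hK, hcard⟩ := exists_forall_ncard_gamma_modq_mem_le hfin hU
  refine ⟨M, hM, Nat.card SL(2, ZMod 3) * (2 * K),
    mul_pos (Nat.cast_pos.2 Nat.card_pos) (by positivity), fun k m n hm hlt H hH a ↦ ?_⟩
  rw [mul_assoc]
  refine ncard_le_card_mul_of_forall_ncard_fiber_le ((finite_set_pow hfin n).sep _) (modq 3)
    (by positivity) fun x ↦ ?_
  rintro ⟨hxU, h, hh, hxa⟩
  have hmaps : Set.MapsTo (x⁻¹ * ·) {y ∈ {y ∈ U ^ n | ∃ h ∈ H, modq m y = a * h} |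
      modq 3 y = modq 3 x} {y ∈ ↑Γ(3) ∩ U ^ (2 * n) | modq m y ∈ H} := by
    rintro y ⟨⟨hyU, h', hh', hya⟩, hyx⟩
    refine ⟨⟨inv_mul_mem_gamma hyx, ?_⟩, ?_⟩
    · exact two_mul n ▸ pow_add U n n ▸ Set.mul_mem_mul (inv_mem_pow hU hxU) hyU
    · rw [map_mul, map_inv, hxa, hya, mul_inv_rev, mul_assoc, inv_mul_cancel_left]
      exact mul_mem (inv_mem hh) hh'
  calc _ ≤ (({y ∈ ↑Γ(3) ∩ U ^ (2 * n) | modq m y ∈ H}.ncard : ℕ) : ℝ) :=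
        Nat.cast_le.2 (Set.ncard_le_ncard_of_injOn _ hmaps (mul_right_injective x⁻¹).injOn
          (((finite_set_pow hfin _).inter_of_right _).sep _))
    _ ≤ K * ((2 * n : ℕ) + 1) := hcard k m (2 * n) hm (by convert hlt using 3; ring) H hH
    _ ≤ 2 * K * (n + 1) := by push_cast; linarith

end Counting

section Words

variable {S : Set SL2Z}

lemma prod_ofFn_injOn (hS : FreelyGeneratesPSL S) {n : ℕ} (hn : n ≠ 0) :
    Set.InjOn (fun w : Fin n → SL2Z ↦ (List.ofFn w).prod) {w | ∀ i, w i ∈ S} := by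
  have ofFn_ne_nil (w : Fin n → SL2Z) : List.ofFn w ≠ [] := by rwa [Ne, List.ofFn_eq_nil_iff]
  intro v hv w hw h
  exact List.ofFn_injective <| hS _ _ (ofFn_ne_nil v) (ofFn_ne_nil w)
    (List.forall_mem_ofFn_iff.2 hv) (List.forall_mem_ofFn_iff.2 hw) (congrArg PSLproj h)

lemma card_words_le_ncard (hS : FreelyGeneratesPSL S) (hfin : S.Finite) {n : ℕ} (hn : n ≠ 0)
    (P : SL2Z → Prop) :
    Nat.card {w : Fin n → SL2Z // (∀ i, w i ∈ S) ∧ P (List.ofFn w).prod} ≤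
      {x ∈ S ^ n | P x}.ncard := by
  refine Set.ncard_le_ncard_of_injOn (s := {w : Fin n → SL2Z | (∀ i, w i ∈ S) ∧
    P (List.ofFn w).prod}) (fun w ↦ (List.ofFn w).prod) ?_
    ((prod_ofFn_injOn hS hn).mono fun w hw ↦ hw.1) ((finite_set_pow hfin n).sep _)
  exact fun w hw ↦ ⟨Set.mem_pow.2 ⟨fun i ↦ ⟨w i, hw.1 i⟩, rfl⟩, hw.2⟩

lemma exists_forall_card_words_le (hS : FreelyGeneratesPSL S) (hfin : S.Finite) :
    ∃ M : ℕ, 2 ≤ M ∧ ∃ K : ℝ, 0 < K ∧ ∀ k m n : ℕ, n ≠ 0 →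
      PrimeExponentsLE m k → (n = 1 ∨ (M ^ (964 * n + 1)) ^ k < m) →
      ∀ H : Subgroup SL(2, ZMod m),
      ProperModPrimes H →
      ∀ a : SL(2, ZMod m),
      (Nat.card {w : Fin n → SL2Z //
        (∀ i, w i ∈ S) ∧ ∃ h ∈ H, modq m (List.ofFn w).prod = a * h} : ℝ) ≤ K * (n + 1) := by
  have hfinU : (S ∪ S⁻¹).Finite := hfin.union hfin.inv
  obtain ⟨M, hM, K, hK, hcard⟩ := exists_forall_ncard_modq_mem_coset_le hfinU
    (by rw [Set.union_inv, inv_inv, Set.union_comm])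
  refine ⟨M, hM, K + S.ncard, by positivity, fun k m n hn hm hlt H hH a ↦ ?_⟩
  have words_le := card_words_le_ncard hS hfin hn fun x ↦ ∃ h ∈ H, modq m x = a * h
  refine (Nat.cast_le.2 words_le).trans ?_
  rw [add_mul]
  rcases hlt with rfl | hlt
  · rw [pow_one]
    have : ({x ∈ S | ∃ h ∈ H, modq m x = a * h}.ncard : ℝ) ≤ S.ncard :=
      Nat.cast_le.2 (Set.ncard_le_ncard (Set.sep_subset _ _) hfin)
    push_cast
    linarith
  · refine le_add_of_le_of_nonneg (le_trans (Nat.cast_le.2 ?_) (hcard k m n hm hlt H hH a))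
      (by positivity)
    exact Set.ncard_le_ncard
      (fun x hx ↦ ⟨Set.pow_subset_pow_left Set.subset_union_left hx.1, hx.2⟩)
      ((finite_set_pow hfinU n).sep _)

end Words

section Constants

lemma pow_ceil_lt {M κ q m : ℕ} {D : ℝ} (hM : 2 ≤ M) (hκ : 1 ≤ κ) (hD : 0 < D) (hq : 2 ≤ q)
    (hqm : (q : ℝ) ^ (1 / D) ≤ m) (hone : ⌈1 / (1930 * D * κ * Real.log M) * Real.log q⌉₊ ≠ 1) :
    (M ^ (964 * ⌈1 / (1930 * D * κ * Real.log M) * Real.log q⌉₊ + 1)) ^ κ < m := by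
  have log_M_pos : 0 < Real.log M := Real.log_pos (by exact_mod_cast hM)
  have log_q_pos : 0 < Real.log q := Real.log_pos (by exact_mod_cast hq)
  set x := 1 / (1930 * D * κ * Real.log M) * Real.log q with hx
  have x_pos : 0 < x := by positivity
  have one_lt_x : 1 < x := by
    by_contra! hle
    exact hone (le_antisymm (Nat.ceil_le.2 (by simpa using hle)) (Nat.one_le_ceil_iff.2 x_pos))
  have exponent_lt : (964 * ⌈x⌉₊ + 1 : ℝ) < 1930 * x := by
    have := Nat.ceil_lt_add_one x_pos.le
    linarith
  rw [← Nat.cast_lt (α := ℝ), Nat.cast_pow, Nat.cast_pow]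
  refine hqm.trans_lt' ((Real.log_lt_log_iff (by positivity) (by positivity)).1 ?_)
  rw [Real.log_pow, Real.log_pow, Real.log_rpow (by positivity)]
  calc (κ * ((964 * ⌈x⌉₊ + 1 : ℕ) * Real.log M) : ℝ)
      = (964 * ⌈x⌉₊ + 1) * (κ * Real.log M) := by push_cast; ring
    _ < 1930 * x * (κ * Real.log M) := by gcongr
    _ = 1 / D * Real.log q := by rw [hx]; field_simp

lemma ceil_add_one_le_rpow {c ε : ℝ} (hc : 0 < c) (hε : 0 < ε) {q : ℕ} (hq : 1 ≤ q) :
    (⌈c * Real.log q⌉₊ + 1 : ℝ) ≤ (c / ε + 2) * (q : ℝ) ^ ε := by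
  have one_le_q : (1 : ℝ) ≤ q := by exact_mod_cast hq
  have ceil_lt := Nat.ceil_lt_add_one (mul_nonneg hc.le (Real.log_nonneg one_le_q))
  have log_le := mul_le_mul_of_nonneg_left (Real.log_le_rpow_div (Nat.cast_nonneg q) hε) hc.le
  have one_le := Real.one_le_rpow one_le_q hε.le
  rw [add_mul, div_mul_comm, mul_comm _ c]
  linarith

end Constants

/-- **Hitting small subgroups.** Let `κ ≥ 1`, `D > 1` and let `S ⊂ SL₂(ℤ)` be finite with
images in `PSL₂(ℤ)` freely generating a free semigroup. There is `c = c(κ,D,S) > 0` such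
that for all `ε > 0` there is `C(ε) > 0` with: for every `q ≥ 2` in whose prime
factorization no prime occurs with exponent `> κ`, every `q' ∣ q` with `q' ≥ q^{1/D}`,
every subgroup `H ≤ SL₂(ℤ/q'ℤ)` projecting to a proper subgroup of `SL₂(ℤ/pℤ)` for each
prime `p ∣ q'`, and every coset `aH`, the number of words of length `⌈c log q⌉` over `S`
whose product lands in `aH` mod `q'` is at most `C(ε) q^ε`. -/
theorem hitting_small_subgroups
    (κ : ℕ) (hκ : 1 ≤ κ) (D : ℝ) (hD : 1 < D)
    (S : Set SL2Z) (hfin : S.Finite) (hfree : FreelyGeneratesPSL S) :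
    ∃ c : ℝ, 0 < c ∧ ∀ ε : ℝ, 0 < ε → ∃ C : ℝ, 0 < C ∧
      ∀ q : ℕ, 2 ≤ q → (∀ p : ℕ, p.Prime → ¬ p ^ (κ + 1) ∣ q) →
      ∀ q' : ℕ, ∀ hdvd : q' ∣ q, (q : ℝ) ^ (1 / D) ≤ (q' : ℝ) →
      ∀ H : Subgroup (Matrix.SpecialLinearGroup (Fin 2) (ZMod q')),
        (∀ p : ℕ, p.Prime → ∀ hp : p ∣ q',
          Subgroup.map
            (Matrix.SpecialLinearGroup.map (ZMod.castHom hp (ZMod p))) H ≠ ⊤) →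
      ∀ a : Matrix.SpecialLinearGroup (Fin 2) (ZMod q'),
        (Nat.card {w : Fin ⌈c * Real.log q⌉₊ → SL2Z //
            (∀ i, w i ∈ S) ∧ ∃ h ∈ H, modq q' (List.ofFn w).prod = a * h} : ℝ)
          ≤ C * (q : ℝ) ^ ε := by
  obtain ⟨M, hM, K, hK, hcard⟩ := exists_forall_card_words_le hfree hfin
  have log_M_pos : 0 < Real.log M := Real.log_pos (by exact_mod_cast hM)
  have D_pos : 0 < D := one_pos.trans hD
  set c := 1 / (1930 * D * κ * Real.log M)
  have c_pos : 0 < c := by positivity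
  refine ⟨c, c_pos, fun ε hε ↦ ⟨K * (c / ε + 2), by positivity, ?_⟩⟩
  intro q hq hqκ q' hdvd hqq' H hH a
  have log_q_pos : 0 < Real.log q := Real.log_pos (by exact_mod_cast hq)
  have length_ne_zero : ⌈c * Real.log q⌉₊ ≠ 0 := (Nat.ceil_pos.2 (by positivity)).ne'
  calc _ ≤ K * (⌈c * Real.log q⌉₊ + 1) :=
        hcard κ q' _ length_ne_zero (fun p hp hpq' ↦ hqκ p hp (hpq'.trans hdvd))
          (or_iff_not_imp_left.2 (pow_ceil_lt hM hκ D_pos hq hqq')) H hH a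
    _ ≤ K * ((c / ε + 2) * (q : ℝ) ^ ε) := by
        gcongr
        exact ceil_add_one_le_rpow c_pos hε (one_le_two.trans hq)
    _ = K * (c / ε + 2) * (q : ℝ) ^ ε := (mul_assoc ..).symm
end

section
/- Let I ⊂ ℝ be a finite union of disjoint compact intervals and let d ≥ 1. For every A > 0 there exists c > 0 such that the following holds: for every real b ≠ 0, every interval Z ⊆ I of length |Z| ≤ c/|b|, every C¹ function H : I → ℝ with H > 0 and |H'(x)| ≤ A|b|H(x) for all x ∈ I, and every C¹ function f : I → ℂ^d with |f(x)| ≤ H(x) and |f'(x)| ≤ A|b|H(x) for all x ∈ I (where |·| is the Euclidean norm on ℂ^d), either |f(u)| ≤ (3/4)H(u) for all u ∈ Z, or |f(u)| ≥ (1/4)H(u) for all u ∈ Z. -/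
/-!
Let `K = A * |b|` and let `α < β` be the two thresholds. On a segment where `H` has maximum `M`, the
derivatives of `H` and `f` are bounded by `K * M`. If `K` times the length of the segment is at most
`δ`, then both functions vary by at most `δ * M`, so `(1 - δ) * M ≤ H ≤ M` on the segment. Hence
`‖f‖` cannot exceed `β * H` at one endpoint and fall below `α * H` at the other as long as
`α + δ ≤ β * (1 - δ)`, which is `δ ≤ (β - α) / (1 + β)`.
-/

section Convex

variable {V E : Type*} [NormedAddCommGroup V] [NormedSpace ℝ V]
  [NormedAddCommGroup E] [NormedSpace ℝ E] {s : Set V} {H : V → ℝ} {K δ : ℝ}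

theorem norm_image_sub_le_of_norm_hasFDerivWithin_le_mul {g : V → E} {g' : V → V →L[ℝ] E} {M : ℝ}
    {x y : V} (hs : Convex ℝ s) (hg : ∀ z ∈ s, HasFDerivWithinAt g (g' z) s z)
    (hg' : ∀ z ∈ s, ‖g' z‖ ≤ K * H z) (hK : 0 ≤ K) (hM : 0 ≤ M) (hHM : ∀ z ∈ s, H z ≤ M)
    (hx : x ∈ s) (hy : y ∈ s) (hxy : K * ‖y - x‖ ≤ δ) :
    ‖g y - g x‖ ≤ δ * M := by
  have hg'M : ∀ z ∈ s, ‖g' z‖ ≤ K * M := fun z hz =>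
    (hg' z hz).trans (mul_le_mul_of_nonneg_left (hHM z hz) hK)
  calc ‖g y - g x‖ ≤ K * M * ‖y - x‖ :=
        hs.norm_image_sub_le_of_norm_hasFDerivWithin_le hg hg'M hx hy
    _ = K * ‖y - x‖ * M := by ring
    _ ≤ δ * M := mul_le_mul_of_nonneg_right hxy hM

variable {H' : V → V →L[ℝ] ℝ} {f : V → E} {f' : V → V →L[ℝ] E} {α β : ℝ}

theorem mul_le_norm_of_mul_lt_norm_of_isCompact {u v : V} (hs : Convex ℝ s) (hsc : IsCompact s)
    (hK : 0 < K) (hα : 0 ≤ α) (hαβ : α < β)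
    (hdiam : ∀ x ∈ s, ∀ y ∈ s, K * ‖x - y‖ ≤ (β - α) / (1 + β))
    (hH : ∀ x ∈ s, HasFDerivWithinAt H (H' x) s x) (hH' : ∀ x ∈ s, ‖H' x‖ ≤ K * H x)
    (hf : ∀ x ∈ s, HasFDerivWithinAt f (f' x) s x) (hf' : ∀ x ∈ s, ‖f' x‖ ≤ K * H x)
    (hu : u ∈ s) (hv : v ∈ s) (hfu : β * H u < ‖f u‖) :
    α * H v ≤ ‖f v‖ := by
  obtain ⟨m, hm, hmax⟩ :=
    hsc.exists_isMaxOn ⟨u, hu⟩ fun x hx => (hH x hx).continuousWithinAt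
  have hHm : 0 ≤ H m := nonneg_of_mul_nonneg_right ((norm_nonneg _).trans (hH' m hm)) hK
  set δ := (β - α) / (1 + β) with hδ
  have hδ_eq : β * (1 - δ) - δ = α := by
    have : 1 + β ≠ 0 := by linarith
    rw [hδ]
    field_simp
    ring
  have hH_osc : H m - H u ≤ δ * H m :=
    (le_abs_self _).trans <| norm_image_sub_le_of_norm_hasFDerivWithin_le_mul hs hH hH' hK.le hHm
      hmax hu hm (hdiam m hm u hu)
  have hf_osc : ‖f u‖ - ‖f v‖ ≤ δ * H m :=
    (norm_sub_norm_le _ _).trans <| norm_image_sub_le_of_norm_hasFDerivWithin_le_mul hs hf hf'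
      hK.le hHm hmax hv hu (hdiam u hu v hv)
  calc α * H v ≤ α * H m := mul_le_mul_of_nonneg_left (hmax hv) hα
    _ = β * ((1 - δ) * H m) - δ * H m := by rw [← hδ_eq]; ring
    _ ≤ β * H u - δ * H m := by
        have : 0 ≤ β := hα.trans hαβ.le
        gcongr
        linarith
    _ ≤ ‖f v‖ := by linarith

theorem norm_le_mul_or_mul_le_norm_of_convex (hs : Convex ℝ s)
    (hK : 0 < K) (hα : 0 ≤ α) (hαβ : α < β)
    (hdiam : ∀ x ∈ s, ∀ y ∈ s, K * ‖x - y‖ ≤ (β - α) / (1 + β))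
    (hH : ∀ x ∈ s, HasFDerivWithinAt H (H' x) s x) (hH' : ∀ x ∈ s, ‖H' x‖ ≤ K * H x)
    (hf : ∀ x ∈ s, HasFDerivWithinAt f (f' x) s x) (hf' : ∀ x ∈ s, ‖f' x‖ ≤ K * H x) :
    (∀ u ∈ s, ‖f u‖ ≤ β * H u) ∨ (∀ u ∈ s, α * H u ≤ ‖f u‖) := by
  refine or_iff_not_imp_left.2 fun hlarge v hv => ?_
  push Not at hlarge
  obtain ⟨u, hu, hfu⟩ := hlarge
  have hseg : segment ℝ u v ⊆ s := hs.segment_subset hu hv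
  have hcompact : IsCompact (segment ℝ u v) := by
    rw [← convexHull_pair]
    exact (Set.toFinite {u, v}).isCompact_convexHull ℝ
  exact mul_le_norm_of_mul_lt_norm_of_isCompact (convex_segment u v) hcompact hK hα hαβ
    (fun x hx y hy => hdiam x (hseg hx) y (hseg hy))
    (fun x hx => (hH x (hseg hx)).mono hseg) (fun x hx => hH' x (hseg hx))
    (fun x hx => (hf x (hseg hx)).mono hseg) (fun x hx => hf' x (hseg hx))
    (left_mem_segment ℝ u v) (right_mem_segment ℝ u v) hfu

end Convex

theorem small_interval_dichotomy_general {E : Type*} [NormedAddCommGroup E] [NormedSpace ℝ E]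
    {A α β : ℝ} (hA : 0 < A) (hα : 0 ≤ α) (hαβ : α < β) :
    ∃ c : ℝ, 0 < c ∧
      ∀ b : ℝ, b ≠ 0 →
      ∀ Z : Set ℝ, Z.OrdConnected → (∀ x ∈ Z, ∀ y ∈ Z, |x - y| ≤ c / |b|) →
      ∀ H H' : ℝ → ℝ,
        (∀ x ∈ Z, HasDerivWithinAt H (H' x) Z x) → (∀ x ∈ Z, |H' x| ≤ A * |b| * H x) →
      ∀ f f' : ℝ → E,
        (∀ x ∈ Z, HasDerivWithinAt f (f' x) Z x) → (∀ x ∈ Z, ‖f' x‖ ≤ A * |b| * H x) →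
      (∀ u ∈ Z, ‖f u‖ ≤ β * H u) ∨ (∀ u ∈ Z, α * H u ≤ ‖f u‖) := by
  have hβ : 0 < 1 + β := by linarith
  refine ⟨(β - α) / (1 + β) / A, div_pos (div_pos (sub_pos.2 hαβ) hβ) hA, ?_⟩
  intro b hb Z hZ hdiam H H' hH hH' f f' hf hf'
  have hK : 0 < A * |b| := mul_pos hA (abs_pos.2 hb)
  refine norm_le_mul_or_mul_le_norm_of_convex hZ.convex hK hα hαβ (fun x hx y hy => ?_)
    (fun x hx => (hH x hx).hasFDerivWithinAt) (fun x hx => ?_)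
    (fun x hx => (hf x hx).hasFDerivWithinAt) (fun x hx => ?_)
  · rw [mul_comm, ← le_div_iff₀ hK, ← div_div]
    exact hdiam x hx y hy
  · rw [ContinuousLinearMap.norm_toSpanSingleton]
    exact hH' x hx
  · rw [ContinuousLinearMap.norm_toSpanSingleton]
    exact hf' x hx

/-- **Dichotomy on small intervals (Lemma 5.11 of Naud, vector-valued version).**
Let `I ⊂ ℝ` be a finite union of disjoint compact intervals and `d ≥ 1`. For every `A > 0`
there is `c > 0` such that: for every `b ≠ 0`, every interval `Z ⊆ I` of length `≤ c/|b|`,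
every `C¹` function `H : I → ℝ` with `H > 0` and `|H'| ≤ A|b|H` on `I`, and every `C¹`
function `f : I → ℂᵈ` with `|f| ≤ H` and `|f'| ≤ A|b|H` on `I`, either `|f(u)| ≤ (3/4)H(u)`
for all `u ∈ Z`, or `|f(u)| ≥ (1/4)H(u)` for all `u ∈ Z`. -/
theorem small_interval_dichotomy
    (k : ℕ) (endL endR : Fin k → ℝ) (hle : ∀ i, endL i ≤ endR i)
    (hdisj : Pairwise fun i j => Disjoint (Set.Icc (endL i) (endR i)) (Set.Icc (endL j) (endR j)))
    (I : Set ℝ) (hI : I = ⋃ i, Set.Icc (endL i) (endR i))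
    (d : ℕ) (hd : 1 ≤ d) (A : ℝ) (hA : 0 < A) :
    ∃ c : ℝ, 0 < c ∧
      ∀ b : ℝ, b ≠ 0 →
      ∀ Z : Set ℝ, Z.OrdConnected → Z ⊆ I → (∀ x ∈ Z, ∀ y ∈ Z, |x - y| ≤ c / |b|) →
      ∀ H H' : ℝ → ℝ,
        (∀ x ∈ I, HasDerivWithinAt H (H' x) I x) → ContinuousOn H' I →
        (∀ x ∈ I, 0 < H x) → (∀ x ∈ I, |H' x| ≤ A * |b| * H x) →
      ∀ f f' : ℝ → EuclideanSpace ℂ (Fin d),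
        (∀ x ∈ I, HasDerivWithinAt f (f' x) I x) → ContinuousOn f' I →
        (∀ x ∈ I, ‖f x‖ ≤ H x) → (∀ x ∈ I, ‖f' x‖ ≤ A * |b| * H x) →
      (∀ u ∈ Z, ‖f u‖ ≤ (3 / 4) * H u) ∨ (∀ u ∈ Z, (1 / 4) * H u ≤ ‖f u‖) := by
  obtain ⟨c, hc, hdich⟩ := small_interval_dichotomy_general (E := EuclideanSpace ℂ (Fin d)) hA
    (α := 1 / 4) (β := 3 / 4) (by norm_num) (by norm_num)
  exact ⟨c, hc, fun b hb Z hZ hZI hlen H H' hH _ _ hH' f f' hf _ _ hf' =>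
    hdich b hb Z hZ hlen H H' (fun x hx => (hH x (hZI hx)).mono hZI) (fun x hx => hH' x (hZI hx))
      f f' (fun x hx => (hf x (hZI hx)).mono hZI) (fun x hx => hf' x (hZI hx))⟩
end
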